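/- arXiv:1812.10269 — 2 statements merged into one kernel-verified Lean document; each statement's English description precedes it below -/
import Mathlib

section
/- Fix positive integers b, d, and k with D = 2^{k/d} ≥ 2^b, and fix any choice of the subspaces 𝕍_1,…,𝕍_k defining 𝕐_k. For each Boolean function G : {0,1}^b → {0,1} and each y ∈ 𝕐_k, define the range R_{y,G} = {x ∈ 𝕏 : Z_{x,G} ∩ S_y ≠ ∅}, and let R = {R_{y,G} : y ∈ 𝕐_k, G : {0,1}^b → {0,1}}. Then there is a constant C = C(b,d) such that the range space (𝕏, R) has VC dimension at most D^C. -/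
open MvPolynomial

/-- A finite set `A` is shattered by the range family `R`. -/
def Shatters {X : Type*} (R : Set (Set X)) (A : Finset X) : Prop :=
  ∀ B ⊆ A, ∃ r ∈ R, r ∩ ↑A = ↑B

/-- The range space `(X, R)` has VC dimension at most `v`. -/
def VCDimLE {X : Type*} (R : Set (Set X)) (v : ℝ) : Prop :=
  ∀ A : Finset X, Shatters R A → (A.card : ℝ) ≤ v

/- Whether `x` lies in each of `t` given ranges depends on the signs, over all `v`, of `O(t k)`
polynomials in `(v, x)` of degree `O(2 ^ k)`. Eliminating the variables `v` one at a time leaves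
polynomials in `x` alone. Over a connected set on which these have constant signs, the remaining
space is a union of cells on which the original polynomials have constant signs and each of which
projects onto that set, so membership in the `t` ranges is constant on it. With `b` and `d` fixed,
the number of these sets is polynomial in `t 2 ^ k`, whereas shattering `2 ^ t` points requires
`2 ^ t` different membership patterns; hence `2 ^ t ≤ (t 2 ^ k) ^ O(1)`, and `2 ^ t` is at most a
fixed power of `2 ^ k = D ^ d`.

Elimination works because the real roots of a family of univariate polynomials vary continuously,
without merging or splitting, as long as the degrees and the pairwise numbers of common complex
roots are constant. The number of common roots of `p` and `q` is the order of vanishing at `s = 0`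
of the resultant of `p(x)` and `q(x + s)`, so it is constant where the signs of the coefficients of
these resultants are. -/

section RootContinuity

open Filter Topology
open scoped Polynomial

variable {Z : Type*}

lemma tendsto_polynomial_eval {R : Type*} [Semiring R] [TopologicalSpace R]
    [IsTopologicalSemiring R] {l : Filter Z} {p : Z → R[X]} {p₀ : R[X]} {n : ℕ}
    (hdeg : ∀ z, (p z).natDegree ≤ n) (hdeg₀ : p₀.natDegree ≤ n)
    (hcoeff : ∀ i, Tendsto (fun z => (p z).coeff i) l (𝓝 (p₀.coeff i)))
    {x : Z → R} {x₀ : R} (hx : Tendsto x l (𝓝 x₀)) :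
    Tendsto (fun z => (p z).eval (x z)) l (𝓝 (p₀.eval x₀)) := by
  have heval : ∀ q : R[X], q.natDegree ≤ n → ∀ t,
      q.eval t = ∑ i ∈ Finset.range (n + 1), q.coeff i * t ^ i := fun q hq t =>
    Polynomial.eval_eq_sum_range' (Nat.lt_succ_of_le hq) t
  simp_rw [heval _ hdeg₀, fun z => heval _ (hdeg z)]
  exact tendsto_finsetSum _ fun i _ => (hcoeff i).mul (hx.pow i)

lemma exists_eq_univ_val_map_fin {α : Type*} {n : ℕ} {s : Multiset α} (hs : s.card = n) :
    ∃ f : Fin n → α, s = Finset.univ.val.map f := by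
  subst hs
  obtain ⟨l, rfl⟩ := Quot.exists_rep s
  exact ⟨l.get, ((Fin.univ_val_map _).trans (congrArg _ (List.ofFn_get l))).symm⟩

variable {K : Type*} [NontriviallyNormedField K]

lemma eventually_norm_root_le {l : Filter Z} {p : Z → K[X]} {p₀ : K[X]} (hp₀ : p₀ ≠ 0)
    (hdeg : ∀ z, (p z).natDegree = p₀.natDegree)
    (hcoeff : ∀ i, Tendsto (fun z => (p z).coeff i) l (𝓝 (p₀.coeff i))) :
    ∃ B : ℝ, ∀ᶠ z in l, ∀ a ∈ (p z).roots, ‖a‖ ≤ B := by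
  set δ := p₀.natDegree
  let bound : K[X] → ℝ := fun q => (∑ i ∈ Finset.range δ, ‖q.coeff i‖) / ‖q.coeff δ‖ + 1
  have hbound : Tendsto (fun z => bound (p z)) l (𝓝 (bound p₀)) :=
    ((tendsto_finsetSum _ fun i _ => (hcoeff i).norm).div (hcoeff δ).norm
      (by simpa [δ] using hp₀)).add_const _
  have hcauchy : ∀ q : K[X], q.natDegree = δ → (q.cauchyBound : ℝ) ≤ bound q := by
    intro q hq
    have hsup : (Finset.range δ).sup (fun i => ‖q.coeff i‖₊) ≤ ∑ i ∈ Finset.range δ, ‖q.coeff i‖₊ :=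
      Finset.sup_le fun i hi =>
        Finset.single_le_sum (f := fun i => ‖q.coeff i‖₊) (fun _ _ => zero_le) hi
    simp only [Polynomial.cauchyBound, bound, hq, Polynomial.leadingCoeff]
    push_cast
    gcongr
    simpa using NNReal.coe_le_coe.2 hsup
  refine ⟨bound p₀ + 1, ?_⟩
  filter_upwards [hbound.eventually (gt_mem_nhds (lt_add_one (bound p₀)))] with z hz a ha
  have hroot := Polynomial.mem_roots'.1 ha
  exact (NNReal.coe_lt_coe.2 (hroot.2.norm_lt_cauchyBound hroot.1)).le.trans
    ((hcauchy _ (hdeg z)).trans hz.le)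

lemma eq_C_mul_prod_of_roots_eq {R : Type*} [CommRing R] [IsDomain R] {p : R[X]} {n : ℕ}
    {α : Fin n → R} (hdeg : p.natDegree = n) (hα : p.roots = Finset.univ.val.map α) :
    p = Polynomial.C (p.coeff n) * ∏ s, (Polynomial.X - Polynomial.C (α s)) := by
  have hcard : p.roots.card = p.natDegree := by simp [hα, hdeg]
  conv_lhs => rw [← Polynomial.C_leadingCoeff_mul_prod_multiset_X_sub_C hcard, hα,
    Multiset.map_map, Polynomial.leadingCoeff, hdeg]
  rfl

/- Along an ultrafilter the bounded root enumerations converge, so no reindexing of the roots is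
needed in the limit. -/
theorem exists_tendsto_roots [ProperSpace K] (U : Ultrafilter Z) {p : Z → K[X]} {p₀ : K[X]}
    {δ : ℕ} (hdeg : ∀ z, (p z).natDegree = δ) (hdeg₀ : p₀.natDegree = δ)
    (hcoeff : ∀ i, Tendsto (fun z => (p z).coeff i) U (𝓝 (p₀.coeff i)))
    {α : Z → Fin δ → K} (hα : ∀ z, (p z).roots = Finset.univ.val.map (α z)) :
    ∃ β : Fin δ → K, (∀ s, Tendsto (fun z => α z s) U (𝓝 (β s))) ∧
      p₀.roots = Finset.univ.val.map β := by
  rcases eq_or_ne p₀ 0 with rfl | hp₀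
  · obtain rfl : δ = 0 := by simpa using hdeg₀.symm
    exact ⟨finZeroElim, fun s => s.elim0, by simp⟩
  obtain ⟨B, hB⟩ := eventually_norm_root_le hp₀ (fun z => (hdeg z).trans hdeg₀.symm) hcoeff
  have hlim : ∀ s, ∃ b, Tendsto (fun z => α z s) U (𝓝 b) := by
    intro s
    have hball : ∀ᶠ z in (U : Filter Z), α z s ∈ Metric.closedBall (0 : K) B := by
      filter_upwards [hB] with z hz
      simpa using hz (α z s) (by simp [hα])
    obtain ⟨b, -, hb⟩ := (isCompact_closedBall (0 : K) B).ultrafilter_le_nhds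
      (U.map fun z => α z s) (le_principal_iff.2 hball)
    exact ⟨b, hb⟩
  choose β hβ using hlim
  refine ⟨β, hβ, ?_⟩
  have hfactor : p₀ = Polynomial.C (p₀.coeff δ) * ∏ s, (Polynomial.X - Polynomial.C (β s)) := by
    refine Polynomial.funext fun t => ?_
    have hleft := tendsto_polynomial_eval (fun z => (hdeg z).le) hdeg₀.le hcoeff
      (tendsto_const_nhds (x := t))
    refine tendsto_nhds_unique hleft ?_
    simp_rw [fun z => congrArg (Polynomial.eval t) (eq_C_mul_prod_of_roots_eq (hdeg z) (hα z))]
    simp only [Polynomial.eval_mul, Polynomial.eval_C, Polynomial.eval_prod, Polynomial.eval_sub,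
      Polynomial.eval_X]
    exact (hcoeff δ).mul (tendsto_finsetProd _ fun s _ => tendsto_const_nhds.sub (hβ s))
  have hlead : p₀.coeff δ ≠ 0 := by rw [← hdeg₀]; exact Polynomial.leadingCoeff_ne_zero.2 hp₀
  have hprod : ∏ s, (Polynomial.X - Polynomial.C (β s)) =
      ((Finset.univ.val.map β).map fun a => Polynomial.X - Polynomial.C a).prod := by
    rw [Multiset.map_map]; rfl
  rw [hfactor, Polynomial.roots_C_mul _ hlead, hprod, Polynomial.roots_multiset_prod_X_sub_C]

end RootContinuity

section ShiftResultant

open scoped Polynomial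

/-- The number of pairs consisting of a root of `p` and an equal root of `q`, counted with
multiplicity. -/
noncomputable def commonRootCount {R : Type*} [CommRing R] [IsDomain R] (p q : R[X]) : ℕ :=
  (p.roots.map fun a => q.rootMultiplicity a).sum

/-- The resultant of `p(x)` and `q(x + s)` with respect to `x`, as a polynomial in `s`; here `m`
and `n` are the formal degrees of `p` and `q`. -/
noncomputable def shiftResultant {R : Type*} [CommRing R] (m n : ℕ) (p q : R[X]) : R[X] :=
  Polynomial.resultant (p.map Polynomial.C)
    (Polynomial.taylor Polynomial.X (q.map Polynomial.C)) m n

lemma commonRootCount_eq_card {R ι κ : Type*} [CommRing R] [IsDomain R] [DecidableEq R]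
    [Fintype ι] [Fintype κ] {p q : R[X]} {α : ι → R} {β : κ → R}
    (hα : p.roots = Finset.univ.val.map α) (hβ : q.roots = Finset.univ.val.map β) :
    commonRootCount p q = (Finset.univ.filter fun s : ι × κ => α s.1 = β s.2).card := by
  simp only [commonRootCount, ← Polynomial.count_roots, hα, hβ, Multiset.map_map,
    Finset.card_filter, Fintype.sum_prod_type, Multiset.count_map, ← Finset.filter_val,
    Finset.card_val, Function.comp_def]
  rfl

lemma map_shiftResultant {R S : Type*} [CommRing R] [CommRing S] (f : R →+* S) (m n : ℕ)
    (p q : R[X]) : (shiftResultant m n p q).map f = shiftResultant m n (p.map f) (q.map f) := by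
  have hC : (Polynomial.mapRingHom f).comp Polynomial.C = Polynomial.C.comp f := by ext; simp
  rw [shiftResultant, ← Polynomial.coe_mapRingHom, ← Polynomial.resultant_map_map,
    Polynomial.map_taylor, Polynomial.map_map, Polynomial.map_map, hC, Polynomial.coe_mapRingHom,
    Polynomial.map_X, ← Polynomial.map_map, ← Polynomial.map_map, shiftResultant]

variable {K : Type*} [Field K]

lemma shiftResultant_eq_prod_taylor {p q : K[X]} {n : ℕ} (hp : p.Splits) (hq : q.natDegree ≤ n) :
    shiftResultant p.natDegree n p q = Polynomial.C (p.leadingCoeff ^ n) *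
      (p.roots.map fun a => Polynomial.taylor a q).prod := by
  have hinj : Function.Injective (Polynomial.C : K →+* K[X]) := Polynomial.C_injective
  have heval : ∀ a, (Polynomial.taylor Polynomial.X (q.map Polynomial.C)).eval (Polynomial.C a) =
      Polynomial.taylor a q := fun a => by
    rw [Polynomial.taylor_eval, Polynomial.eval_map, add_comm]; rfl
  have hprod := Polynomial.resultant_eq_prod_eval (p.map Polynomial.C)
    (Polynomial.taylor Polynomial.X (q.map Polynomial.C)) n
    (by rwa [Polynomial.natDegree_taylor, Polynomial.natDegree_map_eq_of_injective hinj])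
    (hp.map _)
  rw [Polynomial.natDegree_map_eq_of_injective hinj,
    Polynomial.leadingCoeff_map_of_injective hinj,
    ← Polynomial.roots_map_of_injective_of_card_eq_natDegree hinj hp.natDegree_eq_card_roots.symm,
    Multiset.map_map] at hprod
  rw [shiftResultant, hprod, Polynomial.C_pow]
  simp only [Function.comp_def, heval]

lemma natTrailingDegree_taylor (a : K) (q : K[X]) :
    (Polynomial.taylor a q).natTrailingDegree = q.rootMultiplicity a :=
  Polynomial.rootMultiplicity_eq_natTrailingDegree.symm

/- The shift by `s` turns the multiplicity of coinciding roots into the order of vanishing at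
`s = 0`. -/
theorem natTrailingDegree_shiftResultant {p q : K[X]} {n : ℕ} (hp : p.Splits)
    (hq : q.natDegree ≤ n) :
    (shiftResultant p.natDegree n p q).natTrailingDegree = commonRootCount p q := by
  rcases eq_or_ne p 0 with rfl | hp0
  · rcases n with _ | n <;> simp [shiftResultant, commonRootCount]
  rcases eq_or_ne q 0 with rfl | hq0
  · by_cases h : p.roots = 0 <;>
      simp [shiftResultant_eq_prod_taylor hp hq, h, commonRootCount, -map_pow]
  have hne : ∀ s : Multiset K, (s.map fun a => Polynomial.taylor a q).prod ≠ 0 := fun s => by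
    simp [Multiset.prod_eq_zero_iff, hq0]
  have hprod : ∀ s : Multiset K, (s.map fun a => Polynomial.taylor a q).prod.natTrailingDegree =
      (s.map fun a => q.rootMultiplicity a).sum := by
    intro s
    induction s using Multiset.induction with
    | empty => simp
    | cons a s ih =>
      rw [Multiset.map_cons, Multiset.prod_cons,
        Polynomial.natTrailingDegree_mul (by simpa using hq0) (hne s), ih,
        natTrailingDegree_taylor, Multiset.map_cons, Multiset.sum_cons]
  have hlead : Polynomial.C (p.leadingCoeff ^ n) ≠ 0 := by simp [hp0]
  rw [shiftResultant_eq_prod_taylor hp hq, Polynomial.natTrailingDegree_mul hlead (hne _),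
    Polynomial.natTrailingDegree_C, zero_add, hprod, commonRootCount]

lemma natTrailingDegree_map_shiftResultant {A : Type*} [CommRing A] [IsAlgClosed K] (f : A →+* K)
    (P Q : A[X]) : ((shiftResultant (P.map f).natDegree Q.natDegree P Q).map f).natTrailingDegree =
      commonRootCount (P.map f) (Q.map f) := by
  rw [map_shiftResultant, natTrailingDegree_shiftResultant (IsAlgClosed.splits _)
    Polynomial.natDegree_map_le]

end ShiftResultant

section RealRoots

open Filter Topology ComplexConjugate
open scoped Polynomial

variable {J : Type*}

open Classical in
/-- The real zeros of the nonzero members of a finite family of polynomials. -/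
noncomputable def jointRoots [Fintype J] (P : J → ℝ[X]) : Finset ℝ :=
  Finset.univ.biUnion fun j => (P j).roots.toFinset

lemma mem_jointRoots [Fintype J] {P : J → ℝ[X]} {t : ℝ} :
    t ∈ jointRoots P ↔ ∃ j, P j ≠ 0 ∧ (P j).eval t = 0 := by
  simp [jointRoots, Polynomial.IsRoot]

/-- The joint roots of `P₀` are carried to those of `P` by an increasing bijection that moves them
by less than `ε` and preserves which members of the family vanish. -/
def RootsClose [Fintype J] (ε : ℝ) (P P₀ : J → ℝ[X]) : Prop :=
  ∃ φ : ℝ → ℝ, StrictMonoOn φ (jointRoots P₀) ∧ (jointRoots P : Set ℝ) = φ '' jointRoots P₀ ∧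
    ∀ ρ ∈ jointRoots P₀, |φ ρ - ρ| < ε ∧ ∀ j, (P j).eval (φ ρ) = 0 ↔ (P₀ j).eval ρ = 0

lemma ofReal_mem_aroots {q : ℝ[X]} {t : ℝ} : (t : ℂ) ∈ q.aroots ℂ ↔ q ≠ 0 ∧ q.eval t = 0 := by
  rw [Polynomial.mem_aroots, ← Complex.coe_algebraMap, Polynomial.aeval_algebraMap_apply]
  simp

lemma conj_mem_aroots {q : ℝ[X]} {a : ℂ} (ha : a ∈ q.aroots ℂ) : conj a ∈ q.aroots ℂ := by
  rw [Polynomial.mem_aroots] at ha ⊢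
  rw [Polynomial.aeval_conj, ha.2, map_zero]
  exact ⟨ha.1, rfl⟩

lemma eval_eq_zero_iff_exists_eq {q : ℝ[X]} {κ : Type*} [Fintype κ] {α : κ → ℂ} (hq : q ≠ 0)
    (hα : q.aroots ℂ = Finset.univ.val.map α) {t : ℝ} : q.eval t = 0 ↔ ∃ s, α s = t := by
  have hmem : (t : ℂ) ∈ q.aroots ℂ ↔ ∃ s, α s = t := by simp [hα]
  rw [← hmem, ofReal_mem_aroots, and_iff_right hq]

/- A root is real iff it equals its conjugate, which is again a root. -/
lemma conj_eq_self_iff_of_enumerations {q : ℝ[X]} {κ : Type*} [Fintype κ] {α β : κ → ℂ}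
    (hα : q.aroots ℂ = Finset.univ.val.map α) (heq : ∀ s s', α s = α s' ↔ β s = β s')
    (hconj : ∀ s s', α s' = conj (α s) → β s' = conj (β s)) (s : κ) :
    conj (α s) = α s ↔ conj (β s) = β s := by
  refine ⟨fun h => (hconj s s h.symm).symm, fun h => ?_⟩
  obtain ⟨s', hs'⟩ : ∃ s', α s' = conj (α s) := by
    simpa [hα] using conj_mem_aroots (q := q) (a := α s) (by simp [hα])
  rw [← hs', heq, hconj s s' hs', h]

lemma eval_eq_zero_iff_of_enumerations {p q : ℝ[X]} {κ : Type*} [Fintype κ] {α β : κ → ℂ}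
    (hα : p.aroots ℂ = Finset.univ.val.map α) (hβ : q.aroots ℂ = Finset.univ.val.map β)
    (hzero : p = 0 ↔ q = 0) {t ρ : ℝ} (heq : ∀ s, α s = t ↔ β s = ρ) :
    p.eval t = 0 ↔ q.eval ρ = 0 := by
  by_cases hp : p = 0
  · simp [hp, hzero.1 hp]
  · rw [eval_eq_zero_iff_exists_eq hp hα, eval_eq_zero_iff_exists_eq (mt hzero.2 hp) hβ]
    exact exists_congr heq

variable {ι : J → Type*} [∀ j, Fintype (ι j)]

lemma rootsClose_of_enumerations [Fintype J] {P P₀ : J → ℝ[X]} {ε : ℝ}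
    {α β : (Σ j, ι j) → ℂ}
    (hα : ∀ j, (P j).aroots ℂ = Finset.univ.val.map fun s => α ⟨j, s⟩)
    (hβ : ∀ j, (P₀ j).aroots ℂ = Finset.univ.val.map fun s => β ⟨j, s⟩)
    (hzero : ∀ j, P j = 0 ↔ P₀ j = 0) (hclose : ∀ i, ‖α i - β i‖ < ε)
    (heq : ∀ i i', α i = α i' ↔ β i = β i')
    (hconj : ∀ i i', α i' = conj (α i) → β i' = conj (β i))
    (hlt : ∀ i i', (β i).re < (β i').re → (α i).re < (α i').re) :
    RootsClose ε P P₀ := by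
  have hreal : ∀ i, conj (α i) = α i ↔ conj (β i) = β i := fun ⟨j, s⟩ =>
    conj_eq_self_iff_of_enumerations (hα j) (fun _ _ => heq _ _) (fun _ _ => hconj _ _) s
  have htransfer : ∀ ρ ∈ jointRoots P₀, ∃ t : ℝ, ∃ i, β i = ρ ∧ α i = t := by
    intro ρ hρ
    obtain ⟨j, hj, hjρ⟩ := mem_jointRoots.1 hρ
    obtain ⟨s, hs⟩ := (eval_eq_zero_iff_exists_eq hj (hβ j)).1 hjρ
    have hαreal := (hreal ⟨j, s⟩).2 (by rw [hs, Complex.conj_ofReal])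
    exact ⟨(α ⟨j, s⟩).re, ⟨j, s⟩, hs, (Complex.conj_eq_iff_re.1 hαreal).symm⟩
  choose! φ hφ using htransfer
  have heval : ∀ ρ ∈ jointRoots P₀, ∀ j, (P j).eval (φ ρ) = 0 ↔ (P₀ j).eval ρ = 0 := by
    intro ρ hρ j
    obtain ⟨i, hβi, hαi⟩ := hφ ρ hρ
    exact eval_eq_zero_iff_of_enumerations (hα j) (hβ j) (hzero j) fun s => by
      rw [← hαi, ← hβi, heq]
  refine ⟨φ, fun ρ hρ ρ' hρ' hρρ' => ?_, Set.Subset.antisymm (fun t ht => ?_) ?_, fun ρ hρ => ?_⟩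
  · obtain ⟨i, hβi, hαi⟩ := hφ ρ hρ
    obtain ⟨i', hβi', hαi'⟩ := hφ ρ' hρ'
    simpa [hαi, hαi'] using hlt i i' (by simpa [hβi, hβi'] using hρρ')
  · obtain ⟨j, hj, hjt⟩ := mem_jointRoots.1 (Finset.mem_coe.1 ht)
    obtain ⟨s, hs⟩ := (eval_eq_zero_iff_exists_eq hj (hα j)).1 hjt
    have hβreal := Complex.conj_eq_iff_re.1 ((hreal ⟨j, s⟩).1 (by rw [hs, Complex.conj_ofReal]))
    have hj₀ : P₀ j ≠ 0 := mt (hzero j).2 hj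
    have hρ : (β ⟨j, s⟩).re ∈ jointRoots P₀ := mem_jointRoots.2
      ⟨j, hj₀, (eval_eq_zero_iff_exists_eq hj₀ (hβ j)).2 ⟨s, hβreal.symm⟩⟩
    obtain ⟨i, hβi, hαi⟩ := hφ _ hρ
    refine ⟨_, hρ, Complex.ofReal_injective ?_⟩
    rw [← hαi, ← hs, heq, hβi, hβreal]
  · rintro _ ⟨ρ, hρ, rfl⟩
    obtain ⟨j, hj, hjρ⟩ := mem_jointRoots.1 (Finset.mem_coe.1 hρ)
    exact mem_jointRoots.2 ⟨j, mt (hzero j).1 hj, (heval ρ hρ j).2 hjρ⟩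
  · obtain ⟨i, hβi, hαi⟩ := hφ ρ hρ
    refine ⟨?_, heval ρ hρ⟩
    have hre := (Complex.abs_re_le_norm (α i - β i)).trans_lt (hclose i)
    simpa [hβi, hαi] using hre

variable {Z : Type*}

lemma eventually_imp_eq_of_tendsto {Y : Type*} [TopologicalSpace Y] [T2Space Y] {l : Filter Z}
    {f g : Z → Y} {a b : Y} (hf : Tendsto f l (𝓝 a)) (hg : Tendsto g l (𝓝 b)) :
    ∀ᶠ z in l, f z = g z → a = b := by
  by_cases hab : a = b
  · exact Eventually.of_forall fun _ _ => hab
  · have hne := (hf.prodMk_nhds hg).eventually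
      (isClosed_diagonal.isOpen_compl.mem_nhds (show (a, b) ∈ (Set.diagonal Y)ᶜ from hab))
    filter_upwards [hne] with z hz h using absurd h hz

/- In the limit coincidences can only be created; equality of their numbers shows that none are. -/
lemma eventually_eq_iff_of_card_eq [Finite J] {Y : Type*} [TopologicalSpace Y] [T2Space Y]
    [DecidableEq Y] {l : Filter Z} {α : Z → (Σ j, ι j) → Y} {β : (Σ j, ι j) → Y}
    (hlim : ∀ i, Tendsto (fun z => α z i) l (𝓝 (β i)))
    (hcard : ∀ z j j', (Finset.univ.filter fun s : ι j × ι j' =>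
        α z ⟨j, s.1⟩ = α z ⟨j', s.2⟩).card =
      (Finset.univ.filter fun s : ι j × ι j' => β ⟨j, s.1⟩ = β ⟨j', s.2⟩).card) :
    ∀ᶠ z in l, ∀ i i', α z i = α z i' ↔ β i = β i' := by
  have himp : ∀ᶠ z in l, ∀ i i', α z i = α z i' → β i = β i' := eventually_all.2 fun i =>
    eventually_all.2 fun i' => eventually_imp_eq_of_tendsto (hlim i) (hlim i')
  filter_upwards [himp] with z hz
  rintro ⟨j, s⟩ ⟨j', s'⟩
  have hsub := Finset.monotone_filter_right (Finset.univ : Finset (ι j × ι j'))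
    fun t _ => hz ⟨j, t.1⟩ ⟨j', t.2⟩
  have hset := Finset.eq_of_subset_of_card_le hsub (hcard z j j').ge
  simpa using Finset.ext_iff.1 hset (s, s')

/-- A continuous family of real polynomials along which neither the degrees nor the pairwise numbers
of common complex roots vary. -/
structure RootRegular [TopologicalSpace Z] (P : J → Z → ℝ[X]) : Prop where
  continuous_coeff : ∀ j i, Continuous fun z => (P j z).coeff i
  degree_eq : ∀ j z z', (P j z).degree = (P j z').degree
  commonRootCount_eq : ∀ j j' z z',
    commonRootCount ((P j z).map (algebraMap ℝ ℂ)) ((P j' z).map (algebraMap ℝ ℂ)) =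
      commonRootCount ((P j z').map (algebraMap ℝ ℂ)) ((P j' z').map (algebraMap ℝ ℂ))

namespace RootRegular

variable [TopologicalSpace Z] {P : J → Z → ℝ[X]}

lemma eq_zero_iff (hP : RootRegular P) (j : J) (z z' : Z) : P j z = 0 ↔ P j z' = 0 := by
  rw [← Polynomial.degree_eq_bot, hP.degree_eq j z z', Polynomial.degree_eq_bot]

lemma exists_tendsto_aroots (hP : RootRegular P) {U : Ultrafilter Z} {z₀ : Z} (hU : ↑U ≤ 𝓝 z₀) :
    ∃ (α : Z → (Σ j, Fin (P j z₀).natDegree) → ℂ) (β : (Σ j, Fin (P j z₀).natDegree) → ℂ),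
      (∀ z j, (P j z).aroots ℂ = Finset.univ.val.map fun s => α z ⟨j, s⟩) ∧
      (∀ j, (P j z₀).aroots ℂ = Finset.univ.val.map fun s => β ⟨j, s⟩) ∧
      ∀ i, Tendsto (fun z => α z i) U (𝓝 (β i)) := by
  have hnatDegree : ∀ j z, ((P j z).map (algebraMap ℝ ℂ)).natDegree = (P j z₀).natDegree :=
    fun j z => (Polynomial.natDegree_map _).trans
      (Polynomial.natDegree_eq_natDegree (hP.degree_eq j z z₀))
  have henum : ∀ j z, ∃ a : Fin (P j z₀).natDegree → ℂ,
      (P j z).aroots ℂ = Finset.univ.val.map a := fun j z => exists_eq_univ_val_map_fin <|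
    (IsAlgClosed.splits _).natDegree_eq_card_roots.symm.trans (hnatDegree j z)
  choose α hα using henum
  have hcoeff : ∀ j i, Tendsto (fun z => ((P j z).map (algebraMap ℝ ℂ)).coeff i) U
      (𝓝 (((P j z₀).map (algebraMap ℝ ℂ)).coeff i)) := fun j i => by
    simpa only [Polynomial.coeff_map, Complex.coe_algebraMap, Function.comp_def] using
      ((Complex.continuous_ofReal.comp (hP.continuous_coeff j i)).tendsto z₀).mono_left hU
  choose β hβlim hβ using fun j =>
    exists_tendsto_roots U (hnatDegree j) (hnatDegree j z₀) (hcoeff j) (hα j)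
  exact ⟨fun z i => α i.1 z i.2, fun i => β i.1 i.2, fun z j => hα j z, hβ,
    fun i => hβlim i.1 i.2⟩

theorem eventually_rootsClose [Fintype J] (hP : RootRegular P) {ε : ℝ} (hε : 0 < ε) (z₀ : Z) :
    ∀ᶠ z in 𝓝 z₀, RootsClose ε (fun j => P j z) fun j => P j z₀ := by
  refine mem_iff_ultrafilter.2 fun U hU => ?_
  obtain ⟨α, β, hα, hβ, hlim⟩ := hP.exists_tendsto_aroots hU
  have heq : ∀ᶠ z in U, ∀ i i', α z i = α z i' ↔ β i = β i' :=
    eventually_eq_iff_of_card_eq hlim fun z j j' => by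
      rw [← commonRootCount_eq_card (hα z j) (hα z j'), ← commonRootCount_eq_card (hβ j) (hβ j')]
      exact hP.commonRootCount_eq j j' z z₀
  have hclose : ∀ᶠ z in U, ∀ i, ‖α z i - β i‖ < ε := eventually_all.2 fun i => by
    simpa [dist_eq_norm] using (hlim i).eventually (Metric.ball_mem_nhds _ hε)
  have hconj : ∀ᶠ z in U, ∀ i i', α z i' = conj (α z i) → β i' = conj (β i) :=
    eventually_all.2 fun i => eventually_all.2 fun i' => eventually_imp_eq_of_tendsto (hlim i')
      ((Complex.continuous_conj.tendsto _).comp (hlim i))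
  have hlt : ∀ᶠ z in U, ∀ i i', (β i).re < (β i').re → (α z i).re < (α z i').re :=
    eventually_all.2 fun i => eventually_all.2 fun i' => eventually_imp_distrib_left.2 fun h =>
      ((Complex.continuous_re.tendsto _).comp (hlim i)).eventually_lt
        ((Complex.continuous_re.tendsto _).comp (hlim i')) h
  filter_upwards [heq, hclose, hconj, hlt] with z heqz hclosez hconjz hltz
  exact rootsClose_of_enumerations (hα z) hβ (fun j => hP.eq_zero_iff j z z₀) hclosez heqz hconjz
    hltz

end RootRegular

end RealRoots

section Delineation

open Filter Topology
open scoped Polynomial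

variable {J Z : Type*}

lemma RootsClose.card_eq [Fintype J] {ε : ℝ} {P P₀ : J → ℝ[X]} (h : RootsClose ε P P₀) :
    (jointRoots P).card = (jointRoots P₀).card := by
  obtain ⟨φ, hφ, himage, -⟩ := h
  rw [← Set.ncard_coe_finset, himage, hφ.injOn.ncard_image, Set.ncard_coe_finset]

lemma RootsClose.orderEmbOfFin [Fintype J] {ε : ℝ} {P P₀ : J → ℝ[X]} (h : RootsClose ε P P₀)
    {R : ℕ} (hR : (jointRoots P).card = R) (hR₀ : (jointRoots P₀).card = R) (r : Fin R) :
    |(jointRoots P).orderEmbOfFin hR r - (jointRoots P₀).orderEmbOfFin hR₀ r| < ε ∧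
      ∀ j, (P j).eval ((jointRoots P).orderEmbOfFin hR r) = 0 ↔
        (P₀ j).eval ((jointRoots P₀).orderEmbOfFin hR₀ r) = 0 := by
  obtain ⟨φ, hφ, himage, hclose⟩ := h
  have hmem := (jointRoots P₀).orderEmbOfFin_mem hR₀
  have hunique : φ ∘ (jointRoots P₀).orderEmbOfFin hR₀ = (jointRoots P).orderEmbOfFin hR :=
    Finset.orderEmbOfFin_unique hR
      (fun r => Finset.mem_coe.1 (himage ▸ Set.mem_image_of_mem φ (hmem r)))
      fun r r' hrr' => hφ (hmem r) (hmem r') (OrderEmbedding.strictMono _ hrr')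
  rw [← hunique]
  exact hclose _ (hmem r)

/-- Continuous functions `root 0 < ⋯ < root (R - 1)` on the parameter space that list the zeros of
all members of the family that do not vanish identically, with constant incidences. -/
structure Delineation [TopologicalSpace Z] (P : J → Z → ℝ[X]) (R : ℕ) where
  root : Fin R → Z → ℝ
  continuous_root : ∀ r, Continuous (root r)
  strictMono_root : ∀ z, StrictMono fun r => root r z
  exists_root_eq : ∀ {j z t}, P j z ≠ 0 → (P j z).eval t = 0 → ∃ r, root r z = t
  eval_root_eq_zero_iff : ∀ j r z z',
    (P j z).eval (root r z) = 0 ↔ (P j z').eval (root r z') = 0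

theorem RootRegular.nonempty_delineation [TopologicalSpace Z] [PreconnectedSpace Z] [Fintype J]
    {P : J → Z → ℝ[X]} (hP : RootRegular P) (z₀ : Z) :
    Nonempty (Delineation P (jointRoots fun j => P j z₀).card) := by
  have hcard : ∀ z, (jointRoots fun j => P j z).card = (jointRoots fun j => P j z₀).card :=
    fun z => ((IsLocallyConstant.iff_eventually_eq _).2 fun z₁ =>
      (hP.eventually_rootsClose one_pos z₁).mono fun _ h => h.card_eq).apply_eq_of_preconnectedSpace
        z z₀
  refine ⟨⟨fun r z => (jointRoots fun j => P j z).orderEmbOfFin (hcard z) r, fun r => ?_,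
    fun z => OrderEmbedding.strictMono _, fun {j z t} hj ht => ?_, fun j r z z' => ?_⟩⟩
  · refine Metric.continuous_iff'.2 fun z₁ ε hε => ?_
    filter_upwards [hP.eventually_rootsClose hε z₁] with z hz
    exact (hz.orderEmbOfFin (hcard z) (hcard z₁) r).1
  · have hmem : t ∈ (jointRoots fun j => P j z : Set ℝ) :=
      Finset.mem_coe.2 (mem_jointRoots.2 ⟨j, hj, ht⟩)
    rwa [← Finset.range_orderEmbOfFin _ (hcard z)] at hmem
  · refine iff_of_eq (IsLocallyConstant.apply_eq_of_preconnectedSpace (f := fun z =>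
      (P j z).eval ((jointRoots fun j => P j z).orderEmbOfFin (hcard z) r) = 0)
      ((IsLocallyConstant.iff_eventually_eq _).2 fun z₁ => ?_) z z')
    filter_upwards [hP.eventually_rootsClose one_pos z₁] with z hz
    exact propext ((hz.orderEmbOfFin (hcard z) (hcard z₁) r).2 j)

lemma exists_continuous_between {ι : Type*} [TopologicalSpace Z] {f : ι → Z → ℝ}
    (hf : ∀ i, Continuous (f i)) {s t : Finset ι} (h : ∀ i ∈ s, ∀ j ∈ t, ∀ z, f i z < f j z) :
    ∃ m : Z → ℝ, Continuous m ∧ ∀ z, (∀ i ∈ s, f i z < m z) ∧ ∀ j ∈ t, m z < f j z := by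
  have hsup : ∀ hs : s.Nonempty, Continuous fun z => s.sup' hs fun i => f i z := fun hs =>
    Continuous.finset_sup'_apply hs fun i _ => hf i
  have hinf : ∀ ht : t.Nonempty, Continuous fun z => t.inf' ht fun i => f i z := fun ht =>
    Continuous.finset_inf'_apply ht fun i _ => hf i
  have hle : ∀ (hs : s.Nonempty) z, ∀ i ∈ s, f i z ≤ s.sup' hs fun i => f i z :=
    fun _ z _ hi => Finset.le_sup' (f := fun i => f i z) hi
  have hge : ∀ (ht : t.Nonempty) z, ∀ j ∈ t, t.inf' ht (fun i => f i z) ≤ f j z :=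
    fun _ z _ hj => Finset.inf'_le (f := fun i => f i z) hj
  rcases s.eq_empty_or_nonempty with rfl | hs <;> rcases t.eq_empty_or_nonempty with rfl | ht
  · exact ⟨fun _ => 0, continuous_const, by simp⟩
  · exact ⟨_, (hinf ht).sub continuous_const, fun z =>
      ⟨by simp, fun j hj => (sub_one_lt _).trans_le (hge ht z j hj)⟩⟩
  · exact ⟨_, (hsup hs).add continuous_const, fun z =>
      ⟨fun i hi => (hle hs z i hi).trans_lt (lt_add_one _), by simp⟩⟩
  · have hlt : ∀ z, (s.sup' hs fun i => f i z) < t.inf' ht fun i => f i z := fun z => by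
      simpa only [Finset.sup'_lt_iff, Finset.lt_inf'_iff] using fun j hj i hi => h i hi j hj z
    exact ⟨fun z => (s.sup' hs (fun i => f i z) + t.inf' ht fun i => f i z) / 2,
      ((hsup hs).add (hinf ht)).div_const 2, fun z =>
      ⟨fun i hi => by linarith [hle hs z i hi, hlt z],
        fun j hj => by linarith [hge ht z j hj, hlt z]⟩⟩

lemma isPreconnected_of_continuous_section [TopologicalSpace Z] [PreconnectedSpace Z]
    {Y : Type*} [TopologicalSpace Y] {S : Set (Z × Y)} {m : Z → Y} (hm : Continuous m)
    (hmem : ∀ z, (z, m z) ∈ S) (hfiber : ∀ z, IsPreconnected {t | (z, t) ∈ S}) :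
    IsPreconnected S := by
  rcases S.eq_empty_or_nonempty with rfl | ⟨⟨z₀, -⟩, -⟩
  · exact isPreconnected_empty
  refine isPreconnected_of_forall (z₀, m z₀) ?_
  rintro ⟨z, t⟩ hzt
  refine ⟨Set.range (fun z => (z, m z)) ∪ (fun t => (z, t)) '' {t | (z, t) ∈ S}, ?_,
    Or.inl ⟨z₀, rfl⟩, Or.inr ⟨t, hzt, rfl⟩, ?_⟩
  · rintro _ (⟨z, rfl⟩ | ⟨t, ht, rfl⟩)
    exacts [hmem z, ht]
  · exact (isPreconnected_range (by fun_prop)).union (z, m z) ⟨z, rfl⟩ ⟨m z, hmem z, rfl⟩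
      ((hfiber z).image _ (by fun_prop))

lemma sign_eq_of_isPreconnected {Y : Type*} [TopologicalSpace Y] {S : Set Y} (hS : IsPreconnected S)
    {f : Y → ℝ} (hf : ContinuousOn f S) (hzero : ∀ x ∈ S, ∀ y ∈ S, f x = 0 → f y = 0) {x y : Y}
    (hx : x ∈ S) (hy : y ∈ S) : SignType.sign (f x) = SignType.sign (f y) := by
  have hpos : ∀ x ∈ S, ∀ y ∈ S, 0 < f x → 0 < f y := by
    intro x hx y hy hfx
    by_contra! hfy
    obtain ⟨w, hw, hfw⟩ := hS.intermediate_value hy hx hf ⟨hfy, hfx.le⟩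
    exact hfx.ne' (hzero w hw x hx hfw)
  rcases lt_trichotomy (f x) 0 with h | h | h
  · have hfy : f y < 0 := lt_of_le_of_ne (not_lt.1 fun hfy => h.not_gt (hpos y hy x hx hfy))
      fun hfy => h.ne (hzero y hy x hx hfy)
    rw [sign_neg h, sign_neg hfy]
  · rw [h, hzero x hx y hy h]
  · rw [sign_pos h, sign_pos (hpos x hx y hy h)]

lemma exists_fin_cut {R : ℕ} {p : Fin R → Prop} (hp : ∀ r r', r ≤ r' → p r' → p r) :
    ∃ c : Fin (R + 1), ∀ r, p r ↔ r.castSucc < c := by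
  classical
  have hex : ∃ n : ℕ, ∀ r : Fin R, n ≤ (r : ℕ) → ¬p r :=
    ⟨R, fun r hr => absurd r.isLt (not_lt.2 hr)⟩
  have hle : Nat.find hex ≤ R := Nat.find_min' hex fun r hr => absurd r.isLt (not_lt.2 hr)
  refine ⟨⟨Nat.find hex, Nat.lt_succ_of_le hle⟩, fun r => ⟨fun hr => ?_, fun hr => ?_⟩⟩
  · exact not_le.1 fun hle => Nat.find_spec hex r hle hr
  · have hmin := Nat.find_min hex hr
    push Not at hmin
    obtain ⟨r', hr', hpr'⟩ := hmin
    exact hp r r' hr' hpr'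

namespace Delineation

variable [TopologicalSpace Z] {P : J → Z → ℝ[X]} {R : ℕ} (D : Delineation P R)

/-- The points of the cylinder over `Z` that lie above, on or below each root as told by `σ`. -/
def cell (σ : Fin R → SignType) : Set (Z × ℝ) :=
  {x | ∀ r, SignType.sign (x.2 - D.root r x.1) = σ r}

/-- The sign vector of the graph of `root i`. -/
noncomputable def sectionSign (i : Fin R) (r : Fin R) : SignType :=
  SignType.sign ((i : ℤ) - r)

/-- The sign vector of the open sector between `root (c - 1)` and `root c`. -/
def sectorSign (c : Fin (R + 1)) (r : Fin R) : SignType :=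
  if r.castSucc < c then 1 else -1

/-- The sign vectors of all sections and sectors. -/
noncomputable def cellSigns (R : ℕ) : Finset (Fin R → SignType) :=
  Finset.univ.image sectionSign ∪ Finset.univ.image sectorSign

lemma card_cellSigns_le (R : ℕ) : (cellSigns R).card ≤ 2 * R + 1 := by
  have hsection := Finset.card_image_le (s := Finset.univ) (f := sectionSign (R := R))
  have hsector := Finset.card_image_le (s := Finset.univ) (f := sectorSign (R := R))
  have hunion := Finset.card_union_le (Finset.univ.image (sectionSign (R := R)))
    (Finset.univ.image sectorSign)
  simp only [Finset.card_univ, Fintype.card_fin] at hsection hsector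
  exact hunion.trans (by omega)

lemma sign_root_sub_root (i r : Fin R) (z : Z) :
    SignType.sign (D.root i z - D.root r z) = sectionSign i r := by
  rcases lt_trichotomy r i with h | rfl | h
  · rw [sign_pos (sub_pos.2 (D.strictMono_root z h)), sectionSign, sign_pos (by simpa using h)]
  · simp [sectionSign]
  · rw [sign_neg (sub_neg.2 (D.strictMono_root z h)), sectionSign, sign_neg (by simpa using h)]

lemma exists_continuous_section {σ : Fin R → SignType} (hσ : σ ∈ cellSigns R) :
    ∃ m : Z → ℝ, Continuous m ∧ ∀ z, (z, m z) ∈ D.cell σ := by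
  simp only [cellSigns, Finset.mem_union, Finset.mem_image, Finset.mem_univ, true_and] at hσ
  rcases hσ with ⟨i, rfl⟩ | ⟨c, rfl⟩
  · exact ⟨D.root i, D.continuous_root i, fun z r => D.sign_root_sub_root i r z⟩
  · obtain ⟨m, hm, hbetween⟩ := exists_continuous_between D.continuous_root
      (s := {r | r.castSucc < c}) (t := {r | ¬r.castSucc < c}) fun i hi j hj z =>
        D.strictMono_root z (Fin.castSucc_lt_castSucc_iff.1
          ((Finset.mem_filter.1 hi).2.trans_le (not_lt.1 (Finset.mem_filter.1 hj).2)))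
    refine ⟨m, hm, fun z r => ?_⟩
    by_cases hr : r.castSucc < c
    · rw [sectorSign, if_pos hr, sign_pos (sub_pos.2 ((hbetween z).1 r (by simpa using hr)))]
    · rw [sectorSign, if_neg hr, sign_neg (sub_neg.2 ((hbetween z).2 r (by simpa using hr)))]

lemma exists_mem_cell (x : Z × ℝ) : ∃ σ ∈ cellSigns R, x ∈ D.cell σ := by
  obtain ⟨z, t⟩ := x
  by_cases hroot : ∃ i, D.root i z = t
  · obtain ⟨i, rfl⟩ := hroot
    exact ⟨sectionSign i, by simp [cellSigns], fun r => D.sign_root_sub_root i r z⟩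
  · push Not at hroot
    obtain ⟨c, hc⟩ := exists_fin_cut (p := fun r => D.root r z < t) fun r r' hr h =>
      ((D.strictMono_root z).monotone hr).trans_lt h
    refine ⟨sectorSign c, by simp [cellSigns], fun r => ?_⟩
    by_cases hr : D.root r z < t
    · rw [sectorSign, if_pos ((hc r).1 hr), sign_pos (sub_pos.2 hr)]
    · rw [sectorSign, if_neg (mt (hc r).2 hr),
        sign_neg (sub_neg.2 ((not_lt.1 hr).lt_of_ne' (hroot r)))]

lemma isPreconnected_cell [PreconnectedSpace Z] {σ : Fin R → SignType} (hσ : σ ∈ cellSigns R) :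
    IsPreconnected (D.cell σ) := by
  obtain ⟨m, hm, hmem⟩ := D.exists_continuous_section hσ
  refine isPreconnected_of_continuous_section hm hmem fun z => Set.OrdConnected.isPreconnected ⟨?_⟩
  intro a ha b hb t ht r
  have hmono : ∀ {u v : ℝ}, u ≤ v →
      SignType.sign (u - D.root r z) ≤ SignType.sign (v - D.root r z) := fun huv =>
    SignType.sign.monotone (sub_le_sub_right huv _)
  exact le_antisymm ((hmono ht.2).trans_eq (hb r)) ((ha r).symm.trans_le (hmono ht.1))

lemma sign_eval_eq [PreconnectedSpace Z] (hP : RootRegular P) {σ : Fin R → SignType}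
    (hσ : σ ∈ cellSigns R) (j : J) {x y : Z × ℝ} (hx : x ∈ D.cell σ) (hy : y ∈ D.cell σ) :
    SignType.sign ((P j x.1).eval x.2) = SignType.sign ((P j y.1).eval y.2) := by
  have hcont : Continuous fun x : Z × ℝ => (P j x.1).eval x.2 :=
    continuous_iff_continuousAt.2 fun x => tendsto_polynomial_eval
      (p := fun y : Z × ℝ => P j y.1) (p₀ := P j x.1)
      (fun y => (Polynomial.natDegree_eq_natDegree (hP.degree_eq j y.1 x.1)).le) le_rfl
      (fun i => ((hP.continuous_coeff j i).comp continuous_fst).tendsto x)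
      (continuous_snd.tendsto x)
  refine sign_eq_of_isPreconnected (D.isPreconnected_cell hσ) hcont.continuousOn
    (fun u hu v hv huv => ?_) hx hy
  by_cases hzero : P j u.1 = 0
  · simp [(hP.eq_zero_iff j u.1 v.1).1 hzero]
  · obtain ⟨r, hr⟩ := D.exists_root_eq hzero huv
    have hσr : σ r = 0 := by rw [← hu r, hr, sub_self, sign_zero]
    have hvr : v.2 = D.root r v.1 := sub_eq_zero.1 (sign_eq_zero_iff.1 ((hv r).trans hσr))
    rw [hvr, D.eval_root_eq_zero_iff j r v.1 u.1, hr, huv]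

end Delineation

end Delineation

section DegreeBounds

open scoped Polynomial

variable {σ R : Type*} [CommRing R]

lemma totalDegree_det_le {ι : Type*} [Fintype ι] [DecidableEq ι]
    {M : Matrix ι ι (MvPolynomial σ R)} {N : ℕ} (hM : ∀ i j, (M i j).totalDegree ≤ N) :
    M.det.totalDegree ≤ Fintype.card ι * N := by
  rw [Matrix.det_apply]
  refine totalDegree_finsetSum_le fun τ _ => (totalDegree_smul_le _ _).trans ?_
  refine (totalDegree_finsetProd _ _).trans
    ((Finset.sum_le_card_nsmul _ _ N fun i _ => hM _ _).trans ?_)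
  simp

lemma totalDegree_resultant_le {f g : (MvPolynomial σ R)[X]} {N : ℕ}
    (hf : ∀ i, (f.coeff i).totalDegree ≤ N) (hg : ∀ i, (g.coeff i).totalDegree ≤ N) (m n : ℕ) :
    (Polynomial.resultant f g m n).totalDegree ≤ (m + n) * N := by
  have hentry : ∀ i j, (Polynomial.sylvester f g m n i j).totalDegree ≤ N := by
    intro i j
    refine Fin.addCases (fun j => ?_) (fun j => ?_) j <;>
      simp only [Polynomial.sylvester, Matrix.of_apply, Fin.addCases_left, Fin.addCases_right] <;>
      split_ifs <;> simp only [hf, hg, totalDegree_zero, zero_le]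
  simpa [Polynomial.resultant] using totalDegree_det_le hentry

lemma totalDegree_coeff_taylor_le {q : (MvPolynomial σ R)[X]} {N : ℕ}
    (hq : ∀ i ∈ q.support, (q.coeff i).totalDegree + i ≤ N) {r : MvPolynomial σ R}
    (hr : r.totalDegree ≤ 1) (j : ℕ) : ((Polynomial.taylor r q).coeff j).totalDegree ≤ N := by
  rw [Polynomial.taylor_coeff, Polynomial.hasseDeriv_apply, Polynomial.sum_def,
    Polynomial.eval_finsetSum]
  refine totalDegree_finsetSum_le fun i hi => ?_
  rw [Polynomial.eval_monomial, ← nsmul_eq_mul]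
  calc _ ≤ (q.coeff i).totalDegree + (i - j) * 1 :=
        (totalDegree_mul _ _).trans (add_le_add (totalDegree_smul_le _ _)
          ((totalDegree_pow _ _).trans (Nat.mul_le_mul_left _ hr)))
    _ ≤ N := by have := hq i hi; omega

lemma finSuccEquiv_symm_C {n : ℕ} (a : MvPolynomial (Fin n) R) :
    (finSuccEquiv R n).symm (Polynomial.C a) = rename Fin.succ a := by
  rw [AlgEquiv.symm_apply_eq]
  induction a using MvPolynomial.induction_on with
  | C a => simp [finSuccEquiv_apply]
  | add p q hp hq => simp only [map_add, hp, hq]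
  | mul_X p i hp => simp only [map_mul, hp, rename_X, finSuccEquiv_X_succ]

lemma totalDegree_coeff_finSuccEquiv_le {n : ℕ} (p : MvPolynomial (Fin (n + 1)) R) (i : ℕ) :
    ((finSuccEquiv R n p).coeff i).totalDegree ≤ p.totalDegree := by
  by_cases h : (finSuccEquiv R n p).coeff i = 0
  · simp [h]
  · exact (Nat.le_add_right _ i).trans (totalDegree_coeff_finSuccEquiv_add_le p i h)

lemma natDegree_finSuccEquiv_le {n : ℕ} (p : MvPolynomial (Fin (n + 1)) R) :
    (finSuccEquiv R n p).natDegree ≤ p.totalDegree :=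
  (natDegree_finSuccEquiv p).trans_le (degreeOf_le_totalDegree p 0)

/- The variable of `shiftResultant` is counted as one more variable of the coefficients. -/
lemma totalDegree_finSuccEquiv_symm_shiftResultant_le [Nontrivial R] {n N : ℕ}
    {p q : MvPolynomial (Fin (n + 1)) R} (hp : p.totalDegree ≤ N) (hq : q.totalDegree ≤ N)
    (k l : ℕ) :
    ((finSuccEquiv R n).symm (shiftResultant k l (finSuccEquiv R n p)
      (finSuccEquiv R n q))).totalDegree ≤ (k + l) * N := by
  set P := finSuccEquiv R n p
  set Q := finSuccEquiv R n q
  let e : (MvPolynomial (Fin n) R)[X] →+* MvPolynomial (Fin (n + 1)) R := (finSuccEquiv R n).symm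
  have hcoeff : ∀ (f : (MvPolynomial (Fin n) R)[X]) i,
      (((f.map Polynomial.C).map e).coeff i).totalDegree ≤ (f.coeff i).totalDegree := fun f i => by
    rw [Polynomial.coeff_map, Polynomial.coeff_map]
    exact (finSuccEquiv_symm_C (f.coeff i)).symm ▸ totalDegree_rename_le _ _
  have hX : (e Polynomial.X).totalDegree ≤ 1 := by
    rw [show e Polynomial.X = X 0 from
      (finSuccEquiv R n).symm_apply_eq.2 finSuccEquiv_X_zero.symm]
    exact (totalDegree_X 0).le
  have hQ : ∀ i ∈ ((Q.map Polynomial.C).map e).support,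
      (((Q.map Polynomial.C).map e).coeff i).totalDegree + i ≤ N := by
    intro i hi
    have hne : Q.coeff i ≠ 0 := fun h => Polynomial.mem_support_iff.1 hi (by simp [h])
    exact (Nat.add_le_add_right (hcoeff Q i) i).trans
      ((totalDegree_coeff_finSuccEquiv_add_le q i hne).trans hq)
  change (e (shiftResultant k l P Q)).totalDegree ≤ _
  rw [shiftResultant, ← Polynomial.resultant_map_map, Polynomial.map_taylor]
  exact totalDegree_resultant_le
    (fun i => (hcoeff P i).trans ((totalDegree_coeff_finSuccEquiv_le p i).trans hp))
    (totalDegree_coeff_taylor_le hQ hX) k l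

end DegreeBounds

section Projection

open scoped Polynomial

/-- The common bound `L` on the number of polynomials and on their total degrees. -/
def ComplexityLE {σ R : Type*} [CommSemiring R] (𝓕 : Finset (MvPolynomial σ R)) (L : ℕ) : Prop :=
  𝓕.card ≤ L ∧ ∀ p ∈ 𝓕, p.totalDegree ≤ L

/-- Each polynomial of `𝓕` has constant sign on `S`. -/
def SignInvariantOn {σ : Type*} (𝓕 : Finset (MvPolynomial σ ℝ)) (S : Set (σ → ℝ)) : Prop :=
  ∀ p ∈ 𝓕, ∀ x ∈ S, ∀ y ∈ S, SignType.sign (eval x p) = SignType.sign (eval y p)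

lemma SignInvariantOn.eval_eq_zero_iff {σ : Type*} {𝓕 : Finset (MvPolynomial σ ℝ)}
    {S : Set (σ → ℝ)} (h : SignInvariantOn 𝓕 S) {p : MvPolynomial σ ℝ} (hp : p ∈ 𝓕) {x y : σ → ℝ}
    (hx : x ∈ S) (hy : y ∈ S) : eval x p = 0 ↔ eval y p = 0 := by
  rw [← sign_eq_zero_iff, h p hp x hx y hy, sign_eq_zero_iff]

lemma support_map_eq_support_map {R S T : Type*} [Semiring R] [Semiring S] [Semiring T]
    {f : R →+* S} {g : R →+* T} {p : R[X]} (h : ∀ c ∈ p.coeffs, f c = 0 ↔ g c = 0) :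
    (p.map f).support = (p.map g).support := by
  ext i
  by_cases hi : p.coeff i = 0
  · simp [hi]
  · simpa using not_congr (h _ (Polynomial.coeff_mem_coeffs hi))

lemma degree_eq_of_support_eq {R S : Type*} [Semiring R] [Semiring S] {p : R[X]} {q : S[X]}
    (h : p.support = q.support) : p.degree = q.degree := by
  rw [Polynomial.degree, Polynomial.degree, h]

lemma natTrailingDegree_eq_of_support_eq {R S : Type*} [Semiring R] [Semiring S] {p : R[X]}
    {q : S[X]} (h : p.support = q.support) : p.natTrailingDegree = q.natTrailingDegree := by
  rw [Polynomial.natTrailingDegree, Polynomial.natTrailingDegree, Polynomial.trailingDegree,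
    Polynomial.trailingDegree, h]

variable {n : ℕ}

/-- The restriction of `p` to the vertical line over `z`, as a polynomial in the first variable. -/
noncomputable def fiber (p : MvPolynomial (Fin (n + 1)) ℝ) (z : Fin n → ℝ) : ℝ[X] :=
  (finSuccEquiv ℝ n p).map (eval z)

lemma eval_fiber (p : MvPolynomial (Fin (n + 1)) ℝ) (z : Fin n → ℝ) (t : ℝ) :
    (fiber p z).eval t = eval (Fin.cons t z) p :=
  (eval_eq_eval_mv_eval' z t p).symm

lemma natDegree_fiber_le (p : MvPolynomial (Fin (n + 1)) ℝ) (z : Fin n → ℝ) :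
    (fiber p z).natDegree ≤ p.totalDegree :=
  Polynomial.natDegree_map_le.trans (natDegree_finSuccEquiv_le p)

open Classical in
/-- Elimination of the first variable: all coefficients of the polynomials of `𝓕`, and all
coefficients of their pairwise shift resultants, where the first polynomial is truncated to
every possible degree. -/
noncomputable def projection (𝓕 : Finset (MvPolynomial (Fin (n + 1)) ℝ)) :
    Finset (MvPolynomial (Fin n) ℝ) :=
  (𝓕.biUnion fun p => (finSuccEquiv ℝ n p).coeffs) ∪
    𝓕.biUnion fun p => 𝓕.biUnion fun q =>
      (Finset.range ((finSuccEquiv ℝ n p).natDegree + 1)).biUnion fun m =>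
        (shiftResultant m (finSuccEquiv ℝ n q).natDegree (finSuccEquiv ℝ n p)
          (finSuccEquiv ℝ n q)).coeffs

variable {𝓕 : Finset (MvPolynomial (Fin (n + 1)) ℝ)}

lemma mem_projection {c : MvPolynomial (Fin n) ℝ} :
    c ∈ projection 𝓕 ↔ (∃ p ∈ 𝓕, c ∈ (finSuccEquiv ℝ n p).coeffs) ∨
      ∃ p ∈ 𝓕, ∃ q ∈ 𝓕, ∃ m ≤ (finSuccEquiv ℝ n p).natDegree,
        c ∈ (shiftResultant m (finSuccEquiv ℝ n q).natDegree (finSuccEquiv ℝ n p)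
          (finSuccEquiv ℝ n q)).coeffs := by
  simp only [projection, Finset.mem_union, Finset.mem_biUnion, Finset.mem_range, Nat.lt_succ_iff]

lemma card_coeffs_le {R : Type*} [Semiring R] (p : R[X]) : p.coeffs.card ≤ p.natDegree + 1 := by
  classical
  exact Finset.card_image_le.trans p.card_supp_le_succ_natDegree

lemma totalDegree_le_of_mem_coeffs {f : (MvPolynomial (Fin n) ℝ)[X]} {N : ℕ}
    (hf : ((finSuccEquiv ℝ n).symm f).totalDegree ≤ N) {c : MvPolynomial (Fin n) ℝ}
    (hc : c ∈ f.coeffs) : c.totalDegree ≤ N := by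
  obtain ⟨i, -, rfl⟩ := Polynomial.mem_coeffs_iff.1 hc
  simpa using (totalDegree_coeff_finSuccEquiv_le ((finSuccEquiv ℝ n).symm f) i).trans hf

lemma natDegree_le_of_totalDegree_symm_le {f : (MvPolynomial (Fin n) ℝ)[X]} {N : ℕ}
    (hf : ((finSuccEquiv ℝ n).symm f).totalDegree ≤ N) : f.natDegree ≤ N := by
  simpa using (natDegree_finSuccEquiv_le ((finSuccEquiv ℝ n).symm f)).trans hf

lemma ComplexityLE.natDegree_finSuccEquiv_le {L : ℕ} (h : ComplexityLE 𝓕 L)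
    {p : MvPolynomial (Fin (n + 1)) ℝ} (hp : p ∈ 𝓕) : (finSuccEquiv ℝ n p).natDegree ≤ L :=
  (_root_.natDegree_finSuccEquiv_le p).trans (h.2 p hp)

lemma ComplexityLE.totalDegree_shiftResultant_le {L : ℕ} (h : ComplexityLE 𝓕 L)
    {p q : MvPolynomial (Fin (n + 1)) ℝ} (hp : p ∈ 𝓕) (hq : q ∈ 𝓕) {m : ℕ}
    (hm : m ≤ (finSuccEquiv ℝ n p).natDegree) :
    ((finSuccEquiv ℝ n).symm (shiftResultant m (finSuccEquiv ℝ n q).natDegree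
      (finSuccEquiv ℝ n p) (finSuccEquiv ℝ n q))).totalDegree ≤ 2 * L ^ 2 :=
  calc _ ≤ (m + (finSuccEquiv ℝ n q).natDegree) * L :=
        totalDegree_finSuccEquiv_symm_shiftResultant_le (h.2 p hp) (h.2 q hq) _ _
    _ ≤ (L + L) * L := Nat.mul_le_mul_right _
        (add_le_add (hm.trans (h.natDegree_finSuccEquiv_le hp)) (h.natDegree_finSuccEquiv_le hq))
    _ = 2 * L ^ 2 := by ring

lemma ComplexityLE.card_projection_le {L : ℕ} (h : ComplexityLE 𝓕 L) :
    (projection 𝓕).card ≤ L * (L + 1) + L * (L * ((L + 1) * (2 * L ^ 2 + 1))) := by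
  classical
  have hcard : ∀ {f : MvPolynomial (Fin (n + 1)) ℝ → Finset (MvPolynomial (Fin n) ℝ)} {N : ℕ},
      (∀ p ∈ 𝓕, (f p).card ≤ N) → (𝓕.biUnion f).card ≤ L * N := fun hf =>
    (Finset.card_biUnion_le_card_mul _ _ _ hf).trans (Nat.mul_le_mul_right _ h.1)
  refine (Finset.card_union_le _ _).trans (add_le_add (hcard fun p hp => ?_)
    (hcard fun p hp => hcard fun q hq => ?_))
  · exact (card_coeffs_le _).trans (Nat.succ_le_succ (h.natDegree_finSuccEquiv_le hp))
  · refine (Finset.card_biUnion_le_card_mul _ _ (2 * L ^ 2 + 1) fun m hm => ?_).trans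
      (Nat.mul_le_mul_right _ ?_)
    · exact (card_coeffs_le _).trans (Nat.succ_le_succ (natDegree_le_of_totalDegree_symm_le
        (h.totalDegree_shiftResultant_le hp hq (Nat.lt_succ_iff.1 (Finset.mem_range.1 hm)))))
    · rw [Finset.card_range]
      exact Nat.succ_le_succ (h.natDegree_finSuccEquiv_le hp)

lemma ComplexityLE.projection {L : ℕ} (hL : 2 ≤ L) (h : ComplexityLE 𝓕 L) :
    ComplexityLE (projection 𝓕) (L ^ 8) := by
  have hpow : ∀ {i j}, i + j ≤ 8 → 2 ^ i * L ^ j ≤ L ^ 8 := fun {i j} hij =>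
    calc 2 ^ i * L ^ j ≤ L ^ i * L ^ j := Nat.mul_le_mul_right _ (Nat.pow_le_pow_left hL i)
      _ = L ^ (i + j) := (pow_add L i j).symm
      _ ≤ L ^ 8 := Nat.pow_le_pow_right (by omega) hij
  refine ⟨?_, fun c hc => ?_⟩
  · calc (_root_.projection 𝓕).card
        ≤ L * (L + 1) + L * (L * ((L + 1) * (2 * L ^ 2 + 1))) := h.card_projection_le
      _ ≤ L * (L + L) + L * (L * ((L + L) * (2 * L ^ 2 + L ^ 2))) := by gcongr <;> nlinarith
      _ = 2 * L ^ 2 * 1 + 6 * L ^ 5 := by ring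
      _ ≤ 2 * L ^ 2 * L ^ 3 + 6 * L ^ 5 := by gcongr; exact Nat.one_le_pow _ _ (by omega)
      _ = 2 ^ 3 * L ^ 5 := by ring
      _ ≤ L ^ 8 := hpow (by norm_num)
  · rcases mem_projection.1 hc with ⟨p, hp, hcp⟩ | ⟨p, hp, q, hq, m, hm, hcr⟩
    · exact (totalDegree_le_of_mem_coeffs (by simpa using h.2 p hp) hcp).trans
        (by simpa using hpow (i := 0) (j := 1))
    · exact (totalDegree_le_of_mem_coeffs (h.totalDegree_shiftResultant_le hp hq hm) hcr).trans
        (by simpa using hpow (i := 1) (j := 2))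

theorem rootRegular_fiber {S : Set (Fin n → ℝ)} (h : SignInvariantOn (projection 𝓕) S) :
    RootRegular fun (p : 𝓕) (z : S) => fiber (p : MvPolynomial (Fin (n + 1)) ℝ) z := by
  have hzero : ∀ c ∈ projection 𝓕, ∀ z z' : S,
      eval (z : Fin n → ℝ) c = 0 ↔ eval (z' : Fin n → ℝ) c = 0 :=
    fun c hc z z' => h.eval_eq_zero_iff hc z.2 z'.2
  have hsupport : ∀ p ∈ 𝓕, ∀ z z' : S, (fiber p z).support = (fiber p z').support :=
    fun p hp z z' => support_map_eq_support_map fun c hc =>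
      hzero c (mem_projection.2 (.inl ⟨p, hp, hc⟩)) z z'
  let φ : S → MvPolynomial (Fin n) ℝ →+* ℂ := fun z => (algebraMap ℝ ℂ).comp (eval (z : Fin n → ℝ))
  have hφ : ∀ p z, (finSuccEquiv ℝ n p).map (φ z) = (fiber p z).map (algebraMap ℝ ℂ) :=
    fun p z => (Polynomial.map_map _ _ _).symm
  refine ⟨fun p i => ?_, fun p z z' => degree_eq_of_support_eq (hsupport p p.2 z z'),
    fun ⟨p, hp⟩ ⟨q, hq⟩ z z' => ?_⟩
  · simp only [fiber, Polynomial.coeff_map]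
    exact (MvPolynomial.continuous_eval _).comp continuous_subtype_val
  · have hdeg : ∀ w : S, ((finSuccEquiv ℝ n p).map (φ w)).natDegree = (fiber p z).natDegree :=
      fun w => (congrArg _ (hφ p w)).trans <| (Polynomial.natDegree_map _).trans <|
        Polynomial.natDegree_eq_natDegree (degree_eq_of_support_eq (hsupport p hp w z))
    rw [← hφ, ← hφ, ← hφ, ← hφ, ← natTrailingDegree_map_shiftResultant,
      ← natTrailingDegree_map_shiftResultant, hdeg z, hdeg z']
    refine natTrailingDegree_eq_of_support_eq (support_map_eq_support_map fun c hc => ?_)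
    have hmem : c ∈ projection 𝓕 := mem_projection.2
      (.inr ⟨p, hp, q, hq, _, Polynomial.natDegree_map_le, hc⟩)
    simpa [φ] using hzero c hmem z z'

end Projection

section CellDecomposition

variable {n : ℕ} {𝓕 : Finset (MvPolynomial (Fin (n + 1)) ℝ)}

/-- Finitely many connected sets that cover the cylinder over `S` and each project onto `S`. -/
structure IsStackOver (𝒯 : Finset (Set (Fin (n + 1) → ℝ))) (S : Set (Fin n → ℝ)) : Prop where
  isPreconnected : ∀ T ∈ 𝒯, IsPreconnected T
  image_tail : ∀ T ∈ 𝒯, Fin.tail '' T = S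
  exists_mem : ∀ x : Fin (n + 1) → ℝ, (Fin.tail x : Fin n → ℝ) ∈ S → ∃ T ∈ 𝒯, x ∈ T

lemma card_jointRoots_le {J : Type*} [Fintype J] {P : J → Polynomial ℝ} {N : ℕ}
    (h : ∀ j, (P j).natDegree ≤ N) : (jointRoots P).card ≤ Fintype.card J * N := by
  classical
  exact Finset.card_biUnion_le_card_mul _ _ _ fun j _ =>
    (Multiset.toFinset_card_le _).trans ((P j).card_roots'.trans (h j))

theorem Delineation.isStackOver {S : Set (Fin n → ℝ)} [PreconnectedSpace S] {J : Type*}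
    {P : J → S → Polynomial ℝ} {R : ℕ} (D : Delineation P R) :
    IsStackOver ((cellSigns R).image fun σ => (fun x : S × ℝ => Fin.cons x.2 x.1.1) '' D.cell σ)
      S := by
  have hΦ : Continuous fun x : S × ℝ => (Fin.cons x.2 x.1.1 : Fin (n + 1) → ℝ) := by fun_prop
  refine ⟨?_, ?_, ?_⟩
  · simp only [Finset.forall_mem_image]
    exact fun σ hσ => (D.isPreconnected_cell hσ).image _ hΦ.continuousOn
  · simp only [Finset.forall_mem_image, Set.image_image, Fin.tail_cons]
    refine fun σ hσ => Set.Subset.antisymm (Set.image_subset_iff.2 fun x _ => x.1.2) fun z hz => ?_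
    obtain ⟨m, -, hm⟩ := D.exists_continuous_section hσ
    exact ⟨_, hm ⟨z, hz⟩, rfl⟩
  · intro x hx
    obtain ⟨σ, hσ, hmem⟩ := D.exists_mem_cell (⟨Fin.tail x, hx⟩, x 0)
    exact ⟨_, Finset.mem_image_of_mem _ hσ, _, hmem, Fin.cons_self_tail x⟩

theorem exists_isStackOver {S : Set (Fin n → ℝ)} (hS : IsPreconnected S)
    (hproj : SignInvariantOn (projection 𝓕) S) {L : ℕ} (h : ComplexityLE 𝓕 L) :
    ∃ 𝒯, IsStackOver 𝒯 S ∧ (∀ T ∈ 𝒯, SignInvariantOn 𝓕 T) ∧ 𝒯.card ≤ 2 * L ^ 2 + 1 := by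
  rcases S.eq_empty_or_nonempty with rfl | ⟨z₀, hz₀⟩
  · exact ⟨∅, ⟨by simp, by simp, by simp⟩, by simp, by simp⟩
  have := isPreconnected_iff_preconnectedSpace.1 hS
  have hregular := rootRegular_fiber hproj
  obtain ⟨D⟩ := hregular.nonempty_delineation ⟨z₀, hz₀⟩
  refine ⟨_, D.isStackOver, ?_, ?_⟩
  · simp only [Finset.forall_mem_image, SignInvariantOn, Set.forall_mem_image]
    intro σ hσ p hp x hx y hy
    rw [← eval_fiber, ← eval_fiber]
    exact D.sign_eval_eq hregular hσ ⟨p, hp⟩ hx hy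
  · have hroots := card_jointRoots_le (P := fun p : 𝓕 => fiber p z₀) fun p =>
      (natDegree_fiber_le _ _).trans (h.2 p p.2)
    rw [Fintype.card_coe] at hroots
    refine Finset.card_image_le.trans ((Delineation.card_cellSigns_le _).trans ?_)
    have := hroots.trans (Nat.mul_le_mul_right L h.1)
    rw [sq]
    gcongr

/-- Finitely many connected sets that cover the space and on each of which the polynomials of `𝓕`
have constant sign. -/
structure IsCellDecomposition (𝓕 : Finset (MvPolynomial (Fin n) ℝ))
    (𝒮 : Finset (Set (Fin n → ℝ))) : Prop where
  isPreconnected : ∀ S ∈ 𝒮, IsPreconnected S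
  signInvariantOn : ∀ S ∈ 𝒮, SignInvariantOn 𝓕 S
  exists_mem : ∀ x, ∃ S ∈ 𝒮, x ∈ S

theorem exists_isCellDecomposition {L : ℕ} (hL : 2 ≤ L) {𝓕 : Finset (MvPolynomial (Fin n) ℝ)}
    (h : ComplexityLE 𝓕 L) : ∃ 𝒮, IsCellDecomposition 𝓕 𝒮 ∧ 𝒮.card ≤ L ^ 16 ^ n := by
  classical
  induction n generalizing L with
  | zero =>
    refine ⟨{Set.univ}, ⟨?_, ?_, ?_⟩, ?_⟩
    · simpa using Set.subsingleton_univ.isPreconnected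
    · exact fun _ _ p _ x _ y _ => by rw [Subsingleton.elim x y]
    · simp
    · simp; omega
  | succ n ih =>
    have hL8 : 2 ≤ L ^ 8 := hL.trans (Nat.le_self_pow (by norm_num) L)
    obtain ⟨𝒮, h𝒮, hcard⟩ := ih hL8 (h.projection hL)
    have hstack : ∀ S ∈ 𝒮, ∃ 𝒯, IsStackOver 𝒯 S ∧ (∀ T ∈ 𝒯, SignInvariantOn 𝓕 T) ∧
        𝒯.card ≤ 2 * L ^ 2 + 1 := fun S hS =>
      exists_isStackOver (h𝒮.isPreconnected S hS) (h𝒮.signInvariantOn S hS) h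
    choose! 𝒯 h𝒯 hsign hcard𝒯 using hstack
    refine ⟨𝒮.biUnion 𝒯, ⟨?_, ?_, fun x => ?_⟩, ?_⟩
    · simp only [Finset.mem_biUnion]
      exact fun T ⟨S, hS, hT⟩ => (h𝒯 S hS).isPreconnected T hT
    · simp only [Finset.mem_biUnion]
      exact fun T ⟨S, hS, hT⟩ => hsign S hS T hT
    · obtain ⟨S, hS, hx⟩ := h𝒮.exists_mem (Fin.tail x)
      obtain ⟨T, hT, hxT⟩ := (h𝒯 S hS).exists_mem x hx
      exact ⟨T, Finset.mem_biUnion.2 ⟨S, hS, hT⟩, hxT⟩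
    · calc (𝒮.biUnion 𝒯).card ≤ 𝒮.card * (2 * L ^ 2 + 1) :=
            Finset.card_biUnion_le_card_mul _ _ _ hcard𝒯
        _ ≤ (L ^ 8) ^ 16 ^ n * L ^ 8 := Nat.mul_le_mul hcard (by
            nlinarith [Nat.pow_le_pow_left hL 6, Nat.one_le_pow 2 L (by omega)])
        _ = L ^ (8 * 16 ^ n + 8) := by rw [← pow_mul, ← pow_add]
        _ ≤ L ^ 16 ^ (n + 1) := Nat.pow_le_pow_right (by omega) (by
            have := Nat.one_le_pow n 16 (by norm_num); omega)

/- Only `d` coordinates are eliminated; the cells over `S` are stacked one coordinate at a time,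
each projecting onto the whole cell below it. -/
theorem exists_cylindrical {L e d : ℕ} (hL : 2 ≤ L) {𝓕 : Finset (MvPolynomial (Fin (e + d)) ℝ)}
    (h : ComplexityLE 𝓕 L) : ∃ 𝒮 : Finset (Set (Fin e → ℝ)), 𝒮.card ≤ L ^ 16 ^ (e + d) ∧
      (∀ z, ∃ S ∈ 𝒮, z ∈ S) ∧
      ∀ S ∈ 𝒮, ∀ w : Fin (e + d) → ℝ, (fun i => w (i.addNat d)) ∈ S →
        ∃ T, w ∈ T ∧ IsPreconnected T ∧ SignInvariantOn 𝓕 T ∧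
          ∀ z ∈ S, ∃ w' ∈ T, (fun i => w' (i.addNat d)) = z := by
  induction d generalizing L with
  | zero =>
    obtain ⟨𝒮, h𝒮, hcard⟩ := exists_isCellDecomposition hL h
    exact ⟨𝒮, hcard, h𝒮.exists_mem, fun S hS w hw =>
      ⟨S, hw, h𝒮.isPreconnected S hS, h𝒮.signInvariantOn S hS, fun z hz => ⟨z, hz, rfl⟩⟩⟩
  | succ d ih =>
    have hL8 : 2 ≤ L ^ 8 := hL.trans (Nat.le_self_pow (by norm_num) L)
    obtain ⟨𝒮, hcard, hcover, hlift⟩ := ih hL8 (h.projection hL)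
    refine ⟨𝒮, ?_, hcover, fun S hS w hw => ?_⟩
    · calc 𝒮.card ≤ (L ^ 8) ^ 16 ^ (e + d) := hcard
        _ = L ^ (8 * 16 ^ (e + d)) := (pow_mul _ _ _).symm
        _ ≤ L ^ 16 ^ (e + (d + 1)) := Nat.pow_le_pow_right (by omega) (by
            rw [← add_assoc, pow_succ]; omega)
    · obtain ⟨T', hwT', hT', hsign, honto⟩ := hlift S hS (Fin.tail w) hw
      obtain ⟨𝒯, h𝒯, hsign𝒯, -⟩ := exists_isStackOver hT' hsign h
      obtain ⟨T, hT, hwT⟩ := h𝒯.exists_mem w hwT'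
      refine ⟨T, hwT, h𝒯.isPreconnected T hT, hsign𝒯 T hT, fun z hz => ?_⟩
      obtain ⟨u, hu, rfl⟩ := honto z hz
      obtain ⟨w', hw', rfl⟩ := (h𝒯.image_tail T hT).symm ▸ hu
      exact ⟨w', hw', rfl⟩

end CellDecomposition

section SignClasses

lemma ComplexityLE.image_rename {σ τ R : Type*} [CommSemiring R]
    [DecidableEq (MvPolynomial τ R)] {𝓕 : Finset (MvPolynomial σ R)} {L : ℕ}
    (h : ComplexityLE 𝓕 L) (f : σ → τ) : ComplexityLE (𝓕.image (rename f)) L := by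
  refine ⟨Finset.card_image_le.trans h.1, ?_⟩
  simp only [Finset.forall_mem_image]
  exact fun p hp => (totalDegree_rename_le f p).trans (h.2 p hp)

theorem exists_sign_classes {σ τ : Type*} [Fintype σ] [Fintype τ] {L : ℕ} (hL : 2 ≤ L)
    {𝓕 : Finset (MvPolynomial (τ ⊕ σ) ℝ)} (h : ComplexityLE 𝓕 L) :
    ∃ c : (σ → ℝ) → Fin (L ^ 16 ^ (Fintype.card σ + Fintype.card τ)),
      ∀ z z', c z = c z' → ∀ v : τ → ℝ, ∃ v' : τ → ℝ, ∀ p ∈ 𝓕,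
        SignType.sign (eval (Sum.elim v z) p) = SignType.sign (eval (Sum.elim v' z') p) := by
  classical
  let ε : τ ⊕ σ ≃ Fin (Fintype.card σ + Fintype.card τ) :=
    ((Fintype.equivFin τ).sumCongr (Fintype.equivFin σ)).trans
      (finSumFinEquiv.trans (finCongr (add_comm _ _)))
  have hε : ∀ i, ε (Sum.inr ((Fintype.equivFin σ).symm i)) = i.addNat (Fintype.card τ) :=
    fun i => Fin.ext (by simp [ε])
  obtain ⟨𝒮, hcard, hcover, hlift⟩ := exists_cylindrical hL (h.image_rename ε)
  choose S hS hzS using fun z : σ → ℝ => hcover (z ∘ (Fintype.equivFin σ).symm)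
  refine ⟨fun z => Fin.castLE hcard (𝒮.equivFin ⟨S z, hS z⟩), fun z z' hzz' v => ?_⟩
  have hSS : S z = S z' := by simpa using hzz'
  obtain ⟨T, hwT, -, hsign, honto⟩ := hlift (S z) (hS z) (Sum.elim v z ∘ ε.symm) (by
    simpa [← hε, Function.comp_def] using hzS z)
  obtain ⟨w', hw'T, hw'⟩ := honto _ (hSS ▸ hzS z')
  have hsplit : w' ∘ ε = Sum.elim (fun t => w' (ε (Sum.inl t))) z' := by
    ext (t | s)
    · rfl
    · simpa [← hε] using congrFun hw' (Fintype.equivFin σ s)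
  refine ⟨fun t => w' (ε (Sum.inl t)), fun p hp => ?_⟩
  have := hsign _ (Finset.mem_image_of_mem _ hp) _ hwT _ hw'T
  rwa [eval_rename, eval_rename, hsplit, Function.comp_assoc, ε.symm_comp_self,
    Function.comp_id] at this

end SignClasses

section Shattering

variable {X : Type*} {R : Set (Set X)} {A : Finset X}

lemma VCDimLE.mono {R' : Set (Set X)} {v : ℝ} (h : VCDimLE R' v) (hR : R ⊆ R') : VCDimLE R v :=
  fun A hA => h A fun B hB => (hA B hB).imp fun _ hr => ⟨hR hr.1, hr.2⟩

/- Index `2 ^ t` points of `A` by the subsets `ω` of `Fin t`; the `i`-th range cuts out the points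
with `i ∈ ω`. -/
lemma Shatters.exists_dual (hA : Shatters R A) {t : ℕ} (ht : 2 ^ t ≤ A.card) :
    ∃ (f : Finset (Fin t) → X) (r : Fin t → Set X), (∀ i, r i ∈ R) ∧
      ∀ ω i, f ω ∈ r i ↔ i ∈ ω := by
  classical
  obtain ⟨f⟩ : Nonempty (Finset (Fin t) ↪ A) :=
    Function.Embedding.nonempty_of_card_le (by simpa using ht)
  have hcut : ∀ i, ∃ r ∈ R,
      r ∩ ↑A = ((Finset.univ.filter (i ∈ ·)).image fun ω => (f ω : X) : Finset X) := fun i =>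
    hA _ (Finset.image_subset_iff.2 fun ω _ => (f ω).2)
  choose r hrR hr using hcut
  refine ⟨fun ω => f ω, r, hrR, fun ω i => ?_⟩
  have hmem := Set.ext_iff.1 (hr i) (f ω)
  simpa [Subtype.ext_iff.symm] using hmem

theorem Shatters.two_pow_le (hA : Shatters R A) {t M : ℕ} (ht : 2 ^ t ≤ A.card)
    (hclass : ∀ r : Fin t → Set X, (∀ i, r i ∈ R) →
      ∃ c : X → Fin M, ∀ x x', c x = c x' → ∀ i, x ∈ r i → x' ∈ r i) : 2 ^ t ≤ M := by
  obtain ⟨f, r, hr, hmem⟩ := hA.exists_dual ht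
  obtain ⟨c, hc⟩ := hclass r hr
  have hinj : Function.Injective (c ∘ f) := fun ω ω' h => Finset.ext fun i => by
    rw [← hmem, ← hmem]
    exact ⟨hc _ _ h i, hc _ _ h.symm i⟩
  simpa using Fintype.card_le_of_injective _ hinj

end Shattering

section Ranges

variable {β ν τ J : Type*}

/-- The range `R_{y,G}`, where the tuple `P` plays the role of `y`. -/
def meetingRange (ι : (ν → ℝ) →ₗ[ℝ] MvPolynomial τ ℝ) (G : (β → Prop) → Prop)
    (P : J → MvPolynomial τ ℝ) : Set (β → ν → ℝ) :=
  {x | ({v | G fun i => 0 ≤ eval v (ι (x i))} ∩ {u | ∀ j, 0 < eval u (P j)}).Nonempty}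

variable [Fintype ν]

/-- The polynomial `ι (x i)` with the coefficients of `x` turned into variables. -/
noncomputable def genericPoly (ι : (ν → ℝ) →ₗ[ℝ] MvPolynomial τ ℝ) (i : β) :
    MvPolynomial (τ ⊕ β × ν) ℝ :=
  ∑ m, X (Sum.inr (i, m)) * rename Sum.inl (ι fun j => open Classical in if m = j then 1 else 0)

lemma eval_genericPoly (ι : (ν → ℝ) →ₗ[ℝ] MvPolynomial τ ℝ) (i : β) (v : τ → ℝ) (x : β × ν → ℝ) :
    eval (Sum.elim v x) (genericPoly ι i) = eval v (ι fun m => x (i, m)) := by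
  classical
  rw [LinearMap.pi_apply_eq_sum_univ ι fun m => x (i, m)]
  simp [genericPoly, eval_rename, smul_eval]

lemma totalDegree_genericPoly_le {ι : (ν → ℝ) →ₗ[ℝ] MvPolynomial τ ℝ} {b : ℕ}
    (hι : ∀ q, (ι q).totalDegree ≤ b) (i : β) : (genericPoly ι i).totalDegree ≤ b + 1 :=
  totalDegree_finsetSum_le fun m _ => (totalDegree_mul _ _).trans <| by
    rw [totalDegree_X, add_comm]
    exact Nat.succ_le_succ ((totalDegree_rename_le _ _).trans (hι _))

open Classical in
/-- The polynomials in `(v, x)` whose signs determine whether `v` witnesses that `x` lies in one of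
the ranges given by the tuples `P i`. -/
noncomputable def incidencePolys [Fintype β] [Fintype J] {T : Type*} [Fintype T]
    (ι : (ν → ℝ) →ₗ[ℝ] MvPolynomial τ ℝ) (P : T → J → MvPolynomial τ ℝ) :
    Finset (MvPolynomial (τ ⊕ β × ν) ℝ) :=
  Finset.univ.image (fun s : T × J => rename Sum.inl (P s.1 s.2)) ∪
    Finset.univ.image (genericPoly ι)

variable [Fintype β] [Fintype J] {T : Type*} [Fintype T] {ι : (ν → ℝ) →ₗ[ℝ] MvPolynomial τ ℝ}
  {P : T → J → MvPolynomial τ ℝ}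

lemma complexityLE_incidencePolys {b m L : ℕ} (hι : ∀ q, (ι q).totalDegree ≤ b)
    (hP : ∀ i j, (P i j).totalDegree ≤ m)
    (hcard : Fintype.card T * Fintype.card J + Fintype.card β ≤ L) (hm : m ≤ L) (hb : b + 1 ≤ L) :
    ComplexityLE (incidencePolys (β := β) ι P) L := by
  classical
  refine ⟨?_, fun p hp => ?_⟩
  · refine (Finset.card_union_le _ _).trans ((add_le_add Finset.card_image_le
      Finset.card_image_le).trans ?_)
    simpa using hcard
  · simp only [incidencePolys, Finset.mem_union, Finset.mem_image, Finset.mem_univ,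
      true_and] at hp
    rcases hp with ⟨s, rfl⟩ | ⟨i, rfl⟩
    · exact (totalDegree_rename_le _ _).trans ((hP _ _).trans hm)
    · exact (totalDegree_genericPoly_le hι i).trans hb

theorem exists_meetingRange_classes [Fintype τ] {L : ℕ} (hL : 2 ≤ L)
    (h : ComplexityLE (incidencePolys (β := β) ι P) L) (G : T → (β → Prop) → Prop) :
    ∃ c : (β → ν → ℝ) → Fin (L ^ 16 ^ (Fintype.card (β × ν) + Fintype.card τ)),
      ∀ x x', c x = c x' → ∀ i, x ∈ meetingRange ι (G i) (P i) →
        x' ∈ meetingRange ι (G i) (P i) := by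
  obtain ⟨c, hc⟩ := exists_sign_classes hL h
  refine ⟨fun x => c (Function.uncurry x), fun x x' hxx' i => ?_⟩
  rintro ⟨v, hG, hpos⟩
  obtain ⟨v', hv'⟩ := hc _ _ hxx' v
  have hgeneric : ∀ l, SignType.sign (eval v (ι (x l))) = SignType.sign (eval v' (ι (x' l))) :=
    fun l => by
      simpa [eval_genericPoly] using hv' (genericPoly ι l) (by simp [incidencePolys])
  have hP : ∀ j, SignType.sign (eval v (P i j)) = SignType.sign (eval v' (P i j)) := fun j => by
    simpa [eval_rename] using hv' (rename Sum.inl (P i j)) (by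
      simp [incidencePolys])
  have hnonneg : ∀ l, 0 ≤ eval v (ι (x l)) ↔ 0 ≤ eval v' (ι (x' l)) := fun l => by
    rw [← sign_nonneg_iff, hgeneric l, sign_nonneg_iff]
  refine ⟨v', ?_, fun j => ?_⟩
  · simpa only [Set.mem_ofPred_eq, hnonneg] using hG
  · rw [← sign_eq_one_iff, ← hP j, sign_eq_one_iff]
    exact hpos j

end Ranges

section Counting

lemma exists_pow_lt_two_pow (a s : ℕ) : ∃ K : ℕ, 0 < K ∧ (8 * (K + s)) ^ a < 2 ^ K := by
  have hlim : Filter.Tendsto (fun n : ℕ => (8 : ℝ) ^ a * 2 ^ s * ((n : ℝ) ^ a / 2 ^ n))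
      Filter.atTop (nhds 0) := by
    simpa using (tendsto_pow_const_div_const_pow_of_one_lt a one_lt_two).const_mul
      ((8 : ℝ) ^ a * 2 ^ s)
  obtain ⟨n, hsmall, hn⟩ :=
    ((hlim.eventually_lt_const one_pos).and (Filter.eventually_gt_atTop s)).exists
  obtain ⟨K, rfl⟩ := Nat.exists_eq_add_of_le' hn.le
  refine ⟨K, by omega, ?_⟩
  rw [← mul_div_assoc, div_lt_one (by positivity), pow_add (2 : ℝ) K s] at hsmall
  have hreal : (8 * ((K + s : ℕ) : ℝ)) ^ a < 2 ^ K := by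
    refine lt_of_mul_lt_mul_right ?_ (by positivity : (0 : ℝ) ≤ 2 ^ s)
    rw [mul_pow]
    linarith
  exact_mod_cast hreal

lemma pow_log_lt_two_pow {a s K m : ℕ} (hm : 2 ≤ m) (hK : (8 * (K + s)) ^ a < 2 ^ K) :
    ((K * Nat.log 2 m + s) * m) ^ a < 2 ^ (K * Nat.log 2 m) := by
  set l := Nat.log 2 m
  have hl : 1 ≤ l := Nat.log_pos one_lt_two hm
  have hm4 : m ≤ 4 ^ l :=
    calc m ≤ 2 ^ (l + 1) := (Nat.lt_pow_succ_log_self one_lt_two m).le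
      _ ≤ 2 ^ (2 * l) := Nat.pow_le_pow_right two_pos (by omega)
      _ = 4 ^ l := pow_mul 2 2 l
  have hlin : K * l + s ≤ (K + s) * 2 ^ l :=
    calc K * l + s ≤ K * 2 ^ l + s * 2 ^ l := add_le_add
          (Nat.mul_le_mul_left _ Nat.lt_two_pow_self.le) (Nat.le_mul_of_pos_right _ (by positivity))
      _ = (K + s) * 2 ^ l := by ring
  have hbase : (K * l + s) * m ≤ (8 * (K + s)) ^ l :=
    calc (K * l + s) * m ≤ ((K + s) * 2 ^ l) * 4 ^ l := Nat.mul_le_mul hlin hm4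
      _ = 8 ^ l * (K + s) := by rw [mul_assoc, ← mul_pow]; ring
      _ ≤ 8 ^ l * (K + s) ^ l := Nat.mul_le_mul_left _ (Nat.le_self_pow (by omega) _)
      _ = (8 * (K + s)) ^ l := (mul_pow _ _ _).symm
  calc ((K * l + s) * m) ^ a ≤ ((8 * (K + s)) ^ l) ^ a := Nat.pow_le_pow_left hbase a
    _ = ((8 * (K + s)) ^ a) ^ l := pow_right_comm _ _ _
    _ < (2 ^ K) ^ l := Nat.pow_lt_pow_left hK (by omega)
    _ = 2 ^ (K * l) := (pow_mul _ _ _).symm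

lemma le_two_pow_of_isLeast {d j D : ℕ} (hd : 1 ≤ d)
    (hD : IsLeast {m : ℕ | 0 < m ∧ 2 ^ j < Nat.choose (m + d) d} D) : D ≤ 2 ^ j := by
  refine hD.2 ⟨by positivity, ?_⟩
  calc 2 ^ j < (2 ^ j + 1).choose (2 ^ j) := by simp
    _ ≤ (2 ^ j + d).choose (2 ^ j) := Nat.choose_le_choose _ (by omega)
    _ = (2 ^ j + d).choose d := Nat.choose_symm_add

theorem exists_vcDimLE_meetingRange (b d N : ℕ) :
    ∃ K : ℕ, 0 < K ∧ ∀ k m : ℕ, 2 ≤ m → k ≤ m →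
      ∀ ι : (Fin N → ℝ) →ₗ[ℝ] MvPolynomial (Fin d) ℝ, (∀ q, (ι q).totalDegree ≤ b) →
      VCDimLE {r : Set (Fin b → Fin N → ℝ) | ∃ G, ∃ P : Fin k → MvPolynomial (Fin d) ℝ,
        (∀ j, (P j).totalDegree ≤ m) ∧ r = meetingRange ι G P} ((m : ℝ) ^ K) := by
  obtain ⟨K, hK, hlt⟩ := exists_pow_lt_two_pow (16 ^ (b * N + d)) (b + 2)
  refine ⟨K, hK, fun k m hm hkm ι hι A hA => ?_⟩
  by_contra! hcard
  set t := K * Nat.log 2 m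
  set L := (t + (b + 2)) * m
  have htA : 2 ^ t ≤ A.card :=
    calc 2 ^ t = (2 ^ Nat.log 2 m) ^ K := by rw [← pow_mul, mul_comm]
      _ ≤ m ^ K := Nat.pow_le_pow_left (Nat.pow_log_le_self 2 (by omega)) K
      _ ≤ A.card := by exact_mod_cast hcard.le
  refine (hA.two_pow_le (M := L ^ 16 ^ (b * N + d)) htA fun r hr => ?_).not_gt
    (pow_log_lt_two_pow hm hlt)
  have hbL : t + (b + 2) ≤ L := Nat.le_mul_of_pos_right _ (by omega)
  have hmL : m ≤ L := Nat.le_mul_of_pos_left _ (by omega)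
  choose G P hdeg hr using hr
  have hcomplexity : ComplexityLE (incidencePolys (β := Fin b) ι P) L :=
    complexityLE_incidencePolys hι hdeg (by simp only [Fintype.card_fin, L]; nlinarith)
      hmL (by omega)
  have hexponent : b * N + d = Fintype.card (Fin b × Fin N) + Fintype.card (Fin d) := by simp
  obtain ⟨c, hc⟩ := exists_meetingRange_classes (by omega) hcomplexity G
  rw [hexponent]
  exact ⟨c, by simpa only [hr] using hc⟩

end Counting

theorem vcDim_ranges_RyG_general (b d N : ℕ) (hd : 1 ≤ d) :
    ∃ C : ℝ, 0 < C ∧ ∀ k : ℕ, 1 ≤ k → ∀ D : ℝ, D = 2 ^ ((k : ℝ) / (d : ℝ)) →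
      ∀ ι : (Fin N → ℝ) →ₗ[ℝ] MvPolynomial (Fin d) ℝ, (∀ q, (ι q).totalDegree ≤ b) →
      ∀ V : Fin k → Set (MvPolynomial (Fin d) ℝ), (∀ j, ∀ p ∈ V j, p.totalDegree ≤ 2 ^ k) →
      VCDimLE {r : Set (Fin b → Fin N → ℝ) | ∃ (G : (Fin b → Prop) → Prop)
        (y : (j : Fin k) → V j), r = meetingRange ι G fun j => (y j : MvPolynomial (Fin d) ℝ)}
        (D ^ C) := by
  obtain ⟨K, hK, hvc⟩ := exists_vcDimLE_meetingRange b d N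
  refine ⟨d * K, by positivity, fun k hk D hD ι hι V hV => ?_⟩
  have hbound : D ^ ((d : ℝ) * K) = ((2 ^ k : ℕ) : ℝ) ^ K := by
    have hexp : (k : ℝ) / d * (d * K) = k * K := by field_simp
    rw [hD, ← Real.rpow_mul two_pos.le, hexp, Real.rpow_mul two_pos.le]
    simp
  rw [hbound]
  refine (hvc k (2 ^ k) (Nat.le_self_pow (by omega) 2) Nat.lt_two_pow_self.le ι hι).mono ?_
  rintro r ⟨G, y, rfl⟩
  exact ⟨G, fun j => y j, fun j => hV j _ (y j).2, rfl⟩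

/-- **VC dimension of the ranges `R_{y,G}`.** Fix `b, d, k ≥ 1` with `D = 2^{k/d} ≥ 2^b` and
subspaces `𝕍_1,…,𝕍_k` as in the definition of `𝕐_k`. A point `x = (q_1,…,q_b)` of
`𝕏 = (ℝ^{binom(b+d,d)})^b` is identified (via an injective linear map `ι` onto the polynomials
of degree at most `b`) with `Z_{x,G} = {v : G(ι(q_1)(v) ≥ 0,…,ι(q_b)(v) ≥ 0)}`, and each
`y ∈ 𝕐_k` with `S_y = {u : P_1(u) > 0,…,P_k(u) > 0}`. Then the range space on `𝕏` with ranges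
`R_{y,G} = {x : Z_{x,G} ∩ S_y ≠ ∅}`, over all `y ∈ 𝕐_k` and all Boolean functions `G`, has
VC dimension at most `D^C`, where `C = C(b,d)`. -/
theorem vcDim_ranges_RyG (b d : ℕ) (hb : 1 ≤ b) (hd : 1 ≤ d) :
    ∃ C : ℝ, 0 < C ∧
      ∀ (k : ℕ), 1 ≤ k →
      ∀ D : ℝ, D = 2 ^ ((k : ℝ) / (d : ℝ)) → (2 : ℝ) ^ b ≤ D →
      -- identification of coefficient vectors with the polynomials of degree at most `b`
      ∀ ι : (Fin (Nat.choose (b + d) d) → ℝ) →ₗ[ℝ] MvPolynomial (Fin d) ℝ,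
        Function.Injective ι →
        Set.range ι = {p : MvPolynomial (Fin d) ℝ | p.totalDegree ≤ b} →
      -- `Dj j` is the least positive integer with `binom(Dj j + d, d) > 2^{j-1}`
      ∀ Dj : Fin k → ℕ,
        (∀ j : Fin k,
          IsLeast {m : ℕ | 0 < m ∧ 2 ^ (j : ℕ) < Nat.choose (m + d) d} (Dj j)) →
      -- the `2^{j-1}`-dimensional subspaces `𝕍_j` of polynomials of degree at most `Dj j`
      ∀ V : Fin k → Submodule ℝ (MvPolynomial (Fin d) ℝ),
        (∀ j, Module.finrank ℝ (V j) = 2 ^ (j : ℕ)) →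
        (∀ j, ∀ p ∈ V j, p.totalDegree ≤ Dj j) →
      VCDimLE
        {r : Set (Fin b → Fin (Nat.choose (b + d) d) → ℝ) |
          ∃ (G : (Fin b → Prop) → Prop) (y : (j : Fin k) → V j),
            r = {x : Fin b → Fin (Nat.choose (b + d) d) → ℝ |
              ({v : Fin d → ℝ | G fun i => 0 ≤ eval v (ι (x i))} ∩
               {u : Fin d → ℝ | ∀ j : Fin k,
                  0 < eval u ((y j : MvPolynomial (Fin d) ℝ))}).Nonempty}}
        (D ^ C) := by
  obtain ⟨C, hC, hvc⟩ := vcDim_ranges_RyG_general b d (Nat.choose (b + d) d) hd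
  exact ⟨C, hC, fun k hk D hD _ ι _ hrange Dj hDj V _ hV =>
    hvc k hk D hD ι (fun q => hrange.subset ⟨q, rfl⟩) (fun j => V j) fun j p hp =>
      calc p.totalDegree ≤ Dj j := hV j p hp
        _ ≤ 2 ^ (j : ℕ) := le_two_pow_of_isLeast hd (hDj j)
        _ ≤ 2 ^ k := Nat.pow_le_pow_right two_pos j.2.le⟩
end

section
/- For every choice of positive integers b and d, there is a constant C = C(b,d) with the following property. Let C₀ be a positive integer, let S be a finite collection of semi-algebraic sets in ℝ^d, each of dimension at most r and complexity at most b, let k be a positive integer, and let D = 2^{k/d} with D ≥ 2^b. Fix any choice of the subspaces 𝕍_1,…,𝕍_k defining 𝕐_k. If B is a uniformly random subset of S of cardinality at least C·D^C, then with probability at least 1/2 the following holds: for every tuple (P_1,…,P_k) ∈ 𝕐_k that is a (k, D^{d−r}/C₀)-partitioning tuple for B, the realization of each of the 2^k realizable strict sign conditions of (P_1,…,P_k) intersects at most C·C₀·|S|·D^{r−d} elements of S. -/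
open MvPolynomial

/-- A set `S ⊆ ℝ^d` is semi-algebraic of complexity at most `b`. -/
def IsSemiAlgebraicOfComplexity (d b : ℕ) (S : Set (Fin d → ℝ)) : Prop :=
  ∃ (P : Fin b → MvPolynomial (Fin d) ℝ) (τ : Fin b → Bool) (φ : (Fin b → Prop) → Prop),
    (∀ i, (P i).totalDegree ≤ b) ∧
    S = {x | φ fun i => if τ i then eval x (P i) < 0 else eval x (P i) = 0}

/-- The realization, for `y = (P_1,…,P_k) ∈ 𝕐_k`, of the strict sign condition
`ν ∈ {−1,1}^k` (encoded by `Bool`, with `true ↦ +1`). -/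
def Realization {d k : ℕ} {V : Fin k → Submodule ℝ (MvPolynomial (Fin d) ℝ)}
    (y : (j : Fin k) → V j) (ν : Fin k → Bool) : Set (Fin d → ℝ) :=
  {u | ∀ j : Fin k, if ν j then 0 < eval u ((y j : MvPolynomial (Fin d) ℝ))
       else eval u ((y j : MvPolynomial (Fin d) ℝ)) < 0}

/-- `y = (P_1,…,P_k)` is a `(k,α)`-partitioning tuple for the finite family `B`: all `2^k`
strict sign conditions are realizable and the realization of each of them intersects at most
`|B|/α` sets from `B`. -/
def IsPartitioningTuple {d k : ℕ} {V : Fin k → Submodule ℝ (MvPolynomial (Fin d) ℝ)}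
    (y : (j : Fin k) → V j) (B : Finset (Set (Fin d → ℝ))) (α : ℝ) : Prop :=
  ∀ ν : Fin k → Bool, (Realization y ν).Nonempty ∧
    (Set.ncard {T | T ∈ B ∧ (T ∩ Realization y ν).Nonempty} : ℝ) ≤ (B.card : ℝ) / α

/-!
The realizations of the strict sign conditions of tuples in `∏ j, V j` are indexed by fewer than
`2 ^ k` real parameters, so they should cut out few subfamilies (*traces*) of a family `W` of
semi-algebraic sets: whether a realization meets a given set of the family is a projection of a
sign condition, and a Milnor–Thom type bound for projections makes the number of traces polynomial
in `#W`, with exponent `O(4 ^ k)`.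

The bound is obtained without quantifier elimination. Replacing the sign conditions by a
nonnegative polynomial `g y x` with slack variables, the existence of a zero of `g y` is detected
by comparing the minimum over `x` of `t * g y x + |x - c| ^ 2`, for a large `t`, with a level `θ`.
A point where this minimum equals `θ` is critical, so by Perron's theorem the parameters there
annihilate a polynomial of controlled degree. Hence distinct traces lead to disjoint open sets of
parameters whose frontiers lie in one hypersurface, and each bounded such set contains a solution
of `∇F = w` for a generic small `w`, again few in number by Perron's theorem.

The probabilistic half is double sampling. If a sample `B` meets some realization too rarely
compared to `S`, then a random extension of `B` by a further `#B / 7` sets still shows a clear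
imbalance with probability at least `ε`. Inside the extended family there are few traces, and by a
hypergeometric tail estimate each of them is that unbalanced only with exponentially small
probability.
-/

namespace EpsSampling

section Polynomials

variable {σ τ R : Type*} [CommSemiring R]

lemma totalDegree_bind₁_le (p : MvPolynomial σ R) {f : σ → MvPolynomial τ R} {n : ℕ}
    (hf : ∀ i, (f i).totalDegree ≤ n) : (bind₁ f p).totalDegree ≤ p.totalDegree * n := by
  rw [bind₁, aeval_def, eval₂]
  refine totalDegree_finsetSum_le fun m hm => ?_
  calc (algebraMap R (MvPolynomial τ R) (p.coeff m) * m.prod fun i e => f i ^ e).totalDegree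
      ≤ 0 + ∑ i ∈ m.support, (f i ^ m i).totalDegree :=
        (totalDegree_mul _ _).trans
          (add_le_add (by simp [algebraMap_eq]) (totalDegree_finsetProd _ _))
    _ ≤ ∑ i ∈ m.support, m i * n := by
        rw [zero_add]
        exact Finset.sum_le_sum fun i _ =>
          (totalDegree_pow _ _).trans (Nat.mul_le_mul_left _ (hf i))
    _ ≤ p.totalDegree * n := by
        rw [← Finset.sum_mul]
        exact Nat.mul_le_mul_right n (le_totalDegree hm)

lemma totalDegree_pderiv_le (i : σ) (p : MvPolynomial σ R) :
    (pderiv i p).totalDegree ≤ p.totalDegree := by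
  classical
  refine Finset.sup_le fun m hm => ?_
  rw [mem_support_iff, coeff_pderiv] at hm
  calc (m.sum fun _ e => e) ≤ ((m + Finsupp.single i 1).sum fun _ e => e) := by
        rw [Finsupp.sum_add_index' (by simp) (by simp)]
        exact Nat.le_add_right _ _
    _ ≤ p.totalDegree := le_totalDegree (mem_support_iff.2 (left_ne_zero_of_mul hm))

lemma finrank_restrictDegree [Nontrivial R] [Fintype σ] [StrongRankCondition R] (m : ℕ) :
    Module.finrank R (restrictDegree σ R m) = (m + 1) ^ Fintype.card σ := by
  classical
  set top : σ →₀ ℕ := Finsupp.equivFunOnFinite.symm fun _ => m with htop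
  have box : {n : σ →₀ ℕ | ∀ i, n i ≤ m} = (Finset.Iic top : Set (σ →₀ ℕ)) := by
    ext n
    simp [htop, Finsupp.le_def]
  calc Module.finrank R (restrictDegree σ R m)
      = Nat.card {n : σ →₀ ℕ | ∀ i, n i ≤ m} :=
        Module.finrank_eq_nat_card_basis (basisRestrictSupport R _)
    _ = ∏ i ∈ top.support, (top i + 1) := by
        rw [box, Nat.card_coe_set_eq, Set.ncard_coe_finset, Finsupp.card_Iic]
        simp only [Nat.card_Iic]
    _ = ∏ i, (top i + 1) :=
        Finset.prod_subset (Finset.subset_univ _) fun i _ hi => by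
          rw [Finsupp.notMem_support_iff.1 hi, zero_add]
    _ = (m + 1) ^ Fintype.card σ := by simp [htop]

end Polynomials

section Perron

variable {ι τ K : Type*} [Fintype ι] [Fintype τ] [Field K]

/- A dimension count: `bind₁ u` maps the polynomials of degree at most `A` in each of `m` variables
into those of degree at most `m * A * δ` in each of `N < m` variables. -/
theorem exists_bind₁_eq_zero (hcard : Fintype.card τ < Fintype.card ι)
    {u : ι → MvPolynomial τ K} {δ : ℕ} (hδ : 0 < δ) (hu : ∀ i, (u i).totalDegree ≤ δ) :
    ∃ h : MvPolynomial ι K, h ≠ 0 ∧ bind₁ u h = 0 ∧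
      h.totalDegree ≤ (Fintype.card ι * δ) ^ (Fintype.card τ + 1) := by
  set m := Fintype.card ι
  set N := Fintype.card τ
  set A := (m * δ) ^ N
  have degree_le : ∀ p ∈ restrictDegree ι K A, p.totalDegree ≤ m * A := fun p hp => by
    refine Finset.sup_le fun e he => ?_
    rw [Finsupp.sum_fintype _ _ fun _ => rfl]
    calc ∑ i, e i ≤ ∑ _i : ι, A := Finset.sum_le_sum fun i _ =>
          (mem_restrictDegree _ _ _).1 hp e he i
      _ = m * A := by simp [m]
  let φ : restrictDegree ι K A →ₗ[K] restrictDegree τ K (m * A * δ) :=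
    ((bind₁ u).toLinearMap.restrict fun p hp =>
      restrictTotalDegree_le_restrictDegree _ _ _ ((mem_restrictTotalDegree _ _ _).2 <|
        (totalDegree_bind₁_le p hu).trans (Nat.mul_le_mul_right δ (degree_le p hp))))
  have hφ : LinearMap.ker φ ≠ ⊥ := by
    apply LinearMap.ker_ne_bot_of_finrank_lt
    have hm : 0 < m := by omega
    calc Module.finrank K (restrictDegree τ K (m * A * δ))
        = (m * A * δ + 1) ^ N := finrank_restrictDegree _
      _ ≤ (m * δ * (A + 1)) ^ N :=
          Nat.pow_le_pow_left (by nlinarith [Nat.mul_pos hm hδ]) N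
      _ = A * (A + 1) ^ N := by rw [mul_pow]
      _ < (A + 1) ^ (N + 1) := by
          rw [pow_succ']
          exact Nat.mul_lt_mul_of_pos_right (Nat.lt_succ_self A) (by positivity)
      _ ≤ (A + 1) ^ m := Nat.pow_le_pow_right A.succ_pos hcard
      _ = Module.finrank K (restrictDegree ι K A) := (finrank_restrictDegree _).symm
  obtain ⟨⟨h, hh⟩, hker, h_ne⟩ := (Submodule.ne_bot_iff _).1 hφ
  refine ⟨h, fun h0 => h_ne (Subtype.ext h0), congrArg Subtype.val (LinearMap.mem_ker.1 hker), ?_⟩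
  calc h.totalDegree ≤ m * A := degree_le h hh
    _ ≤ m * δ * A := Nat.mul_le_mul_right A (Nat.le_mul_of_pos_right m hδ)
    _ = (m * δ) ^ (N + 1) := (pow_succ' _ _).symm

end Perron

section Fibres

open Topology

variable {σ τ K : Type*}

lemma eval_bind₁ [CommSemiring K] (f : σ → MvPolynomial τ K) (x : τ → K) (p : MvPolynomial σ K) :
    eval x (bind₁ f p) = eval (fun i => eval x (f i)) p :=
  eval₂Hom_bind₁ _ _ _ _

lemma encard_setOf_eval_elim_eq_zero_le [CommRing K] [IsDomain K]
    (p : MvPolynomial (Option σ) K) {x : Option σ → K} (hx : eval x p ≠ 0) :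
    {t | eval (fun o => o.elim t (x ∘ some)) p = 0}.encard ≤ p.totalDegree := by
  classical
  set q := (optionEquivLeft K σ p).map (eval (x ∘ some))
  have eval_q : ∀ t, eval (fun o => o.elim t (x ∘ some)) p = q.eval t := fun t =>
    optionEquivLeft_elim_eval K σ _ _ _
  have q_ne : q ≠ 0 := fun h0 => hx <| by
    have split_x : (fun o : Option σ => o.elim (x none) (x ∘ some)) = x := by
      funext o
      cases o <;> rfl
    rw [← split_x, eval_q, h0, Polynomial.eval_zero]
  calc {t | eval (fun o => o.elim t (x ∘ some)) p = 0}.encard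
      ≤ (q.roots.toFinset : Set K).encard :=
        Set.encard_le_encard fun t ht => by simpa [q_ne, ← eval_q] using ht
    _ ≤ p.totalDegree := by
        rw [Set.encard_coe_eq_coe_finsetCard]
        exact_mod_cast calc q.roots.toFinset.card ≤ q.natDegree :=
              (Multiset.toFinset_card_le _).trans q.card_roots'
          _ ≤ p.degreeOf none := by
              rw [← natDegree_optionEquivLeft]
              exact Polynomial.natDegree_map_le
          _ ≤ p.totalDegree := degreeOf_le_totalDegree p none

variable [NontriviallyNormedField K]

lemma dense_setOf_eval_ne_zero {p : MvPolynomial σ K} (hp : p ≠ 0) :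
    Dense {x : σ → K | eval x p ≠ 0} := by
  refine dense_iff_inter_open.2 fun U hU ⟨y, hy⟩ => ?_
  by_contra hempty
  obtain ⟨I, u, hu, hIU⟩ := isOpen_pi_iff.1 hU y hy
  classical
  refine hp (funext_set (fun i => if i ∈ I then u i else Set.univ) (fun i => ?_) fun x hx => ?_)
  · split_ifs with hi
    · exact infinite_of_mem_nhds (y i) ((hu i hi).1.mem_nhds (hu i hi).2)
    · exact Set.infinite_univ
  · rw [map_zero]
    by_contra hpx
    exact hempty ⟨x, hIU fun i hi => by simpa [Finset.mem_coe.1 hi] using hx i trivial, hpx⟩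

/-- Perron's bound for the degree of an algebraic relation between `n + 1` polynomials of degree
at most `δ` in `n` variables. -/
def perronBound (n δ : ℕ) : ℕ := ((n + 1) * δ) ^ (n + 1)

/- Each coordinate `X c` is algebraic over the `u i`, so over a generic point of the target it
takes few values. -/
theorem dense_setOf_encard_fibre_le [Fintype σ] {u : σ → MvPolynomial σ K} {δ : ℕ} (hδ : 0 < δ)
    (hu : ∀ i, (u i).totalDegree ≤ δ) :
    Dense {w : σ → K | {y | ∀ i, eval y (u i) = w i}.encard ≤
      (perronBound (Fintype.card σ) δ ^ Fintype.card σ : ℕ)} := by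
  have relation : ∀ c : σ, ∃ h : MvPolynomial (Option σ) K, h ≠ 0 ∧
      bind₁ (fun o : Option σ => o.elim (X c) u) h = 0 ∧
      h.totalDegree ≤ perronBound (Fintype.card σ) δ := fun c => by
    simpa [perronBound] using exists_bind₁_eq_zero (ι := Option σ) (τ := σ) (by simp) hδ
      (u := fun o => o.elim (X c) u) (by
        rintro (_ | i)
        exacts [(totalDegree_X _).trans_le hδ, hu i])
  choose h h_ne h_rel h_deg using relation
  have generic : Dense {x : Option σ → K | eval x (∏ c, h c) ≠ 0} :=
    dense_setOf_eval_ne_zero (Finset.prod_ne_zero_iff.2 fun c _ => h_ne c)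
  have restrict_surjective : Function.Surjective fun x : Option σ → K => x ∘ some := fun w =>
    ⟨fun o => o.elim 0 w, rfl⟩
  refine (restrict_surjective.denseRange.dense_image (by fun_prop) generic).mono ?_
  rintro _ ⟨x, hx, rfl⟩
  rw [Set.mem_ofPred_eq, map_prod, Finset.prod_ne_zero_iff] at hx
  calc {y | ∀ i, eval y (u i) = (x ∘ some) i}.encard
      ≤ (Set.univ.pi fun c => {t | eval (fun o => o.elim t (x ∘ some)) (h c) = 0}).encard :=
        Set.encard_le_encard fun y hy c _ => by
          have := congrArg (eval y) (h_rel c)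
          rw [eval_bind₁, map_zero] at this
          rw [Set.mem_ofPred_eq, ← this]
          congr 2 with o
          cases o
          · simp
          · exact (hy _).symm
    _ = ∏ c, {t | eval (fun o => o.elim t (x ∘ some)) (h c) = 0}.encard :=
        Set.encard_pi_eq_prod_encard
    _ ≤ ∏ _c : σ, (perronBound (Fintype.card σ) δ : ℕ∞) :=
        Finset.prod_le_prod' fun c hc => (encard_setOf_eval_elim_eq_zero_le _ (hx c hc)).trans
          (by exact_mod_cast h_deg c)
    _ = _ := by simp

end Fibres

section CriticalPoints

open Topology

variable {σ : Type*}

lemma hasDerivAt_eval_update {K : Type*} [NontriviallyNormedField K] [DecidableEq σ]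
    (p : MvPolynomial σ K) (x : σ → K) (c : σ) :
    HasDerivAt (fun t => eval (Function.update x c t) p) (eval x (pderiv c p)) (x c) := by
  induction p using MvPolynomial.induction_on with
  | C a => simpa using hasDerivAt_const (x c) a
  | add p q hp hq => simpa using hp.fun_add hq
  | mul_X p i hp =>
    have hX : HasDerivAt (fun t => Function.update x c t i) ((Pi.single c 1 : σ → K) i) (x c) :=
      hasDerivAt_pi.1 (hasDerivAt_update x c (x c)) i
    refine (HasDerivAt.congr_deriv (by simpa using hp.fun_mul hX)) ?_
    by_cases hi : i = c <;> simp [Derivation.leibniz, pderiv_X, hi] <;> ring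

lemma eval_pderiv_eq_zero_of_isLocalExtr_update [DecidableEq σ] {p : MvPolynomial σ ℝ}
    {x : σ → ℝ} {c : σ} (h : IsLocalExtr (fun t => eval (Function.update x c t) p) (x c)) :
    eval x (pderiv c p) = 0 :=
  h.hasDerivAt_eq_zero (hasDerivAt_eval_update p x c)

lemma eval_pderiv_eq_zero_of_isLocalExtr {p : MvPolynomial σ ℝ} {x : σ → ℝ}
    (h : IsLocalExtr (fun y => eval y p) x) (c : σ) : eval x (pderiv c p) = 0 := by
  classical
  have extr_at : IsExtrFilter (fun y => eval y p) (𝓝 x) (Function.update x c (x c)) := by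
    rwa [Function.update_eq_self]
  have tendsto_line : Filter.Tendsto (Function.update x c) (𝓝 (x c)) (𝓝 x) := by
    have hline : ContinuousAt (Function.update x c) (x c) := by fun_prop
    simpa using hline.tendsto
  exact eval_pderiv_eq_zero_of_isLocalExtr_update (extr_at.comp_tendsto tendsto_line)

lemma eventually_exists_eval_pderiv_eq_of_neg [Finite σ] {F : MvPolynomial σ ℝ} {U : Set (σ → ℝ)}
    (hU : IsOpen U) (hbdd : Bornology.IsBounded U) (hzero : ∀ y ∈ frontier U, eval y F = 0)
    {y₀ : σ → ℝ} (hy₀ : y₀ ∈ U) (hF : eval y₀ F < 0) :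
    ∀ᶠ w in 𝓝 (0 : σ → ℝ), ∃ y ∈ U, ∀ c, eval y (pderiv c F) = w c := by
  cases nonempty_fintype σ
  let tilt : (σ → ℝ) → MvPolynomial σ ℝ := fun w => F - ∑ c, C (w c) * X c
  have eval_tilt : ∀ w y, eval y (tilt w) = eval y F - ∑ c, w c * y c := by simp [tilt]
  have high_isOpen : IsOpen {z : (σ → ℝ) × (σ → ℝ) | eval y₀ (tilt z.1) < eval z.2 (tilt z.1)} := by
    simp only [eval_tilt]
    have := continuous_eval F
    exact isOpen_lt (by fun_prop) (by fun_prop)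
  have high_near : ∀ y ∈ frontier U, ∀ᶠ z : (σ → ℝ) × (σ → ℝ) in 𝓝 (0, y),
      eval y₀ (tilt z.1) < eval z.2 (tilt z.1) := fun y hy => by
    have low_at : eval y₀ (tilt 0) < eval y (tilt 0) := by simpa [eval_tilt, hzero y hy] using hF
    exact high_isOpen.mem_nhds low_at
  have hcompact : IsCompact (frontier U) :=
    hbdd.isCompact_closure.of_isClosed_subset isClosed_frontier frontier_subset_closure
  have frontier_high : ∀ᶠ w in 𝓝 (0 : σ → ℝ), ∀ y ∈ frontier U,
      eval y₀ (tilt w) < eval y (tilt w) :=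
    hcompact.eventually_forall_of_forall_eventually high_near
  filter_upwards [frontier_high] with w hw
  obtain ⟨y, hyU, hmin⟩ := hbdd.isCompact_closure.exists_isLocalMin_mem_open subset_closure
    (continuous_eval (tilt w)).continuousOn (subset_closure hy₀)
    (fun y hy => hw y (hU.frontier_eq ▸ hy)) hU
  refine ⟨y, hyU, fun c => ?_⟩
  classical
  have critical := eval_pderiv_eq_zero_of_isLocalExtr (Or.inl hmin) c
  simpa [tilt, pderiv_C_mul, pderiv_X, Pi.single_apply, sub_eq_zero] using critical

lemma eventually_exists_eval_pderiv_eq [Finite σ] {F : MvPolynomial σ ℝ} {U : Set (σ → ℝ)}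
    (hU : IsOpen U) (hbdd : Bornology.IsBounded U) (hzero : ∀ y ∈ frontier U, eval y F = 0)
    {y₀ : σ → ℝ} (hy₀ : y₀ ∈ U) (hF : eval y₀ F ≠ 0) :
    ∀ᶠ w in 𝓝 (0 : σ → ℝ), ∃ y ∈ U, ∀ c, eval y (pderiv c F) = w c := by
  rcases hF.lt_or_gt with hneg | hpos
  · exact eventually_exists_eval_pderiv_eq_of_neg hU hbdd hzero hy₀ hneg
  · have tendsto_neg : Filter.Tendsto Neg.neg (𝓝 (0 : σ → ℝ)) (𝓝 0) := by
      simpa using (continuous_neg (G := σ → ℝ)).tendsto 0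
    have critical_neg := tendsto_neg.eventually <|
      eventually_exists_eval_pderiv_eq_of_neg (F := -F) hU hbdd (by simpa using hzero) hy₀
        (by simpa using hpos)
    simpa using critical_neg

theorem card_le_of_pairwise_disjoint_isOpen [Fintype σ] {A : Type*} [Fintype A]
    {F : MvPolynomial σ ℝ} {δ : ℕ} (hδ : 0 < δ) (hFδ : F.totalDegree ≤ δ) {U : A → Set (σ → ℝ)}
    (hU : ∀ a, IsOpen (U a)) (hbdd : ∀ a, Bornology.IsBounded (U a))
    (hzero : ∀ a, ∀ y ∈ frontier (U a), eval y F = 0) (hne : ∀ a, ∃ y ∈ U a, eval y F ≠ 0)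
    (hdisj : Pairwise (Function.onFun Disjoint U)) :
    Fintype.card A ≤ perronBound (Fintype.card σ) δ ^ Fintype.card σ := by
  have critical : ∀ᶠ w in 𝓝 (0 : σ → ℝ), ∀ a, ∃ y ∈ U a, ∀ c, eval y (pderiv c F) = w c :=
    Filter.eventually_all.2 fun a =>
      let ⟨_, hyU, hy⟩ := hne a
      eventually_exists_eval_pderiv_eq (hU a) (hbdd a) (hzero a) hyU hy
  obtain ⟨w, hw_fibre, hw⟩ := (dense_setOf_encard_fibre_le hδ fun c =>
    (totalDegree_pderiv_le c F).trans hFδ).inter_nhds_nonempty critical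
  choose y hyU hy using hw
  have y_injective : Function.Injective y := fun a a' h => by
    by_contra hne'
    exact Set.disjoint_left.1 (hdisj hne') (hyU a) (h ▸ hyU a')
  have card_range : (Fintype.card A : ℕ∞) ≤
      (perronBound (Fintype.card σ) δ ^ Fintype.card σ : ℕ) := by
    rw [← ENat.card_eq_coe_fintype_card]
    exact y_injective.encard_range.trans <|
      (Set.encard_le_encard (Set.range_subset_iff.2 hy)).trans hw_fibre
  exact_mod_cast card_range

end CriticalPoints

section Cells

open Topology

variable {σ : Type*} [Fintype σ]

lemma isCompact_setOf_sum_sq_le (ρ : ℝ) : IsCompact {y : σ → ℝ | ∑ c, y c ^ 2 ≤ ρ} := by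
  refine Metric.isCompact_of_isClosed_isBounded (isClosed_le (by fun_prop) continuous_const) <|
    (Metric.isBounded_closedBall (x := (0 : σ → ℝ)) (r := √ρ)).subset fun y hy => ?_
  rw [mem_closedBall_zero_iff, pi_norm_le_iff_of_nonneg (Real.sqrt_nonneg _)]
  exact fun c => Real.abs_le_sqrt <| (Finset.single_le_sum (f := fun c => y c ^ 2)
    (fun c _ => sq_nonneg (y c)) (Finset.mem_univ c)).trans hy

variable {A : Type*} [Fintype A]

/- Multiplying `F` by `ρ - ∑ yᵢ²` cuts the sets down to a bounded ball. -/
theorem card_le_of_pairwise_disjoint_of_frontier {F : MvPolynomial σ ℝ} (hF : F ≠ 0) {δ : ℕ}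
    (hFδ : F.totalDegree ≤ δ) {U : A → Set (σ → ℝ)} (hU : ∀ a, IsOpen (U a))
    (hne : ∀ a, (U a).Nonempty) (hzero : ∀ a, ∀ y ∈ frontier (U a), eval y F = 0)
    (hdisj : Pairwise (Function.onFun Disjoint U)) :
    Fintype.card A ≤ perronBound (Fintype.card σ) (δ + 2) ^ Fintype.card σ := by
  choose Y hY using hne
  let sq : (σ → ℝ) → ℝ := fun y => ∑ c, y c ^ 2
  have continuous_sq : Continuous sq := by fun_prop
  obtain ⟨ρ, sq_lt, ρ_pos⟩ : ∃ ρ, (∀ a, sq (Y a) < ρ) ∧ 0 < ρ :=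
    ((Filter.eventually_all.2 fun a => Filter.eventually_gt_atTop (sq (Y a))).and
      (Filter.eventually_gt_atTop 0)).exists
  let ball : Set (σ → ℝ) := {y | sq y < ρ}
  have ball_isOpen : IsOpen ball := isOpen_lt continuous_sq continuous_const
  have ball_isBounded : Bornology.IsBounded ball :=
    (isCompact_setOf_sum_sq_le ρ).isBounded.subset fun _ hy => LT.lt.le (α := ℝ) hy
  let N : MvPolynomial σ ℝ := C ρ - ∑ c, X c ^ 2
  have eval_N : ∀ y, eval y N = ρ - sq y := by simp [N, sq]
  have FN_ne : F * N ≠ 0 := by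
    refine mul_ne_zero hF fun hN => ?_
    have eval_N_zero : (0 : ℝ) = ρ - sq 0 := by rw [← eval_N 0, hN, map_zero]
    simp [sq, ρ_pos.ne] at eval_N_zero
  have FN_degree : (F * N).totalDegree ≤ δ + 2 := by
    refine (totalDegree_mul _ _).trans (add_le_add hFδ ((totalDegree_sub _ _).trans ?_))
    exact max_le (by simp) (totalDegree_finsetSum_le fun c _ => by simp)
  refine card_le_of_pairwise_disjoint_isOpen (by lia) FN_degree (U := fun a => U a ∩ ball)
    (fun a => (hU a).inter ball_isOpen) (fun a => ball_isBounded.subset Set.inter_subset_right)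
    (fun a y hy => ?_) (fun a => ?_)
    fun a a' h => (hdisj h).mono Set.inter_subset_left Set.inter_subset_left
  · rw [map_mul, mul_eq_zero, eval_N, sub_eq_zero]
    rcases frontier_inter_subset _ _ hy with ⟨hy, _⟩ | ⟨_, hy⟩
    · exact Or.inl (hzero a y hy)
    · exact Or.inr (frontier_lt_subset_eq continuous_sq continuous_const hy).symm
  · exact (dense_setOf_eval_ne_zero FN_ne).inter_open_nonempty _ ((hU a).inter ball_isOpen)
      ⟨Y a, hY a, sq_lt a⟩

theorem card_le_of_injective_pattern {I : Type*} [Fintype I] {h : I → MvPolynomial σ ℝ}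
    (h_ne : ∀ i, h i ≠ 0) {δ : ℕ} (hδ : ∀ i, (h i).totalDegree ≤ δ) {P N : I → Set (σ → ℝ)}
    (hP : ∀ i, IsOpen (P i)) (hN : ∀ i, IsOpen (N i)) (hPN : ∀ i, Disjoint (P i) (N i))
    (hcover : ∀ i y, eval y (h i) ≠ 0 → y ∈ P i ∪ N i) {Y : A → σ → ℝ}
    (hY : ∀ a i, Y a ∈ P i ∪ N i) (hinj : Function.Injective fun a => {i | Y a ∈ P i}) :
    Fintype.card A ≤
      perronBound (Fintype.card σ) (Fintype.card I * δ + 2) ^ Fintype.card σ := by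
  classical
  let side : A → I → Set (σ → ℝ) := fun a i => if Y a ∈ P i then P i else N i
  have side_isOpen : ∀ a i, IsOpen (side a i) := fun a i => by
    by_cases hi : Y a ∈ P i <;> simp only [side, hi, if_true, if_false, hP, hN]
  have mem_side : ∀ a i, Y a ∈ side a i := fun a i => by
    by_cases hi : Y a ∈ P i
    · simp only [side, hi, if_true]
    · simpa only [side, hi, if_false] using (hY a i).resolve_left hi
  have mem_side_of_closure : ∀ a i y, eval y (h i) ≠ 0 → y ∈ closure (side a i) → y ∈ side a i := by
    intro a i y hy hyc
    by_cases hi : Y a ∈ P i <;> simp only [side, hi, if_true, if_false] at hyc ⊢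
    · exact (hcover i y hy).resolve_right (Set.disjoint_left.1 ((hPN i).closure_left (hN i)) hyc)
    · exact (hcover i y hy).resolve_left
        (Set.disjoint_left.1 ((hPN i).symm.closure_left (hP i)) hyc)
  refine card_le_of_pairwise_disjoint_of_frontier (F := ∏ i, h i)
    (Finset.prod_ne_zero_iff.2 fun i _ => h_ne i)
    ((totalDegree_finsetProd _ _).trans (Finset.sum_le_card_nsmul _ _ δ fun i _ => hδ i))
    (U := fun a => ⋂ i, side a i) (fun a => isOpen_iInter_of_finite (side_isOpen a))
    (fun a => ⟨Y a, Set.mem_iInter.2 (mem_side a)⟩) (fun a y hy => ?_) fun a a' haa' => ?_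
  · rw [map_prod]
    by_contra hprod
    have h_ne_zero := Finset.prod_ne_zero_iff.1 hprod
    rw [(isOpen_iInter_of_finite (side_isOpen a)).frontier_eq] at hy
    exact hy.2 <| Set.mem_iInter.2 fun i =>
      mem_side_of_closure a i y (h_ne_zero i (Finset.mem_univ i))
        (closure_mono (Set.iInter_subset _ i) hy.1)
  · obtain ⟨i, hi⟩ : ∃ i, ¬ (Y a ∈ P i ↔ Y a' ∈ P i) := by
      by_contra! hsame
      exact haa' (hinj (Set.ext hsame))
    have sides_disjoint : Disjoint (side a i) (side a' i) := by
      by_cases h1 : Y a ∈ P i <;> by_cases h2 : Y a' ∈ P i <;> simp_all [side, disjoint_comm]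
    exact sides_disjoint.mono (Set.iInter_subset _ i) (Set.iInter_subset _ i)

end Cells

section Projection

open Topology

variable {σ τ : Type*} [Fintype τ]

/-- The Tikhonov regularization `w ↦ g(y, c + w) + ∑ wₑ²` of `z ↦ g(y, z)` around `c`. The
parameter `π` packs a level `θ = π none`, compared with the values of the regularization below,
together with `y = π (some (inl ·))` and `c = π (some (inr ·))`. -/
noncomputable def regularization (g : MvPolynomial (σ ⊕ τ) ℝ) (π : Option (σ ⊕ τ) → ℝ)
    (w : τ → ℝ) : ℝ :=
  eval (Sum.elim (fun i => π (some (.inl i))) fun e => π (some (.inr e)) + w e) g + ∑ e, w e ^ 2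

/-- The parameters whose level exceeds some value of the regularization. -/
def aboveMin (g : MvPolynomial (σ ⊕ τ) ℝ) : Set (Option (σ ⊕ τ) → ℝ) :=
  {π | ∃ w, regularization g π w < π none}

/-- The parameters whose level is below all values of the regularization. -/
def belowMin (g : MvPolynomial (σ ⊕ τ) ℝ) : Set (Option (σ ⊕ τ) → ℝ) :=
  {π | ∀ w, π none < regularization g π w}

lemma continuous_regularization (g : MvPolynomial (σ ⊕ τ) ℝ) :
    Continuous fun z : (Option (σ ⊕ τ) → ℝ) × (τ → ℝ) => regularization g z.1 z.2 := by
  refine ((continuous_eval g).comp (continuous_pi fun i => ?_)).add (by fun_prop)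
  cases i <;> simp only [Sum.elim_inl, Sum.elim_inr] <;> fun_prop

lemma isOpen_aboveMin (g : MvPolynomial (σ ⊕ τ) ℝ) : IsOpen (aboveMin g) := by
  have below_isOpen : IsOpen {z : (Option (σ ⊕ τ) → ℝ) × (τ → ℝ) |
      regularization g z.1 z.2 < z.1 none} :=
    isOpen_lt (continuous_regularization g) (by fun_prop)
  have : aboveMin g = Prod.fst '' {z : (Option (σ ⊕ τ) → ℝ) × (τ → ℝ) |
      regularization g z.1 z.2 < z.1 none} := by
    ext
    simp [aboveMin]
  rw [this]
  exact isOpenMap_fst _ below_isOpen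

lemma isOpen_belowMin {g : MvPolynomial (σ ⊕ τ) ℝ} (hg : ∀ x, 0 ≤ eval x g) :
    IsOpen (belowMin g) := by
  refine isOpen_iff_eventually.2 fun π hπ => ?_
  have level_lt : ∀ᶠ π' in 𝓝 π, π' none < π none + 1 :=
    ((continuous_apply none).tendsto π).eventually (gt_mem_nhds (lt_add_one _))
  have below_isOpen : IsOpen {z : (Option (σ ⊕ τ) → ℝ) × (τ → ℝ) |
      z.1 none < regularization g z.1 z.2} :=
    isOpen_lt (by fun_prop) (continuous_regularization g)
  have below_on_compact : ∀ᶠ π' in 𝓝 π, ∀ w ∈ {w : τ → ℝ | ∑ e, w e ^ 2 ≤ π none + 1},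
      π' none < regularization g π' w :=
    (isCompact_setOf_sum_sq_le _).eventually_forall_of_forall_eventually fun w _ =>
      below_isOpen.mem_nhds (hπ w)
  filter_upwards [level_lt, below_on_compact] with π' hlevel hcompact w
  by_cases hw : ∑ e, w e ^ 2 ≤ π none + 1
  · exact hcompact w hw
  · have := hg (Sum.elim (fun i => π' (some (.inl i))) fun e => π' (some (.inr e)) + w e)
    unfold regularization
    linarith

lemma disjoint_aboveMin_belowMin (g : MvPolynomial (σ ⊕ τ) ℝ) :
    Disjoint (aboveMin g) (belowMin g) :=
  Set.disjoint_left.2 fun _ ⟨w, hw⟩ hbelow => lt_asymm hw (hbelow w)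

lemma two_mul_eq_neg_eval_pderiv_of_isMin {g : MvPolynomial (σ ⊕ τ) ℝ}
    {π : Option (σ ⊕ τ) → ℝ} {w : τ → ℝ}
    (hmin : ∀ w', regularization g π w ≤ regularization g π w') (e : τ) :
    2 * w e = - eval (Sum.elim (fun i => π (some (.inl i))) fun e => π (some (.inr e)) + w e)
      (pderiv (.inr e) g) := by
  classical
  set y : σ → ℝ := fun i => π (some (.inl i))
  set c : τ → ℝ := fun e => π (some (.inr e))
  let G : MvPolynomial (σ ⊕ τ) ℝ := g + ∑ e, (X (.inr e) - C (c e)) ^ 2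
  have eval_G : ∀ z, eval (Sum.elim y z) G = regularization g π (z - c) := fun z => by
    simp [G, regularization, y, c]
  have isMin : IsLocalExtr (fun t => eval (Function.update (Sum.elim y (c + w)) (.inr e) t) G)
      (Sum.elim y (c + w) (.inr e)) := Or.inl <| Filter.Eventually.of_forall fun t => by
    simp only [Sum.update_elim_inr, Function.update_eq_self, eval_G, Sum.elim_inr]
    simpa using hmin _
  have critical := eval_pderiv_eq_zero_of_isLocalExtr_update isMin
  simp only [G, map_add, map_sum, Derivation.leibniz_pow, Nat.add_one_sub_one, pow_one, map_sub,
    pderiv_X, Pi.single_apply, Sum.inr.injEq, derivation_C, sub_zero, smul_eq_mul, mul_ite, mul_one,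
    mul_zero, smul_ite, nsmul_eq_mul, Nat.cast_ofNat, Finset.sum_ite_eq',
    Finset.mem_univ, ↓reduceIte, map_mul, eval_ofNat, eval_X, Sum.elim_inr, Pi.add_apply, eval_C,
    add_sub_cancel_left] at critical
  change _ = -eval (Sum.elim y (c + w)) _
  linarith

lemma exists_eliminant [Fintype σ] (g : MvPolynomial (σ ⊕ τ) ℝ) {δ : ℕ} (hδ : 0 < δ)
    (hg : g.totalDegree ≤ δ) :
    ∃ h : MvPolynomial (Option (σ ⊕ τ)) ℝ, h ≠ 0 ∧
      h.totalDegree ≤ perronBound (Fintype.card (σ ⊕ τ)) (2 * δ) ∧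
      ∀ π, eval π h ≠ 0 → π ∈ aboveMin g ∪ belowMin g := by
  let u : Option (σ ⊕ τ) → MvPolynomial (σ ⊕ τ) ℝ
    | none => g + ∑ e : τ, C (1 / 4) * pderiv (.inr e) g ^ 2
    | some (.inl i) => X (.inl i)
    | some (.inr e) => X (.inr e) + C (1 / 2) * pderiv (.inr e) g
  have pderiv_le : ∀ e : τ, (pderiv (.inr e) g).totalDegree ≤ δ := fun e =>
    (totalDegree_pderiv_le _ g).trans hg
  have C_mul_le : ∀ (a : ℝ) (p : MvPolynomial (σ ⊕ τ) ℝ), (C a * p).totalDegree ≤ p.totalDegree :=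
    fun a p => by simpa using totalDegree_mul (C a) p
  have hu : ∀ o, (u o).totalDegree ≤ 2 * δ := by
    rintro (_ | i | e)
    · refine (totalDegree_add _ _).trans
        (max_le (by omega) (totalDegree_finsetSum_le fun e _ => ?_))
      exact (C_mul_le _ _).trans ((totalDegree_pow _ 2).trans (Nat.mul_le_mul_left 2 (pderiv_le e)))
    · exact (totalDegree_X _).trans_le (by omega)
    · refine (totalDegree_add _ _).trans (max_le ((totalDegree_X _).trans_le (by omega)) ?_)
      exact (C_mul_le _ _).trans ((pderiv_le e).trans (by omega))
  obtain ⟨h, h_ne, h_rel, h_deg⟩ := exists_bind₁_eq_zero (by simp) (by omega) hu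
  refine ⟨h, h_ne, by simpa [perronBound] using h_deg, fun π hπ => ?_⟩
  by_contra hmem
  simp only [Set.mem_union, aboveMin, belowMin, Set.mem_ofPred_eq, not_or, not_exists, not_forall,
    not_lt] at hmem
  obtain ⟨level_le, w, le_level⟩ := hmem
  have gradient := two_mul_eq_neg_eval_pderiv_of_isMin fun w' => le_level.trans (level_le w')
  have level_eq := (level_le w).antisymm le_level
  unfold regularization at level_eq
  set x : σ ⊕ τ → ℝ := Sum.elim (fun i => π (some (.inl i))) fun e => π (some (.inr e)) + w e
  have eval_u : (fun o => eval x (u o)) = π := by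
    funext o
    rcases o with _ | i | e
    · have quarter_sq : ∀ e, 1 / 4 * eval x (pderiv (.inr e) g) ^ 2 = w e ^ 2 := fun e => by
        rw [← neg_sq, ← gradient e]
        ring
      simp only [u, map_add, map_sum, map_mul, map_pow, eval_C, quarter_sq, level_eq]
    · simp only [u, eval_X, x, Sum.elim_inl]
    · have half : 1 / 2 * eval x (pderiv (.inr e) g) = -w e := by linarith [gradient e]
      simp only [u, map_add, map_mul, eval_C, eval_X, half]
      simp only [x, Sum.elim_inr, add_neg_cancel_right]
  rw [← eval_u, ← eval_bind₁, h_rel, map_zero] at hπ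
  exact hπ rfl

lemma eventually_forall_lt_mul_add_sum_sq {f : (τ → ℝ) → ℝ} (hf : Continuous f)
    (hpos : ∀ z, 0 < f z) (ρ : ℝ) :
    ∀ᶠ t in Filter.atTop, ∀ z, ρ < t * f z + ∑ e, z e ^ 2 := by
  rcases Set.eq_empty_or_nonempty {z : τ → ℝ | ∑ e, z e ^ 2 ≤ ρ} with hempty | hne
  · filter_upwards [Filter.eventually_ge_atTop 0] with t ht z
    have : ρ < ∑ e, z e ^ 2 := not_le.1 (Set.eq_empty_iff_forall_notMem.1 hempty z)
    linarith [mul_nonneg ht (hpos z).le]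
  · obtain ⟨z₀, _, hz₀⟩ := (isCompact_setOf_sum_sq_le ρ).exists_isMinOn hne hf.continuousOn
    filter_upwards [Filter.eventually_gt_atTop (ρ / f z₀), Filter.eventually_ge_atTop 0]
      with t ht ht₀ z
    by_cases hz : ∑ e, z e ^ 2 ≤ ρ
    · have : ρ < t * f z₀ := (div_lt_iff₀ (hpos z₀)).1 ht
      have := mul_le_mul_of_nonneg_left (isMinOn_iff.1 hz₀ z hz) ht₀
      have : 0 ≤ ∑ e, z e ^ 2 := Finset.sum_nonneg fun e _ => sq_nonneg _
      linarith
    · linarith [mul_nonneg ht₀ (hpos z).le]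

lemma exists_forall_mem_aboveMin_or_belowMin {I A : Type*} [Finite I] [Finite A]
    {g : I → MvPolynomial (σ ⊕ τ) ℝ} (hg : ∀ i x, 0 ≤ eval x (g i)) (Y : A → σ → ℝ) :
    ∃ (t : ℝ) (π : A → Option (σ ⊕ τ) → ℝ), 0 ≤ t ∧ ∀ a i,
      ((∃ z, eval (Sum.elim (Y a) z) (g i) = 0) → π a ∈ aboveMin (C t * g i)) ∧
      ((¬∃ z, eval (Sum.elim (Y a) z) (g i) = 0) → π a ∈ belowMin (C t * g i)) := by
  have regularization_eq : ∀ t ρ a i z,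
      regularization (C t * g i) (fun o => o.elim ρ (Sum.elim (Y a) 0)) z =
        t * eval (Sum.elim (Y a) z) (g i) + ∑ e, z e ^ 2 := by
    simp [regularization]
  obtain ⟨ρ, hρ⟩ : ∃ ρ : ℝ, ∀ a i, (∃ z, eval (Sum.elim (Y a) z) (g i) = 0) →
      ∃ z, eval (Sum.elim (Y a) z) (g i) = 0 ∧ ∑ e, z e ^ 2 < ρ := by
    refine Filter.Eventually.exists (f := Filter.atTop) (Filter.eventually_all.2 fun a =>
      Filter.eventually_all.2 fun i => Filter.eventually_imp_distrib_left.2 fun ⟨z, hz⟩ => ?_)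
    filter_upwards [Filter.eventually_gt_atTop (∑ e, z e ^ 2)] with ρ hρ using ⟨z, hz, hρ⟩
  obtain ⟨t, ht, t_nonneg⟩ : ∃ t : ℝ, (∀ a i, (¬∃ z, eval (Sum.elim (Y a) z) (g i) = 0) →
      ∀ z : τ → ℝ, ρ < t * eval (Sum.elim (Y a) z) (g i) + ∑ e, z e ^ 2) ∧ 0 ≤ t := by
    refine ((Filter.eventually_all.2 fun a => Filter.eventually_all.2 fun i =>
      Filter.eventually_imp_distrib_left.2 fun hz => ?_).and
        (Filter.eventually_ge_atTop 0)).exists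
    have continuous_slice : Continuous fun z : τ → ℝ => (Sum.elim (Y a) z : σ ⊕ τ → ℝ) := by
      refine continuous_pi fun j => ?_
      cases j <;> simp only [Sum.elim_inl, Sum.elim_inr] <;> fun_prop
    exact eventually_forall_lt_mul_add_sum_sq ((continuous_eval (g i)).comp continuous_slice)
      (fun z => (hg i _).lt_of_ne fun h0 => hz ⟨z, h0.symm⟩) ρ
  refine ⟨t, fun a o => o.elim ρ (Sum.elim (Y a) 0), t_nonneg, fun a i => ⟨fun hz => ?_, ?_⟩⟩
  · obtain ⟨z, hz, hlt⟩ := hρ a i hz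
    refine ⟨z, ?_⟩
    rw [regularization_eq, hz, mul_zero, zero_add]
    exact hlt
  · intro hz z
    rw [regularization_eq]
    exact ht a i hz z

/-- The bound of `card_le_of_injective_projection` for `w` zero sets of polynomials of degree at
most `δ` in `m` variables, parameters and projected variables together. -/
def projectionBound (m δ w : ℕ) : ℕ :=
  perronBound (m + 1) (w * perronBound m (2 * δ) + 2) ^ (m + 1)

theorem card_le_of_injective_projection [Fintype σ] {I A : Type*} [Fintype I] [Fintype A]
    {g : I → MvPolynomial (σ ⊕ τ) ℝ} (hg : ∀ i x, 0 ≤ eval x (g i)) {δ : ℕ} (hδ : 0 < δ)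
    (hgδ : ∀ i, (g i).totalDegree ≤ δ) {Y : A → σ → ℝ}
    (hinj : Function.Injective fun a => {i | ∃ z, eval (Sum.elim (Y a) z) (g i) = 0}) :
    Fintype.card A ≤ projectionBound (Fintype.card (σ ⊕ τ)) δ (Fintype.card I) := by
  obtain ⟨t, π, ht, hπ⟩ := exists_forall_mem_aboveMin_or_belowMin hg Y
  have degree_le : ∀ i, (C t * g i).totalDegree ≤ δ := fun i => by
    simpa using (totalDegree_mul (C t) (g i)).trans (Nat.add_le_add_left (hgδ i) _)
  have nonneg : ∀ i x, 0 ≤ eval x (C t * g i) := fun i x => by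
    simpa using mul_nonneg ht (hg i x)
  choose h h_ne h_deg h_cover using fun i => exists_eliminant (C t * g i) hδ (degree_le i)
  have pattern_eq : ∀ a, {i | π a ∈ aboveMin (C t * g i)} =
      {i | ∃ z, eval (Sum.elim (Y a) z) (g i) = 0} := fun a => by
    ext i
    refine ⟨fun habove => by_contra fun hz => ?_, (hπ a i).1⟩
    exact (disjoint_aboveMin_belowMin _).notMem_of_mem_left habove ((hπ a i).2 hz)
  simpa [projectionBound] using card_le_of_injective_pattern (Y := π) h_ne h_deg
    (fun i => isOpen_aboveMin (C t * g i)) (fun i => isOpen_belowMin (nonneg i))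
    (fun i => disjoint_aboveMin_belowMin _) h_cover
    (fun a i => (em _).imp (hπ a i).1 (hπ a i).2)
    (by simpa only [pattern_eq] using hinj)

end Projection

section SignPatterns

variable {σ τ κ : Type*} [Fintype κ]

lemma exists_mul_sq_eq_iff_sign_eq {q : ℝ} {s : SignType} :
    (∃ t : ℝ, q * (if s = 0 then 1 else t ^ 2) = s) ↔ SignType.sign q = s := by
  rcases lt_trichotomy q 0 with hq | rfl | hq
  · rw [sign_neg hq]
    cases s with
    | zero => simpa using hq.ne
    | neg =>
      have solution : q * √(-q⁻¹) ^ 2 = -1 := by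
        rw [Real.sq_sqrt (by simpa using hq.le), mul_neg, mul_inv_cancel₀ hq.ne]
      simpa using ⟨_, solution⟩
    | pos => simpa using fun t => (by nlinarith [sq_nonneg t] : q * t ^ 2 ≠ 1)
  · cases s <;> simp
  · rw [sign_pos hq]
    cases s with
    | zero => simpa using hq.ne'
    | neg => simpa using fun t => (by nlinarith [sq_nonneg t] : q * t ^ 2 ≠ -1)
    | pos =>
      have solution : q * √q⁻¹ ^ 2 = 1 := by
        rw [Real.sq_sqrt (by simpa using hq.le), mul_inv_cancel₀ hq.ne']
      simpa using ⟨_, solution⟩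

/-- A nonnegative polynomial whose vanishing says that the polynomials `p l` have the signs `s l`:
a condition `p l ≠ 0` of given sign is encoded by an extra variable `t l` as
`p l * t l ^ 2 = s l`. -/
noncomputable def signPenalty (p : κ → MvPolynomial (σ ⊕ τ) ℝ) (s : κ → SignType) :
    MvPolynomial (σ ⊕ (τ ⊕ κ)) ℝ :=
  ∑ l, (rename (Sum.map id Sum.inl) (p l) * (if s l = 0 then 1 else X (.inr (.inr l)) ^ 2)
    - C (s l : ℝ)) ^ 2

lemma eval_signPenalty (p : κ → MvPolynomial (σ ⊕ τ) ℝ) (s : κ → SignType)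
    (y : σ → ℝ) (x : τ → ℝ) (t : κ → ℝ) :
    eval (Sum.elim y (Sum.elim x t)) (signPenalty p s) =
      ∑ l, (eval (Sum.elim y x) (p l) * (if s l = 0 then 1 else t l ^ 2) - (s l : ℝ)) ^ 2 := by
  have restrict_eq : Sum.elim y (Sum.elim x t) ∘ Sum.map id Sum.inl = Sum.elim y x := by
    ext (i | i) <;> rfl
  simp [signPenalty, eval_rename, restrict_eq, apply_ite (eval _)]

lemma eval_signPenalty_nonneg (p : κ → MvPolynomial (σ ⊕ τ) ℝ) (s : κ → SignType)
    (x : σ ⊕ (τ ⊕ κ) → ℝ) : 0 ≤ eval x (signPenalty p s) := by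
  rw [signPenalty, map_sum]
  exact Finset.sum_nonneg fun l _ => by
    rw [map_pow]
    exact sq_nonneg _

lemma totalDegree_signPenalty_le {p : κ → MvPolynomial (σ ⊕ τ) ℝ} {δ : ℕ}
    (hp : ∀ l, (p l).totalDegree ≤ δ) (s : κ → SignType) :
    (signPenalty p s).totalDegree ≤ 2 * (δ + 2) := by
  refine totalDegree_finsetSum_le fun l _ => (totalDegree_pow _ 2).trans (Nat.mul_le_mul_left 2 ?_)
  refine (totalDegree_sub_C_le _ _).trans ((totalDegree_mul _ _).trans (add_le_add ?_ ?_))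
  · exact (totalDegree_rename_le _ _).trans (hp l)
  · split_ifs <;> simp

lemma exists_eval_signPenalty_eq_zero_iff (p : κ → MvPolynomial (σ ⊕ τ) ℝ) (s : κ → SignType)
    (y : σ → ℝ) :
    (∃ z, eval (Sum.elim y z) (signPenalty p s) = 0) ↔
      ∃ x, ∀ l, SignType.sign (eval (Sum.elim y x) (p l)) = s l := by
  have split : ∀ z : τ ⊕ κ → ℝ, z = Sum.elim (z ∘ .inl) (z ∘ .inr) := fun z =>
    (Sum.elim_comp_inl_inr z).symm
  simp only [← exists_mul_sq_eq_iff_sign_eq]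
  constructor
  · rintro ⟨z, hz⟩
    rw [split z, eval_signPenalty, Finset.sum_eq_zero_iff_of_nonneg fun l _ => sq_nonneg _] at hz
    exact ⟨_, fun l => ⟨_, sub_eq_zero.1 <| (pow_eq_zero_iff two_ne_zero).1 <|
      hz l (Finset.mem_univ l)⟩⟩
  · rintro ⟨x, hx⟩
    choose t ht using hx
    refine ⟨Sum.elim x t, ?_⟩
    simp [eval_signPenalty, ht]

theorem card_le_of_injective_signPattern [Fintype σ] [Fintype τ] {I A : Type*} [Fintype I]
    [Fintype A] {p : I → κ → MvPolynomial (σ ⊕ τ) ℝ} {δ : ℕ}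
    (hp : ∀ i l, (p i l).totalDegree ≤ δ) (s : I → κ → SignType) {Y : A → σ → ℝ}
    (hinj : Function.Injective fun a =>
      {i | ∃ x, ∀ l, SignType.sign (eval (Sum.elim (Y a) x) (p i l)) = s i l}) :
    Fintype.card A ≤
      projectionBound (Fintype.card (σ ⊕ (τ ⊕ κ))) (2 * (δ + 2)) (Fintype.card I) :=
  card_le_of_injective_projection (g := fun i => signPenalty (p i) (s i)) (Y := Y)
    (fun i => eval_signPenalty_nonneg (p i) (s i)) (by omega)
    (fun i => totalDegree_signPenalty_le (hp i) (s i))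
    (by simpa only [exists_eval_signPenalty_eq_zero_iff] using hinj)

end SignPatterns

section GenericMember

variable {J σ K : Type*} [Field K] (V : J → Submodule K (MvPolynomial σ K))
  [∀ j, Module.Finite K (V j)]

/-- The general element of `V j`, its coordinates in a basis being the variables
`inl ⟨j, ·⟩`. -/
noncomputable def genericMember (j : J) :
    MvPolynomial ((Σ j, Fin (Module.finrank K (V j))) ⊕ σ) K :=
  ∑ i, X (.inl ⟨j, i⟩) * rename .inr (Module.finBasis K (V j) i : MvPolynomial σ K)

/-- The coordinates at which `genericMember V` specializes to the polynomials `y j`. -/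
noncomputable def memberCoords (y : ∀ j, V j) : (Σ j, Fin (Module.finrank K (V j))) → K :=
  fun c => (Module.finBasis K (V c.1)).repr (y c.1) c.2

lemma eval_genericMember (y : ∀ j, V j) (x : σ → K) (j : J) :
    eval (Sum.elim (memberCoords V y) x) (genericMember V j) = eval x (y j) := by
  conv_rhs => rw [← (Module.finBasis K (V j)).sum_repr (y j), Submodule.coe_sum, map_sum]
  simp [genericMember, memberCoords, eval_rename, smul_eval]

lemma totalDegree_genericMember_le {δ : ℕ} (hV : ∀ j, ∀ p ∈ V j, p.totalDegree ≤ δ) (j : J) :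
    (genericMember V j).totalDegree ≤ δ + 1 :=
  totalDegree_finsetSum_le fun i _ => by
    rw [add_comm δ]
    exact (totalDegree_mul _ _).trans <| add_le_add (totalDegree_X _).le <|
      (totalDegree_rename_le _ _).trans (hV j _ (Module.finBasis K (V j) i).2)

end GenericMember

lemma finite_of_totalDegree_le {σ K : Type*} [Finite σ] [Field K]
    {V : Submodule K (MvPolynomial σ K)} {δ : ℕ} (hV : ∀ p ∈ V, p.totalDegree ≤ δ) :
    Module.Finite K V := by
  cases nonempty_fintype σ
  exact Submodule.finiteDimensional_of_le (S₂ := restrictDegree σ K δ) fun p hp =>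
    restrictTotalDegree_le_restrictDegree _ _ _ ((mem_restrictTotalDegree _ _ _).2 (hV p hp))

section Crossing

variable {d k b : ℕ} {V : Fin k → Submodule ℝ (MvPolynomial (Fin d) ℝ)}

lemma realization_eq_realization_true (y : ∀ j, V j) (ν : Fin k → Bool) :
    Realization y ν = Realization (fun j => if ν j then y j else -y j) fun _ => true := by
  ext x
  refine forall_congr' fun j => ?_
  cases h : ν j <;> simp [h]

lemma inter_nonempty_iff_exists_sign {P : Fin b → MvPolynomial (Fin d) ℝ} {τ : Fin b → Bool}
    {φ : (Fin b → Prop) → Prop} {U : Set (Fin d → ℝ)} :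
    ({x | φ fun i => if τ i then eval x (P i) < 0 else eval x (P i) = 0} ∩ U).Nonempty ↔
      ∃ s : Fin b → SignType, (φ fun i => if τ i then s i = -1 else s i = 0) ∧
        ∃ x ∈ U, ∀ i, SignType.sign (eval x (P i)) = s i := by
  constructor
  · rintro ⟨x, hx, hU⟩
    refine ⟨fun i => SignType.sign (eval x (P i)), ?_, x, hU, fun i => rfl⟩
    simpa only [Set.mem_ofPred_eq, sign_eq_neg_one_iff, sign_eq_zero_iff] using hx
  · rintro ⟨s, hs, x, hU, hx⟩
    refine ⟨x, ?_, hU⟩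
    simpa only [Set.mem_ofPred_eq, ← hx, sign_eq_neg_one_iff, sign_eq_zero_iff] using hs

lemma inter_realization_true_nonempty_iff [∀ j, Module.Finite ℝ (V j)]
    {P : Fin b → MvPolynomial (Fin d) ℝ} {τ : Fin b → Bool} {φ : (Fin b → Prop) → Prop}
    (y : ∀ j, V j) :
    ({x | φ fun i => if τ i then eval x (P i) < 0 else eval x (P i) = 0} ∩
        Realization y fun _ => true).Nonempty ↔
      ∃ s : Fin b → SignType, (φ fun i => if τ i then s i = -1 else s i = 0) ∧
        ∃ x, ∀ l, SignType.sign (eval (Sum.elim (memberCoords V y) x)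
          ((Sum.elim (fun i => rename .inr (P i)) (genericMember V) : Fin b ⊕ Fin k → _) l)) =
            (Sum.elim s 1 : Fin b ⊕ Fin k → SignType) l := by
  simp only [inter_nonempty_iff_exists_sign, Sum.forall, Sum.elim_inl, Sum.elim_inr, eval_rename,
    eval_genericMember, Sum.elim_comp_inr, Pi.one_apply, sign_eq_one_iff, Realization, if_true,
    Set.mem_ofPred_eq, and_comm]

/-- The families of sets met by the realization of a strict sign condition of a tuple in
`∏ j, V j`. -/
def crossingFamilies (V : Fin k → Submodule ℝ (MvPolynomial (Fin d) ℝ)) :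
    Set (Set (Set (Fin d → ℝ))) :=
  {R | ∃ (y : ∀ j, V j) (ν : Fin k → Bool), R = {T | (T ∩ Realization y ν).Nonempty}}

theorem ncard_image_inter_crossingFamilies_le {δ : ℕ} (hV : ∀ j, ∀ p ∈ V j, p.totalDegree ≤ δ)
    (hb : b ≤ δ + 1) {W : Finset (Set (Fin d → ℝ))}
    (hW : ∀ T ∈ W, IsSemiAlgebraicOfComplexity d b T) :
    ((↑W ∩ ·) '' crossingFamilies V).ncard ≤
      projectionBound (∑ j, Module.finrank ℝ (V j) + (d + (b + k))) (2 * (δ + 1 + 2))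
        (W.card * 3 ^ b) := by
  have := fun j => finite_of_totalDegree_le (hV j)
  choose P τ φ hP hφ using fun T : W => hW T T.2
  have : Fintype ((↑W ∩ ·) '' crossingFamilies V) := (W.finite_toSet.finite_subsets.subset
    (by rintro _ ⟨R, -, rfl⟩; exact Set.inter_subset_left)).fintype
  have witness : ∀ A : (↑W ∩ ·) '' crossingFamilies V,
      ∃ y : ∀ j, V j, A.1 = ↑W ∩ {T | (T ∩ Realization y fun _ => true).Nonempty} := by
    rintro ⟨_, _, ⟨y, ν, rfl⟩, rfl⟩
    exact ⟨_, congrArg (fun U => ↑W ∩ {T | (T ∩ U).Nonempty}) (realization_eq_realization_true y ν)⟩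
  choose y hy using witness
  have := card_le_of_injective_signPattern (I := W × (Fin b → SignType)) (δ := δ + 1)
    (p := fun i => (Sum.elim (fun l => rename .inr (P i.1 l)) (genericMember V) :
      Fin b ⊕ Fin k → _))
    (by
      rintro i (l | j)
      · exact (totalDegree_rename_le _ _).trans ((hP i.1 l).trans hb)
      · exact totalDegree_genericMember_le V hV j)
    (fun i => Sum.elim i.2 1) (Y := fun A => memberCoords V (y A)) fun A A' hAA' => by
      have pattern_iff := fun T t => Set.ext_iff.1 hAA' (T, t)
      simp only [Set.mem_ofPred_eq] at pattern_iff
      refine Subtype.ext ?_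
      rw [hy, hy]
      ext T
      refine and_congr_right fun hT => ?_
      simp only [Set.mem_ofPred_eq]
      have T_eq : T = _ := hφ ⟨T, hT⟩
      rw [T_eq]
      simp only [inter_realization_true_nonempty_iff, pattern_iff]
  simpa [show Fintype.card SignType = 3 from rfl] using this

end Crossing

section Sampling

open scoped Finset Classical

variable {α : Type*}

lemma choose_sub_mul_pow_le {q w N : ℕ} (h : q * (w - N) ≤ w) :
    ∀ {u : ℕ}, u ≤ w → (w - u).choose N * q ^ u ≤ w.choose N
  | 0, _ => by simp
  | u + 1, hu => by
    obtain ⟨m, hm⟩ : ∃ m, w - u = m + 1 := ⟨w - u - 1, by omega⟩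
    have ih := choose_sub_mul_pow_le h (Nat.le_of_succ_le hu)
    have ratio : q * (m + 1 - N) ≤ m + 1 := by
      rcases Nat.eq_zero_or_pos q with rfl | hq
      · simp
      · by_cases hN : N ≤ m + 1
        · zify [hN, show N ≤ w by omega, show u ≤ w by omega] at h hm hq ⊢
          nlinarith
        · simp [Nat.sub_eq_zero_of_le (not_le.1 hN).le]
    have step : m.choose N * q ≤ (m + 1).choose N := by
      refine Nat.le_of_mul_le_mul_right (c := m + 1) ?_ m.succ_pos
      calc m.choose N * q * (m + 1) = (m + 1).choose N * (q * (m + 1 - N)) := by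
            rw [mul_right_comm, Nat.choose_mul_succ_eq, mul_assoc, mul_comm q]
        _ ≤ (m + 1).choose N * (m + 1) := Nat.mul_le_mul_left _ ratio
    calc (w - (u + 1)).choose N * q ^ (u + 1)
        = m.choose N * q * q ^ u := by rw [show w - (u + 1) = m by omega]; ring
      _ ≤ (w - u).choose N * q ^ u := by
          rw [hm]
          exact Nat.mul_le_mul_right _ step
      _ ≤ w.choose N := ih

lemma card_filter_card_inter_le_mul_two_pow_le {W T : Finset α} (hT : T ⊆ W) {N s : ℕ}
    (hN : 8 * (#W - N) ≤ #W) (hs : 3 * s ≤ #T) :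
    #{B ∈ W.powersetCard N | #(B ∩ T) ≤ s} * 2 ^ #T ≤ (#W).choose N := by
  have covered : {B ∈ W.powersetCard N | #(B ∩ T) ≤ s} ⊆
      (T.powersetCard (#T - s)).biUnion fun U => (W \ U).powersetCard N := fun B hB => by
    obtain ⟨hBW, hBT⟩ := Finset.mem_filter.1 hB
    have missed : #T - s ≤ #(T \ B) := by
      have := Finset.card_sdiff_add_card_inter T B
      rw [Finset.inter_comm] at this
      omega
    obtain ⟨U, hU, hUcard⟩ := Finset.exists_subset_card_eq missed
    refine Finset.mem_biUnion.2
      ⟨U, Finset.mem_powersetCard.2 ⟨hU.trans Finset.sdiff_subset, hUcard⟩,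
        Finset.mem_powersetCard.2 ⟨fun x hx => ?_, (Finset.mem_powersetCard.1 hBW).2⟩⟩
    exact Finset.mem_sdiff.2 ⟨(Finset.mem_powersetCard.1 hBW).1 hx,
      fun hxU => (Finset.mem_sdiff.1 (hU hxU)).2 hx⟩
  have count : #{B ∈ W.powersetCard N | #(B ∩ T) ≤ s} ≤ 2 ^ #T * (#W - (#T - s)).choose N :=
    calc _ ≤ ∑ U ∈ T.powersetCard (#T - s), #((W \ U).powersetCard N) :=
          (Finset.card_le_card covered).trans Finset.card_biUnion_le
      _ = (#T).choose (#T - s) * (#W - (#T - s)).choose N := by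
          rw [Finset.sum_const_nat (m := (#W - (#T - s)).choose N), Finset.card_powersetCard]
          intro U hU
          obtain ⟨hUT, hUcard⟩ := Finset.mem_powersetCard.1 hU
          rw [Finset.card_powersetCard, Finset.card_sdiff_of_subset (hUT.trans hT), hUcard]
      _ ≤ _ := Nat.mul_le_mul_right _ (Nat.choose_le_two_pow _ _)
  have four_pow_le : 2 ^ #T * 2 ^ #T ≤ 8 ^ (#T - s) := by
    rw [← pow_add, show (8 : ℕ) = 2 ^ 3 by norm_num, ← pow_mul]
    exact Nat.pow_le_pow_right two_pos (by omega)
  calc _ ≤ 2 ^ #T * (#W - (#T - s)).choose N * 2 ^ #T := Nat.mul_le_mul_right _ count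
    _ = (#W - (#T - s)).choose N * (2 ^ #T * 2 ^ #T) := by ring
    _ ≤ (#W - (#T - s)).choose N * 8 ^ (#T - s) := Nat.mul_le_mul_left _ four_pow_le
    _ ≤ (#W).choose N :=
        choose_sub_mul_pow_le hN ((Nat.sub_le _ _).trans (Finset.card_le_card hT))

/-- Some member of `𝓡` meets the sample `B` in at most `s` points although it meets `W` in at least
`3 * s` points. -/
def IsUndersampled (𝓡 : Set (Set α)) (s : ℕ) (B W : Finset α) : Prop :=
  ∃ R ∈ 𝓡, #{x ∈ B | x ∈ R} ≤ s ∧ 3 * s ≤ #{x ∈ W | x ∈ R}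

lemma card_isUndersampled_mul_two_pow_le {𝓡 : Set (Set α)} {W : Finset α} {N s P : ℕ}
    (hN : 8 * (#W - N) ≤ #W) (hP : ((↑W ∩ ·) '' 𝓡).ncard ≤ P) :
    #{B ∈ W.powersetCard N | IsUndersampled 𝓡 s B W} * 2 ^ (3 * s) ≤ P * (#W).choose N := by
  set traces : Finset (Finset α) :=
    W.powerset.filter fun T => ↑T ∈ (↑W ∩ ·) '' 𝓡 ∧ 3 * s ≤ #T
  have traces_card : #traces ≤ P := by
    refine le_trans ?_ hP
    have finite_traces : ((↑W ∩ ·) '' 𝓡).Finite := W.finite_toSet.finite_subsets.subset <| by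
      rintro _ ⟨R, -, rfl⟩
      exact Set.inter_subset_left
    rw [← Set.ncard_coe_finset, ← Set.ncard_image_of_injective _ Finset.coe_injective]
    refine Set.ncard_le_ncard ?_ finite_traces
    rintro _ ⟨T, hT, rfl⟩
    exact (Finset.mem_filter.1 hT).2.1
  have covered : {B ∈ W.powersetCard N | IsUndersampled 𝓡 s B W} ⊆
      traces.biUnion fun T => {B ∈ W.powersetCard N | #(B ∩ T) ≤ s} := fun B hB => by
    obtain ⟨hBW, R, hR, hBR, hWR⟩ := Finset.mem_filter.1 hB
    refine Finset.mem_biUnion.2 ⟨{x ∈ W | x ∈ R}, Finset.mem_filter.2 ⟨by simp, ⟨R, hR, ?_⟩, hWR⟩,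
      Finset.mem_filter.2 ⟨hBW, ?_⟩⟩
    · ext
      simp
    · rwa [Finset.inter_filter, Finset.inter_eq_left.2 (Finset.mem_powersetCard.1 hBW).1]
  calc _ ≤ (∑ T ∈ traces, #{B ∈ W.powersetCard N | #(B ∩ T) ≤ s}) * 2 ^ (3 * s) :=
        Nat.mul_le_mul_right _ ((Finset.card_le_card covered).trans Finset.card_biUnion_le)
    _ = ∑ T ∈ traces, #{B ∈ W.powersetCard N | #(B ∩ T) ≤ s} * 2 ^ (3 * s) := Finset.sum_mul ..
    _ ≤ ∑ _T ∈ traces, (#W).choose N := Finset.sum_le_sum fun T hT => by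
        obtain ⟨hTW, -, hTs⟩ := Finset.mem_filter.1 hT
        exact (Nat.mul_le_mul_left _ (Nat.pow_le_pow_right two_pos hTs)).trans
          (card_filter_card_inter_le_mul_two_pow_le (Finset.mem_powerset.1 hTW) hN hTs)
    _ ≤ P * (#W).choose N := by
        rw [Finset.sum_const, smul_eq_mul]
        exact Nat.mul_le_mul_right _ traces_card

lemma card_mul_card_filter_mem_powersetCard {Z : Finset α} {x : α} (hx : x ∈ Z) (g : ℕ) :
    #Z * #{G ∈ Z.powersetCard g | x ∈ G} = g * (#Z).choose g := by
  obtain ⟨z, hz⟩ : ∃ z, #Z = z + 1 := ⟨#Z - 1, by have := Finset.card_pos.2 ⟨x, hx⟩; omega⟩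
  cases g with
  | zero => simp
  | succ g =>
    have count := Finset.card_filter_powersetCard_subset {x} Z (g + 1) (by simpa) (by simp)
    simp only [Finset.singleton_subset_iff, Finset.card_singleton, hz, Nat.add_sub_cancel] at count
    rw [count, hz, Nat.add_one_mul_choose_eq, mul_comm]

lemma card_mul_sum_card_filter_powersetCard (Z : Finset α) (R : Set α) (g : ℕ) :
    #Z * ∑ G ∈ Z.powersetCard g, #{x ∈ G | x ∈ R} =
      #{x ∈ Z | x ∈ R} * (g * (#Z).choose g) := by
  calc #Z * ∑ G ∈ Z.powersetCard g, #{x ∈ G | x ∈ R}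
      = #Z * ∑ G ∈ Z.powersetCard g, #{x ∈ {x ∈ Z | x ∈ R} | x ∈ G} := by
        congr 1
        refine Finset.sum_congr rfl fun G hG => congrArg _ ?_
        rw [Finset.filter_comm, Finset.filter_mem_eq_inter,
          Finset.inter_eq_right.2 (Finset.mem_powersetCard.1 hG).1]
    _ = ∑ x ∈ Z with x ∈ R, #Z * #{G ∈ Z.powersetCard g | x ∈ G} := by
        rw [← Finset.mul_sum]
        exact congrArg _ (Finset.sum_card_bipartiteAbove_eq_sum_card_bipartiteBelow
          fun G x => x ∈ G)
    _ = #{x ∈ Z | x ∈ R} * (g * (#Z).choose g) := by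
        rw [Finset.sum_congr rfl fun x hx =>
          card_mul_card_filter_mem_powersetCard (Finset.mem_filter.1 hx).1 g]
        simp

lemma mul_choose_le_card_filter_powersetCard {Z : Finset α} {R : Set α} {g : ℕ} (hg : 0 < g)
    (hgZ : g ≤ #Z) {ε t : ℝ} (ht : 0 ≤ t) (h : (t + ε * g) * #Z ≤ #{x ∈ Z | x ∈ R} * g) :
    ε * (#Z).choose g ≤ (#{G ∈ Z.powersetCard g | t ≤ #{x ∈ G | x ∈ R}} : ℕ) := by
  set A := ((#{G ∈ Z.powersetCard g | t ≤ #{x ∈ G | x ∈ R}} : ℕ) : ℝ)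
  have sum_le : (∑ G ∈ Z.powersetCard g, #{x ∈ G | x ∈ R} : ℝ) ≤ A * g + (#Z).choose g * t :=
    calc (∑ G ∈ Z.powersetCard g, #{x ∈ G | x ∈ R} : ℝ)
        ≤ ∑ G ∈ Z.powersetCard g, ((if t ≤ #{x ∈ G | x ∈ R} then (g : ℝ) else 0) + t) :=
          Finset.sum_le_sum fun G hG => by
            split_ifs with hG'
            · have : #{x ∈ G | x ∈ R} ≤ g :=
                (Finset.card_filter_le _ _).trans_eq (Finset.mem_powersetCard.1 hG).2
              have : (#{x ∈ G | x ∈ R} : ℝ) ≤ g := by exact_mod_cast this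
              linarith
            · linarith
      _ = A * g + (#Z).choose g * t := by
          simp [Finset.sum_add_distrib, ← Finset.sum_filter, A]
  have mean := congrArg (Nat.cast : ℕ → ℝ) (card_mul_sum_card_filter_powersetCard Z R g)
  push_cast at mean
  have hZ : (0 : ℝ) < #Z * g := by exact_mod_cast Nat.mul_pos (hg.trans_le hgZ) hg
  refine le_of_mul_le_mul_left ?_ hZ
  nlinarith [mul_le_mul_of_nonneg_left sum_le (Nat.cast_nonneg (α := ℝ) #Z),
    mul_le_mul_of_nonneg_right h (Nat.cast_nonneg (α := ℝ) ((#Z).choose g))]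

lemma mul_card_le_of_forall_superset {S : Finset α} {N g : ℕ} (hg : N + g ≤ #S)
    {Q : Finset α → Finset α → Prop} {𝓑 : Finset (Finset α)} (h𝓑 : 𝓑 ⊆ S.powersetCard N) {ε M : ℝ}
    (hext : ∀ B ∈ 𝓑,
      ε * (#S - N).choose g ≤ (#{G ∈ (S \ B).powersetCard g | Q B (B ∪ G)} : ℕ))
    (hsub : ∀ W ∈ S.powersetCard (N + g),
      (#{B ∈ W.powersetCard N | Q B W} : ℕ) ≤ M * (N + g).choose N) :
    ε * #𝓑 ≤ M * (#S).choose N := by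
  have card_above : ∀ B ∈ 𝓑, ε * (#S - N).choose g ≤
      (#((S.powersetCard (N + g)).bipartiteAbove (fun B W => B ⊆ W ∧ Q B W) B) : ℝ) := by
    refine fun B hB => (hext B hB).trans (Nat.cast_le.2 ?_)
    obtain ⟨hBS, hBN⟩ := Finset.mem_powersetCard.1 (h𝓑 hB)
    have disjoint_B : ∀ G ⊆ S \ B, Disjoint B G := fun G hG =>
      (Finset.disjoint_of_subset_left hG Finset.sdiff_disjoint).symm
    refine Finset.card_le_card_of_injOn (B ∪ ·) (fun G hG => ?_) fun G hG G' hG' hGG' => ?_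
    · simp only [Finset.coe_filter, Finset.mem_powersetCard, Set.mem_ofPred_eq] at hG
      simp only [Finset.bipartiteAbove, Finset.coe_filter, Finset.mem_powersetCard,
        Set.mem_ofPred_eq, Finset.card_union_of_disjoint (disjoint_B G hG.1.1), hBN, hG.1.2]
      exact ⟨⟨Finset.union_subset hBS (hG.1.1.trans Finset.sdiff_subset), trivial⟩,
        Finset.subset_union_left, hG.2⟩
    · simp only [Finset.coe_filter, Finset.mem_powersetCard, Set.mem_ofPred_eq] at hG hG'
      have union_eq : B ∪ G = B ∪ G' := hGG'
      rw [← Finset.union_sdiff_cancel_left (disjoint_B G hG.1.1), union_eq,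
        Finset.union_sdiff_cancel_left (disjoint_B G' hG'.1.1)]
  have card_below : ∀ W ∈ S.powersetCard (N + g),
      (#(𝓑.bipartiteBelow (fun B W => B ⊆ W ∧ Q B W) W) : ℝ) ≤ M * (N + g).choose N := by
    refine fun W hW => (Nat.cast_le.2 (Finset.card_le_card fun B hB => ?_)).trans (hsub W hW)
    obtain ⟨hB𝓑, hBW, hQ⟩ := Finset.mem_filter.1 hB
    exact Finset.mem_filter.2 ⟨Finset.mem_powersetCard.2
      ⟨hBW, (Finset.mem_powersetCard.1 (h𝓑 hB𝓑)).2⟩, hQ⟩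
  have double_count := Finset.card_nsmul_le_card_nsmul _ card_above card_below
  have choose_eq := congrArg (Nat.cast : ℕ → ℝ) (Nat.choose_mul (n := #S) (k := N + g) (s := N)
    (Nat.le_add_right N g))
  rw [Nat.add_sub_cancel_left] at choose_eq
  push_cast at choose_eq
  rw [Finset.card_powersetCard, nsmul_eq_mul, nsmul_eq_mul] at double_count
  refine le_of_mul_le_mul_right ?_
    (Nat.cast_pos.2 (Nat.choose_pos (n := #S - N) (k := g) (by omega)) : (0 : ℝ) < _)
  linear_combination double_count + M * choose_eq

lemma mul_choose_le_card_isUndersampled {𝓡 : Set (Set α)} {R : Set α} (hR : R ∈ 𝓡)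
    {S B : Finset α} (hBS : B ⊆ S) (hB : 7 ≤ #B) (hBg : #B + #B / 7 ≤ #S) {ε : ℝ} (hε : 0 < ε)
    (hBR : #{x ∈ B | x ∈ R} ≤ ⌊ε * #B⌋₊) (hSR : 41 * ε * #S < #{x ∈ S | x ∈ R}) :
    ε * (#S - #B).choose (#B / 7) ≤ (#{G ∈ (S \ B).powersetCard (#B / 7) |
      IsUndersampled 𝓡 ⌊ε * #B⌋₊ B (B ∪ G)} : ℕ) := by
  set N := #B
  set g := N / 7
  set s := ⌊ε * N⌋₊
  have hZ : #(S \ B) = #S - N := Finset.card_sdiff_of_subset hBS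
  have hs : (s : ℝ) ≤ ε * N := Nat.floor_le (by positivity)
  have hNg : (N : ℝ) ≤ 13 * g := by exact_mod_cast show N ≤ 13 * g by omega
  have hNS : (N : ℝ) ≤ #S := by exact_mod_cast Finset.card_le_card hBS
  have rest : (#{x ∈ S | x ∈ R} : ℝ) ≤ #{x ∈ S \ B | x ∈ R} + s := by
    have split : {x ∈ S | x ∈ R} = {x ∈ S \ B | x ∈ R} ∪ {x ∈ B | x ∈ R} := by
      rw [← Finset.filter_union, Finset.sdiff_union_of_subset hBS]
    rw [split]
    exact_mod_cast (Finset.card_union_le _ _).trans (Nat.add_le_add_left hBR _)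
  have mean : (3 * s + ε * g) * #(S \ B) ≤ #{x ∈ S \ B | x ∈ R} * g := by
    have : (#(S \ B) : ℝ) ≤ #S := Nat.cast_le.2 (Finset.card_le_card Finset.sdiff_subset)
    calc (3 * s + ε * g) * #(S \ B) ≤ (40 * ε * g) * #S := by
          gcongr
          nlinarith
      _ ≤ #{x ∈ S \ B | x ∈ R} * g := by
          have : 40 * ε * #S ≤ #{x ∈ S \ B | x ∈ R} := by nlinarith
          nlinarith [(Nat.cast_nonneg g : (0 : ℝ) ≤ g)]
  have many := mul_choose_le_card_filter_powersetCard (g := g) (by omega) (by omega)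
    (by positivity) mean
  rw [hZ] at many
  refine many.trans (Nat.cast_le.2 (Finset.card_le_card fun G hG => ?_))
  obtain ⟨hG, hGR⟩ := Finset.mem_filter.1 hG
  refine Finset.mem_filter.2 ⟨hG, R, hR, hBR, ?_⟩
  have : 3 * s ≤ #{x ∈ G | x ∈ R} := by exact_mod_cast hGR
  exact this.trans (Finset.card_le_card
    (Finset.filter_subset_filter _ Finset.subset_union_right))

lemma two_mul_card_le_choose_of_subset_isUndersampled {𝓡 : Set (Set α)} {S : Finset α} {N s P : ℕ}
    {𝓑 : Finset (Finset α)} (h𝓑 : 𝓑 ⊆ S.powersetCard N)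
    (h𝓑s : ∀ B ∈ 𝓑, IsUndersampled 𝓡 s B S) (hN : 8 * (#S - N) ≤ #S)
    (hP : ((↑S ∩ ·) '' 𝓡).ncard ≤ P) (hPs : 2 * P ≤ 2 ^ (3 * s)) :
    2 * #𝓑 ≤ (#S).choose N := by
  have h𝓑_le : #𝓑 ≤ #{B ∈ S.powersetCard N | IsUndersampled 𝓡 s B S} :=
    Finset.card_le_card fun B hB => Finset.mem_filter.2 ⟨h𝓑 hB, h𝓑s B hB⟩
  refine Nat.le_of_mul_le_mul_right (c := 2 ^ (3 * s)) ?_ (by positivity)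
  calc 2 * #𝓑 * 2 ^ (3 * s) = 2 * (#𝓑 * 2 ^ (3 * s)) := mul_assoc ..
    _ ≤ 2 * (P * (#S).choose N) := Nat.mul_le_mul_left _
        ((Nat.mul_le_mul_right _ h𝓑_le).trans (card_isUndersampled_mul_two_pow_le hN hP))
    _ = 2 * P * (#S).choose N := (mul_assoc ..).symm
    _ ≤ 2 ^ (3 * s) * (#S).choose N := Nat.mul_le_mul_right _ hPs
    _ = (#S).choose N * 2 ^ (3 * s) := mul_comm ..

lemma two_mul_card_le_choose_of_sampling {𝓡 : Set (Set α)} {S : Finset α} {N P : ℕ} (hN : 7 ≤ N)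
    {ε : ℝ} (hε : 0 < ε) (hP : ∀ W ⊆ S, #W ≤ 2 * N → ((↑W ∩ ·) '' 𝓡).ncard ≤ P)
    (hPε : 2 * P ≤ ε * 2 ^ (3 * ⌊ε * N⌋₊)) :
    2 * #{B ∈ S.powersetCard N | ∃ R ∈ 𝓡, #{x ∈ B | x ∈ R} ≤ ε * N ∧
      41 * ε * #S < #{x ∈ S | x ∈ R}} ≤ (#S).choose N := by
  set 𝓑 := {B ∈ S.powersetCard N | ∃ R ∈ 𝓡, #{x ∈ B | x ∈ R} ≤ ε * N ∧
    41 * ε * #S < #{x ∈ S | x ∈ R}}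
  set s := ⌊ε * N⌋₊
  have h𝓑 : 𝓑 ⊆ S.powersetCard N := Finset.filter_subset _ _
  obtain h𝓑_empty | ⟨B₀, hB₀⟩ := 𝓑.eq_empty_or_nonempty
  · simp [h𝓑_empty]
  have hNS : N ≤ #S := by
    obtain ⟨hB₀S, hB₀N⟩ := Finset.mem_powersetCard.1 (h𝓑 hB₀)
    exact hB₀N ▸ Finset.card_le_card hB₀S
  have hNS' : (N : ℝ) ≤ #S := Nat.cast_le.2 hNS
  by_cases hSN : #S - N ≤ N / 7
  · have hε_le : ε ≤ 1 := by
      obtain ⟨R, -, -, hR⟩ := (Finset.mem_filter.1 hB₀).2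
      have : (#{x ∈ S | x ∈ R} : ℝ) ≤ #S := Nat.cast_le.2 (Finset.card_filter_le _ _)
      have : (7 : ℝ) ≤ N := by exact_mod_cast hN
      nlinarith
    refine two_mul_card_le_choose_of_subset_isUndersampled h𝓑 (s := s) (fun B hB => ?_) (by omega)
      (hP S subset_rfl (by omega)) ?_
    · obtain ⟨-, R, hR, hBR, hSR⟩ := Finset.mem_filter.1 hB
      refine ⟨R, hR, Nat.le_floor hBR, ?_⟩
      have hs : (s : ℝ) ≤ ε * N := Nat.floor_le (by positivity)
      have : (3 * s : ℝ) ≤ #{x ∈ S | x ∈ R} := by nlinarith [mul_le_mul_of_nonneg_left hNS' hε.le]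
      exact_mod_cast this
    · exact_mod_cast hPε.trans (mul_le_of_le_one_left (by positivity) hε_le)
  · have hε_mul : ε * #𝓑 ≤ (P / 2 ^ (3 * s)) * (#S).choose N := by
      refine mul_card_le_of_forall_superset (g := N / 7) (Q := IsUndersampled 𝓡 s) (by omega) h𝓑
        (fun B hB => ?_) fun W hW => ?_
      · obtain ⟨hB_mem, R, hR, hBR, hSR⟩ := Finset.mem_filter.1 hB
        obtain ⟨hBS, rfl⟩ := Finset.mem_powersetCard.1 hB_mem
        exact mul_choose_le_card_isUndersampled hR hBS hN (by omega) hε (Nat.le_floor hBR) hSR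
      · obtain ⟨hWS, hW⟩ := Finset.mem_powersetCard.1 hW
        rw [div_mul_eq_mul_div, le_div_iff₀ (by positivity), ← hW]
        exact_mod_cast card_isUndersampled_mul_two_pow_le (by omega) (hP W hWS (by omega))
    have hP_div : 2 * (P / 2 ^ (3 * s)) ≤ ε := by
      rwa [← mul_div_assoc, div_le_iff₀ (by positivity)]
    have : ε * (2 * #𝓑) ≤ ε * (#S).choose N := by
      nlinarith [mul_le_mul_of_nonneg_right hP_div (Nat.cast_nonneg (α := ℝ) ((#S).choose N))]
    exact_mod_cast le_of_mul_le_mul_left this hε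

theorem choose_le_two_mul_card_of_sampling {𝓡 : Set (Set α)} {S : Finset α} {N P : ℕ} (hN : 7 ≤ N)
    {ε : ℝ} (hε : 0 < ε) (hP : ∀ W ⊆ S, #W ≤ 2 * N → ((↑W ∩ ·) '' 𝓡).ncard ≤ P)
    (hPε : 2 * P ≤ ε * 2 ^ (3 * ⌊ε * N⌋₊)) :
    (#S).choose N ≤ 2 * #{B ∈ S.powersetCard N | ∀ R ∈ 𝓡, #{x ∈ B | x ∈ R} ≤ ε * N →
      #{x ∈ S | x ∈ R} ≤ 41 * ε * #S} := by
  have bad := two_mul_card_le_choose_of_sampling hN hε hP hPε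
  have total := Finset.card_filter_add_card_filter_not (s := S.powersetCard N) fun B =>
    ∃ R ∈ 𝓡, #{x ∈ B | x ∈ R} ≤ ε * N ∧ 41 * ε * #S < #{x ∈ S | x ∈ R}
  push Not at total
  rw [Finset.card_powersetCard] at total
  omega

end Sampling

section Numerics

lemma perronBound_mono {n n' δ δ' : ℕ} (hn : n ≤ n') (hδ : δ ≤ δ') (hδ' : 0 < δ') :
    perronBound n δ ≤ perronBound n' δ' :=
  (Nat.pow_le_pow_left (Nat.mul_le_mul (Nat.succ_le_succ hn) hδ) _).trans
    (Nat.pow_le_pow_right (by positivity) (Nat.succ_le_succ hn))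

lemma perronBound_le_two_pow {K m δ : ℕ} (hK : 2 ≤ K) (hm : m + 2 ≤ 4 * K) (hδ : δ ≤ 10 * K) :
    perronBound m δ ≤ 2 ^ (20 * K ^ 2) := by
  have base_le : 4 * K * (10 * K) ≤ 2 ^ (5 * K) :=
    calc 4 * K * (10 * K) ≤ 2 ^ 6 * (2 ^ K * 2 ^ K) := by
          nlinarith [Nat.mul_le_mul K.lt_two_pow_self.le K.lt_two_pow_self.le]
      _ = 2 ^ (6 + (K + K)) := by ring
      _ ≤ 2 ^ (5 * K) := Nat.pow_le_pow_right two_pos (by omega)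
  calc perronBound m δ ≤ perronBound (4 * K - 1) (10 * K) :=
        perronBound_mono (by omega) hδ (by omega)
    _ = (4 * K * (10 * K)) ^ (4 * K) := by rw [perronBound, show 4 * K - 1 + 1 = 4 * K by omega]
    _ ≤ (2 ^ (5 * K)) ^ (4 * K) := Nat.pow_le_pow_left base_le _
    _ = 2 ^ (20 * K ^ 2) := by ring

lemma projectionBound_le {K m δ w : ℕ} (hK : 2 ≤ K) (hm : m + 2 ≤ 4 * K) (hδ : 2 * δ ≤ 10 * K)
    (hw : 0 < w) : projectionBound m δ w ≤ (w * 2 ^ (22 * K ^ 2)) ^ (16 * K ^ 2) := by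
  have hK_sq : 4 ≤ K ^ 2 := Nat.pow_le_pow_left hK 2
  have degree_le : w * perronBound m (2 * δ) + 2 ≤ w * 2 ^ (21 * K ^ 2) :=
    calc w * perronBound m (2 * δ) + 2 ≤ w * 2 ^ (20 * K ^ 2) + 2 * (w * 2 ^ (20 * K ^ 2)) :=
          Nat.add_le_add (Nat.mul_le_mul_left _ (perronBound_le_two_pow hK hm hδ))
            (Nat.le_mul_of_pos_right _ (by positivity))
      _ ≤ w * 2 ^ (20 * K ^ 2 + 2) := by rw [pow_add]; linarith [Nat.zero_le (w * 2 ^ (20 * K ^ 2))]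
      _ ≤ w * 2 ^ (21 * K ^ 2) :=
          Nat.mul_le_mul_left _ (Nat.pow_le_pow_right two_pos (by omega))
  have four_mul_le : 4 * K ≤ 2 ^ (K ^ 2) :=
    calc 4 * K ≤ 2 ^ 2 * 2 ^ K := Nat.mul_le_mul_left _ K.lt_two_pow_self.le
      _ = 2 ^ (2 + K) := (pow_add ..).symm
      _ ≤ 2 ^ (K ^ 2) := Nat.pow_le_pow_right two_pos (by nlinarith)
  have outer_le : perronBound (m + 1) (w * perronBound m (2 * δ) + 2) ≤
      (w * 2 ^ (22 * K ^ 2)) ^ (4 * K) :=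
    calc _ ≤ perronBound (4 * K - 1) (w * 2 ^ (21 * K ^ 2)) :=
          perronBound_mono (by omega) degree_le (by positivity)
      _ = (4 * K * (w * 2 ^ (21 * K ^ 2))) ^ (4 * K) := by
          rw [perronBound, show 4 * K - 1 + 1 = 4 * K by omega]
      _ ≤ (2 ^ (K ^ 2) * (w * 2 ^ (21 * K ^ 2))) ^ (4 * K) :=
          Nat.pow_le_pow_left (Nat.mul_le_mul_right _ four_mul_le) _
      _ = (w * 2 ^ (22 * K ^ 2)) ^ (4 * K) := by ring
  calc projectionBound m δ w ≤ ((w * 2 ^ (22 * K ^ 2)) ^ (4 * K)) ^ (m + 1) :=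
        Nat.pow_le_pow_left outer_le _
    _ ≤ ((w * 2 ^ (22 * K ^ 2)) ^ (4 * K)) ^ (4 * K) :=
        Nat.pow_le_pow_right (by positivity) (by omega)
    _ = (w * 2 ^ (22 * K ^ 2)) ^ (16 * K ^ 2) := by ring

lemma two_mul_le_two_pow_sqrt (N : ℕ) : 2 * N ≤ 2 ^ (2 * N.sqrt + 1) := by
  have hN : N ≤ 2 ^ N.sqrt * 2 ^ N.sqrt :=
    (Nat.lt_succ_sqrt N).le.trans (Nat.mul_le_mul N.sqrt.lt_two_pow_self N.sqrt.lt_two_pow_self)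
  calc 2 * N ≤ 2 * (2 ^ N.sqrt * 2 ^ N.sqrt) := Nat.mul_le_mul_left _ hN
    _ = 2 ^ (2 * N.sqrt + 1) := by ring

lemma exponent_le_of_pow_le {K N s : ℕ} (hK : 2 ≤ K) (hN : K ^ 28 ≤ N) (hs : N ≤ K * s + K) :
    K + 1 + (2 * N.sqrt + 1 + 23 * K ^ 2) * (16 * K ^ 2) ≤ s := by
  set q := N.sqrt
  have hq : K ^ 14 ≤ q := Nat.le_sqrt.2 (by rwa [← pow_add])
  have hq_pos : 1 ≤ q := le_trans (Nat.one_le_pow _ _ (by omega)) hq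
  have hK_pow : ∀ i ≤ 5, K ^ i ≤ K ^ 5 * q := fun i hi =>
    (Nat.pow_le_pow_right (by omega) hi).trans (Nat.le_mul_of_pos_right _ hq_pos)
  have hK_pow_mul : K ^ 3 * q ≤ K ^ 5 * q :=
    Nat.mul_le_mul_right _ (Nat.pow_le_pow_right (by omega) (by omega))
  have q_sq_ge : 512 * (K ^ 5 * q) ≤ q * q :=
    calc 512 * (K ^ 5 * q) ≤ K ^ 9 * (K ^ 5 * q) :=
          Nat.mul_le_mul_right _ (Nat.pow_le_pow_left hK 9)
      _ = K ^ 14 * q := by ring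
      _ ≤ q * q := Nat.mul_le_mul_right _ hq
  have total : K * (K + 1 + (2 * q + 1 + 23 * K ^ 2) * (16 * K ^ 2)) + K ≤ K * s + K :=
    calc K * (K + 1 + (2 * q + 1 + 23 * K ^ 2) * (16 * K ^ 2)) + K
        = K ^ 2 + 2 * K ^ 1 + 32 * (K ^ 3 * q) + 16 * K ^ 3 + 368 * K ^ 5 := by ring
      _ ≤ 512 * (K ^ 5 * q) := by
          linarith [hK_pow 2 (by omega), hK_pow 1 (by omega), hK_pow 3 (by omega), hK_pow 5 le_rfl]
      _ ≤ q * q := q_sq_ge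
      _ ≤ K * s + K := (Nat.sqrt_le N).trans hs
  exact Nat.le_of_mul_le_mul_left (Nat.le_of_add_le_add_right total) (by omega)

lemma two_mul_mul_pow_le_two_pow {K N s : ℕ} (hK : 2 ≤ K) (hN : K ^ 28 ≤ N)
    (hs : N ≤ K * s + K) :
    2 * K * (2 * N * 2 ^ (23 * K ^ 2)) ^ (16 * K ^ 2) ≤ 2 ^ s :=
  calc 2 * K * (2 * N * 2 ^ (23 * K ^ 2)) ^ (16 * K ^ 2)
      ≤ 2 * 2 ^ K * (2 ^ (2 * N.sqrt + 1) * 2 ^ (23 * K ^ 2)) ^ (16 * K ^ 2) :=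
        Nat.mul_le_mul (Nat.mul_le_mul_left _ K.lt_two_pow_self.le)
          (Nat.pow_le_pow_left (Nat.mul_le_mul_right _ (two_mul_le_two_pow_sqrt N)) _)
    _ = 2 ^ (K + 1 + (2 * N.sqrt + 1 + 23 * K ^ 2) * (16 * K ^ 2)) := by
        rw [← pow_succ', ← pow_add, ← pow_mul, ← pow_add]
    _ ≤ 2 ^ s := Nat.pow_le_pow_right two_pos (exponent_le_of_pow_le hK hN hs)

lemma le_two_pow_of_isLeast_choose {d j m : ℕ} (hd : 1 ≤ d)
    (hm : IsLeast {m : ℕ | 0 < m ∧ 2 ^ j < (m + d).choose d} m) : m ≤ 2 ^ j := by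
  refine hm.2 ⟨by positivity, ?_⟩
  calc 2 ^ j < (2 ^ j + 1).choose (2 ^ j) := by simp
    _ ≤ (2 ^ j + d).choose (2 ^ j) := Nat.choose_le_choose _ (by omega)
    _ = (2 ^ j + d).choose d := Nat.choose_symm_add

end Numerics

section Partitioning

open scoped Finset Classical

variable {d k b N : ℕ} {V : Fin k → Submodule ℝ (MvPolynomial (Fin d) ℝ)}

lemma ncard_image_inter_crossingFamilies_le_pow (hk : 0 < k) (hdk : d ≤ k) (hbk : b ≤ k)
    (hV : ∀ j, Module.finrank ℝ (V j) ≤ 2 ^ (j : ℕ))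
    (hVdeg : ∀ j, ∀ p ∈ V j, p.totalDegree ≤ 2 ^ (j : ℕ)) (hN : 0 < N)
    {W : Finset (Set (Fin d → ℝ))} (hW : ∀ T ∈ W, IsSemiAlgebraicOfComplexity d b T)
    (hWN : #W ≤ 2 * N) :
    ((↑W ∩ ·) '' crossingFamilies V).ncard ≤
      (2 * N * 2 ^ (23 * (2 ^ k) ^ 2)) ^ (16 * (2 ^ k) ^ 2) := by
  have hkK : k < 2 ^ k := k.lt_two_pow_self
  have hK : 2 ≤ 2 ^ k := Nat.pow_le_pow_right two_pos hk
  have finrank_sum : ∑ j, Module.finrank ℝ (V j) < 2 ^ k :=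
    calc _ ≤ ∑ j : Fin k, 2 ^ (j : ℕ) := Finset.sum_le_sum fun j _ => hV j
      _ = ∑ i ∈ Finset.range k, 2 ^ i := Fin.sum_univ_eq_sum_range (2 ^ ·) k
      _ < 2 ^ k := Nat.geomSum_lt le_rfl fun _ => Finset.mem_range.1
  have degree_le : ∀ j, ∀ p ∈ V j, p.totalDegree ≤ 2 ^ k := fun j p hp =>
    (hVdeg j p hp).trans (Nat.pow_le_pow_right two_pos j.2.le)
  have weight_le : #W * 3 ^ b ≤ 2 * N * 2 ^ ((2 ^ k) ^ 2) := by
    refine Nat.mul_le_mul hWN ?_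
    calc 3 ^ b ≤ 4 ^ k := (Nat.pow_le_pow_left (by norm_num) b).trans
          (Nat.pow_le_pow_right (by norm_num) hbk)
      _ = 2 ^ (2 * k) := (pow_mul 2 2 k).symm
      _ ≤ 2 ^ ((2 ^ k) ^ 2) := Nat.pow_le_pow_right two_pos (by nlinarith)
  calc _ ≤ projectionBound (∑ j, Module.finrank ℝ (V j) + (d + (b + k))) (2 * (2 ^ k + 1 + 2))
        (#W * 3 ^ b) := ncard_image_inter_crossingFamilies_le degree_le (by omega) hW
    _ ≤ projectionBound _ _ (2 * N * 2 ^ ((2 ^ k) ^ 2)) := by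
        unfold projectionBound
        exact Nat.pow_le_pow_left (perronBound_mono le_rfl
          (Nat.add_le_add_right (Nat.mul_le_mul_right _ weight_le) 2) (by positivity)) _
    _ ≤ (2 * N * 2 ^ ((2 ^ k) ^ 2) * 2 ^ (22 * (2 ^ k) ^ 2)) ^ (16 * (2 ^ k) ^ 2) :=
        projectionBound_le hK (by omega) (by omega) (by positivity)
    _ = (2 * N * 2 ^ (23 * (2 ^ k) ^ 2)) ^ (16 * (2 ^ k) ^ 2) := by ring

lemma choose_le_two_mul_card_of_crossingFamilies (hk : 0 < k) (hdk : d ≤ k) (hbk : b ≤ k)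
    (hV : ∀ j, Module.finrank ℝ (V j) ≤ 2 ^ (j : ℕ))
    (hVdeg : ∀ j, ∀ p ∈ V j, p.totalDegree ≤ 2 ^ (j : ℕ)) {S : Finset (Set (Fin d → ℝ))}
    (hS : ∀ T ∈ S, IsSemiAlgebraicOfComplexity d b T) (hN : (2 ^ k) ^ 28 ≤ N) {ε : ℝ}
    (hε : 1 ≤ 2 ^ k * ε) :
    (#S).choose N ≤ 2 * #{B ∈ S.powersetCard N | ∀ R ∈ crossingFamilies V,
      #{T ∈ B | T ∈ R} ≤ ε * N → #{T ∈ S | T ∈ R} ≤ 41 * ε * #S} := by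
  have hK : 2 ≤ 2 ^ k := Nat.pow_le_pow_right two_pos hk
  have hN_large : 7 ≤ N := by
    refine le_trans ?_ ((Nat.pow_le_pow_left hK 28).trans hN)
    norm_num
  have hε_pos : 0 < ε := pos_of_mul_pos_right (one_pos.trans_le hε) (by positivity)
  refine choose_le_two_mul_card_of_sampling hN_large hε_pos
    (fun W hWS hWN => ncard_image_inter_crossingFamilies_le_pow hk hdk hbk hV hVdeg (by omega)
      (fun T hT => hS T (hWS hT)) hWN) ?_
  set s := ⌊ε * N⌋₊
  set P := (2 * N * 2 ^ (23 * (2 ^ k) ^ 2)) ^ (16 * (2 ^ k) ^ 2)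
  have hs : N ≤ 2 ^ k * s + 2 ^ k := by
    have : (N : ℝ) ≤ 2 ^ k * s + 2 ^ k :=
      calc (N : ℝ) ≤ 2 ^ k * ε * N := le_mul_of_one_le_left N.cast_nonneg hε
        _ ≤ 2 ^ k * (s + 1) := by
            rw [mul_assoc]
            gcongr
            exact (Nat.lt_floor_add_one _).le
        _ = _ := mul_add_one ..
    exact_mod_cast this
  have hP : (2 * 2 ^ k * P : ℝ) ≤ 2 ^ (3 * s) := by
    exact_mod_cast (two_mul_mul_pow_le_two_pow hK hN hs).trans
      (Nat.pow_le_pow_right two_pos (by omega))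
  calc (2 * P : ℝ) ≤ 2 ^ k * ε * (2 * P) := le_mul_of_one_le_left (by positivity) hε
    _ = ε * (2 * 2 ^ k * P) := by ring
    _ ≤ ε * 2 ^ (3 * s) := by gcongr

lemma ncard_le_of_isPartitioningTuple {y : ∀ j, V j} {S B : Finset (Set (Fin d → ℝ))} {α L : ℝ}
    (hB : ∀ R ∈ crossingFamilies V, #{T ∈ B | T ∈ R} ≤ #B / α → #{T ∈ S | T ∈ R} ≤ L)
    (hy : IsPartitioningTuple y B α) (ν : Fin k → Bool) :
    (Set.ncard {T | T ∈ S ∧ (T ∩ Realization y ν).Nonempty} : ℝ) ≤ L := by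
  have ncard_eq : ∀ F : Finset (Set (Fin d → ℝ)),
      Set.ncard {T | T ∈ F ∧ (T ∩ Realization y ν).Nonempty} =
        #{T ∈ F | T ∈ {T | (T ∩ Realization y ν).Nonempty}} := fun F => by
    rw [← Set.ncard_coe_finset, Finset.coe_filter]
    rfl
  rw [ncard_eq]
  exact hB _ ⟨y, ν, rfl⟩ (ncard_eq B ▸ (hy ν).2)

lemma rpow_natCast_eq_two_pow {D : ℝ} (hd : 0 < d) (hD : D = 2 ^ ((k : ℝ) / (d : ℝ))) :
    D ^ (d : ℝ) = 2 ^ k := by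
  rw [hD, ← Real.rpow_mul zero_le_two, div_mul_cancel₀ _ (by positivity), Real.rpow_natCast]

lemma mul_le_of_two_pow_le_rpow_div (hd : 0 < d) (h : (2 : ℝ) ^ b ≤ 2 ^ ((k : ℝ) / (d : ℝ))) :
    b * d ≤ k := by
  rw [← Real.rpow_natCast, Real.rpow_le_rpow_left_iff one_lt_two,
    le_div_iff₀ (by exact_mod_cast hd)] at h
  exact_mod_cast h

lemma two_pow_pow_le_of_mul_rpow_le {D : ℝ} (hd : 0 < d) (hD : 1 ≤ D)
    (hDd : D ^ (d : ℝ) = 2 ^ k) (hN : 41 * d * D ^ (41 * d : ℝ) ≤ N) : (2 ^ k) ^ 28 ≤ N := by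
  have hd_one : (1 : ℝ) ≤ d := by exact_mod_cast hd
  have : ((2 ^ k) ^ 28 : ℝ) ≤ N :=
    calc ((2 ^ k) ^ 28 : ℝ) = D ^ (d * 28 : ℝ) := by
          rw [← hDd, Real.rpow_mul (by positivity)]
          norm_cast
      _ ≤ D ^ (41 * d : ℝ) := Real.rpow_le_rpow_of_exponent_le hD (by linarith)
      _ ≤ 41 * d * D ^ (41 * d : ℝ) := le_mul_of_one_le_left (by positivity) (by linarith)
      _ ≤ N := hN
  exact_mod_cast this

lemma one_le_two_pow_mul_rpow {D C₀ r : ℝ} (hD : 1 ≤ D) (hDd : D ^ (d : ℝ) = 2 ^ k)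
    (hC₀ : 1 ≤ C₀) (hr : 0 ≤ r) : 1 ≤ 2 ^ k * (C₀ * D ^ (r - d)) :=
  calc 1 ≤ C₀ * D ^ r := one_le_mul_of_one_le_of_one_le hC₀ (Real.one_le_rpow hD hr)
    _ = 2 ^ k * (C₀ * D ^ (r - d)) := by
        rw [← hDd, mul_left_comm, ← Real.rpow_add (by positivity), add_sub_cancel]

end Partitioning

end EpsSampling

theorem eps_sampling_partitioning_general (d : ℕ) (hd : 1 ≤ d) :
    ∃ C : ℝ, 0 < C ∧
      ∀ (b : ℕ), 1 ≤ b →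
      ∀ (C₀ : ℝ), 1 ≤ C₀ →
      ∀ (r : ℝ), 0 ≤ r →
      ∀ (S : Finset (Set (Fin d → ℝ))),
        (∀ T ∈ S, IsSemiAlgebraicOfComplexity d b T) →
      ∀ (k : ℕ) (D : ℝ), D = 2 ^ ((k : ℝ) / (d : ℝ)) → (2 : ℝ) ^ b ≤ D →
      ∀ V : Fin k → Submodule ℝ (MvPolynomial (Fin d) ℝ),
        (∀ j, Module.finrank ℝ (V j) ≤ 2 ^ (j : ℕ)) →
        (∀ j, ∀ p ∈ V j, p.totalDegree ≤ 2 ^ (j : ℕ)) →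
      ∀ N : ℕ, C * D ^ C ≤ (N : ℝ) →
        (1 / 2 : ℝ) * ((S.powersetCard N).card : ℝ) ≤
          (Set.ncard {B : Finset (Set (Fin d → ℝ)) | B ∈ S.powersetCard N ∧
            ∀ y : (j : Fin k) → V j,
              IsPartitioningTuple y B (D ^ ((d : ℝ) - r) / C₀) →
              ∀ ν : Fin k → Bool,
                (Set.ncard {T | T ∈ S ∧ (T ∩ Realization y ν).Nonempty} : ℝ)
                  ≤ C * C₀ * (S.card : ℝ) * D ^ (r - (d : ℝ))} : ℝ) := by
  classical
  have hd_one : (1 : ℝ) ≤ d := by exact_mod_cast hd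
  refine ⟨41 * d, by positivity, fun b hb C₀ hC₀ r hr S hS k D hD hDb V hV hVdeg N hN => ?_⟩
  have hD_one : 1 ≤ D := (one_le_pow₀ one_le_two).trans hDb
  have hD_pos : 0 < D := one_pos.trans_le hD_one
  have hDd : D ^ (d : ℝ) = 2 ^ k := EpsSampling.rpow_natCast_eq_two_pow hd hD
  have hbd : b * d ≤ k := EpsSampling.mul_le_of_two_pow_le_rpow_div hd (hD ▸ hDb)
  have sampling := EpsSampling.choose_le_two_mul_card_of_crossingFamilies (by nlinarith)
    (by nlinarith) (by nlinarith) hV hVdeg hS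
    (EpsSampling.two_pow_pow_le_of_mul_rpow_le hd hD_one hDd hN)
    (EpsSampling.one_le_two_pow_mul_rpow hD_one hDd hC₀ hr)
  rw [Finset.card_powersetCard, one_div, inv_mul_le_iff₀ two_pos]
  refine (Nat.cast_le.2 sampling).trans ?_
  rw [Nat.cast_mul, Nat.cast_two, ← Set.ncard_coe_finset]
  refine mul_le_mul_of_nonneg_left (Nat.cast_le.2 (Set.ncard_le_ncard (fun B hB => ?_)
    ((S.powersetCard N).finite_toSet.subset fun B hB => hB.1))) zero_le_two
  obtain ⟨hBS, hB⟩ := Finset.mem_filter.1 hB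
  refine ⟨hBS, fun y hy => EpsSampling.ncard_le_of_isPartitioningTuple (fun R hR hBR => ?_) hy⟩
  have hα : (B.card : ℝ) / (D ^ (d - r) / C₀) = C₀ * D ^ (r - d) * N := by
    rw [(Finset.mem_powersetCard.1 hBS).2, ← neg_sub, Real.rpow_neg hD_pos.le]
    field_simp
  calc _ ≤ 41 * (C₀ * D ^ (r - d)) * S.card := hB R hR (hBR.trans_eq hα)
    _ ≤ d * (41 * (C₀ * D ^ (r - d)) * S.card) := le_mul_of_one_le_left (by positivity) hd_one
    _ = 41 * d * C₀ * S.card * D ^ (r - d) := by ring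

/-- **ε-sampling lemma for partitioning tuples.** For all positive integers `b, d` there is a
constant `C = C(b,d)` with the following property. Let `C₀ ≥ 1`, let `S` be a finite family of
semi-algebraic sets in `ℝ^d`, each of dimension at most `r` and complexity at most `b`, let
`k ≥ 1` and `D = 2^{k/d} ≥ 2^b`. If `B` is a uniformly random subset of `S` of cardinality
`N ≥ C·D^C`, then with probability at least `1/2` (i.e., for at least half of the `N`-element
subsets `B ⊆ S`) the following holds: every `(k, D^{d−r}/C₀)`-partitioning tuple
`(P_1,…,P_k) ∈ 𝕐_k` for `B` has all its strict-sign-condition realizations meeting at most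
`C·C₀·|S|·D^{r−d}` elements of `S`. -/
theorem eps_sampling_partitioning (b d : ℕ) (hb : 1 ≤ b) (hd : 1 ≤ d) :
    ∃ C : ℝ, 0 < C ∧
      ∀ (C₀ : ℕ), 0 < C₀ →
      ∀ (r : ℕ) (S : Finset (Set (Fin d → ℝ))),
        (∀ T ∈ S, IsSemiAlgebraicOfComplexity d b T ∧ dimH T ≤ (r : ENNReal)) →
      ∀ (k : ℕ), 1 ≤ k →
      ∀ D : ℝ, D = 2 ^ ((k : ℝ) / (d : ℝ)) → (2 : ℝ) ^ b ≤ D →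
      -- `Dj j` is the least positive integer with `binom(Dj j + d, d) > 2^{j-1}`
      ∀ Dj : Fin k → ℕ,
        (∀ j : Fin k,
          IsLeast {m : ℕ | 0 < m ∧ 2 ^ (j : ℕ) < Nat.choose (m + d) d} (Dj j)) →
      -- the `2^{j-1}`-dimensional subspaces `𝕍_j` of polynomials of degree at most `Dj j`
      ∀ V : Fin k → Submodule ℝ (MvPolynomial (Fin d) ℝ),
        (∀ j, Module.finrank ℝ (V j) = 2 ^ (j : ℕ)) →
        (∀ j, ∀ p ∈ V j, p.totalDegree ≤ Dj j) →
      ∀ N : ℕ, C * D ^ C ≤ (N : ℝ) →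
        (1 / 2 : ℝ) * ((S.powersetCard N).card : ℝ) ≤
          (Set.ncard {B : Finset (Set (Fin d → ℝ)) | B ∈ S.powersetCard N ∧
            ∀ y : (j : Fin k) → V j,
              IsPartitioningTuple y B (D ^ ((d : ℝ) - (r : ℝ)) / (C₀ : ℝ)) →
              ∀ ν : Fin k → Bool,
                (Set.ncard {T | T ∈ S ∧ (T ∩ Realization y ν).Nonempty} : ℝ)
                  ≤ C * (C₀ : ℝ) * (S.card : ℝ) * D ^ ((r : ℝ) - (d : ℝ))} : ℝ) := by
  obtain ⟨C, hC, sampling⟩ := eps_sampling_partitioning_general d hd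
  refine ⟨C, hC, fun C₀ hC₀ r S hS k _ D hD hDb Dj hDj V hV hVd => ?_⟩
  exact sampling b hb C₀ (Nat.one_le_cast.2 hC₀) r r.cast_nonneg S (fun T hT => (hS T hT).1) k D
    hD hDb V (fun j => (hV j).le) fun j p hp =>
      (hVd j p hp).trans (EpsSampling.le_two_pow_of_isLeast_choose hd (hDj j))
end
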